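/- Let $q > 1$ be an integer and $P$ an infinite set of primes such that for some squarefree $m > 1$ coprime to $q$, with $q$ not a perfect $p$-th power for any prime $p \mid m$, every prime in $P$ admits a solution to $x^m \equiv q \pmod p$. Then the upper natural density of $P$ in the primes is at most $\varphi(m)/m < 1$. -/

import Mathlib

/-!
Adjoin to `ℚ` a primitive `d`-th root of unity and an `e`-th root of `q`, for `e ∣ d` squarefree.
Since `ℚ(ζ_d)` is unramified at the primes dividing `q`, no prime `l ∣ e` makes `q` an `l`-th power
in it, so the resulting Galois field has the maximal degree `φ(d) e`. Up to finitely many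
exceptions, the primes splitting completely in it are the `p ≡ 1 mod d` modulo which `q` is an
`e`-th power, and by the prime ideal theorem they have density `1 / (φ(d) e)`. For the prime
factors `l` of `m`, inclusion–exclusion over these densities makes the events that `l ∤ p - 1` or
`q` is an `l`-th power modulo `p` independent, each of density `1 - 1 / l`; a prime modulo which
`q` is an `m`-th power satisfies all of them, so `P` has upper density at most
`∏ (1 - 1 / l) = φ(m) / m`.

For the prime ideal theorem, counting lattice points by means of a Lipschitz partition of unity
continues `(s - 1) ζ_K(s)` past the line `Re s = 1`. On that line `ζ_K` has no zero, by
`3 + 4 cos θ + cos 2θ ≥ 0`, and the Wiener–Ikehara theorem, proved with the Fejér kernel, yields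
the asymptotics of the sums of the von Mangoldt function of `K`.
-/

section Kernel

open MeasureTheory Filter Topology Set Complex

/-- The tent function `max 0 (1 - |t|)`: its Fourier transform is the Fejér kernel, and its integer
translates form a Lipschitz partition of unity. -/
noncomputable def tent (t : ℝ) : ℝ := max 0 (1 - |t|)

lemma tent_nonneg (t : ℝ) : 0 ≤ tent t := le_max_left _ _

lemma tent_le_one (t : ℝ) : tent t ≤ 1 := max_le zero_le_one (by linarith [abs_nonneg t])

lemma tent_eq_zero {t : ℝ} (ht : 1 ≤ |t|) : tent t = 0 := max_eq_left (by linarith)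

lemma tent_eq {t : ℝ} (ht : |t| ≤ 1) : tent t = 1 - |t| := max_eq_right (by linarith)

lemma continuous_tent : Continuous tent := by unfold tent; fun_prop

lemma hasCompactSupport_tent : HasCompactSupport tent :=
  HasCompactSupport.intro (isCompact_Icc (a := (-1 : ℝ)) (b := 1)) fun _ ht =>
    tent_eq_zero (le_of_not_ge fun h => ht (abs_le.mp h))

lemma integrable_tent : Integrable tent :=
  continuous_tent.integrable_of_hasCompactSupport hasCompactSupport_tent

/-- The Fejér kernel `(sin (v / 2) / (v / 2)) ^ 2`. -/
noncomputable def fejerKernel (v : ℝ) : ℝ := Real.sinc (v / 2) ^ 2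

lemma fejerKernel_nonneg (v : ℝ) : 0 ≤ fejerKernel v := sq_nonneg _

lemma continuous_fejerKernel : Continuous fejerKernel := by
  have := Real.continuous_sinc
  unfold fejerKernel
  fun_prop

lemma fejerKernel_le (v : ℝ) : fejerKernel v ≤ 8 * (1 + v ^ 2)⁻¹ := by
  rw [fejerKernel, ← div_eq_mul_inv, le_div_iff₀ (by positivity)]
  have h_sinc : Real.sinc (v / 2) ^ 2 ≤ 1 :=
    (sq_le_one_iff_abs_le_one _).mpr (Real.abs_sinc_le_one _)
  have h_sin : Real.sinc (v / 2) * (v / 2) = Real.sin (v / 2) := by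
    rcases eq_or_ne v 0 with rfl | hv
    · simp
    · rw [Real.sinc_of_ne_zero (by positivity), div_mul_cancel₀ _ (by positivity)]
  have h_sq : Real.sinc (v / 2) ^ 2 * v ^ 2 = 4 * Real.sin (v / 2) ^ 2 := by rw [← h_sin]; ring
  nlinarith [Real.sin_sq_le_one (v / 2)]

lemma integrable_fejerKernel : Integrable fejerKernel := by
  refine (integrable_inv_one_add_sq.const_mul 8).mono'
    continuous_fejerKernel.aestronglyMeasurable (.of_forall fun v => ?_)
  rw [Real.norm_of_nonneg (fejerKernel_nonneg v)]
  exact fejerKernel_le v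

lemma integral_fejerKernel_pos : 0 < ∫ v, fejerKernel v :=
  integral_pos_of_integrable_nonneg_nonzero (x := 0) continuous_fejerKernel integrable_fejerKernel
    fejerKernel_nonneg (by simp [fejerKernel])

lemma integral_one_sub_mul_cos {v : ℝ} (hv : v ≠ 0) :
    ∫ τ in (0 : ℝ)..1, (1 - τ) * Real.cos (τ * v) = (1 - Real.cos v) / v ^ 2 := by
  have h_deriv (τ : ℝ) : HasDerivAt
      (fun τ => (1 - τ) * Real.sin (τ * v) / v - Real.cos (τ * v) / v ^ 2)
      ((1 - τ) * Real.cos (τ * v)) τ := by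
    have h_mul : HasDerivAt (fun τ : ℝ => τ * v) v τ := hasDerivAt_mul_const v
    refine (((((hasDerivAt_id τ).const_sub 1).mul h_mul.sin).div_const v).sub
      (h_mul.cos.div_const (v ^ 2))).congr_deriv ?_
    simp only [id]
    field_simp
    ring
  rw [intervalIntegral.integral_eq_sub_of_hasDerivAt (fun τ _ => h_deriv τ)
    (Continuous.intervalIntegrable (by fun_prop) _ _)]
  simp
  ring

lemma integral_tent_mul_cos (v : ℝ) : ∫ τ, tent τ * Real.cos (τ * v) = fejerKernel v := by
  have h_even (τ : ℝ) : tent τ * Real.cos (τ * v) = tent |τ| * Real.cos (|τ| * v) := by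
    rw [tent, tent, abs_abs]
    rcases abs_choice τ with h | h <;> simp [h]
  have h_vanish : ∀ τ ∈ Ioi (0 : ℝ) \ Ioc 0 1, tent τ * Real.cos (τ * v) = 0 := fun τ hτ => by
    have hτ0 : 0 < τ := hτ.1
    rw [tent_eq_zero, zero_mul]
    by_contra! h
    exact hτ.2 ⟨hτ0, (le_abs_self τ).trans h.le⟩
  have h_half : ∫ τ, tent τ * Real.cos (τ * v) =
      2 * ∫ τ in (0 : ℝ)..1, (1 - τ) * Real.cos (τ * v) := by
    rw [integral_congr_ae (.of_forall h_even),
      integral_comp_abs (f := fun τ => tent τ * Real.cos (τ * v)),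
      setIntegral_eq_of_subset_of_forall_sdiff_eq_zero measurableSet_Ioi Ioc_subset_Ioi_self
        h_vanish,
      intervalIntegral.integral_of_le zero_le_one]
    congr 1
    refine setIntegral_congr_fun measurableSet_Ioc fun τ hτ => ?_
    simp only [tent_eq (abs_le.mpr ⟨by linarith [hτ.1], hτ.2⟩), abs_of_pos hτ.1]
  rcases eq_or_ne v 0 with rfl | hv
  · rw [h_half]
    simp only [mul_zero, Real.cos_zero, mul_one]
    rw [intervalIntegral.integral_sub (by simp) (by simp)]
    simp [fejerKernel]
    norm_num
  · rw [h_half, integral_one_sub_mul_cos hv, fejerKernel, Real.sinc_of_ne_zero (by positivity),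
      div_pow, Real.sin_sq_eq_half_sub, mul_div_cancel₀ v two_ne_zero]
    field_simp

lemma integral_tent_mul_cexp (v : ℝ) :
    ∫ τ : ℝ, (tent τ : ℂ) * cexp (I * τ * v) = fejerKernel v := by
  have h_int (w : ℝ) : Integrable fun τ : ℝ => (tent τ : ℂ) * cexp (I * τ * w) := by
    refine integrable_tent.ofReal.mul_bdd (c := 1) (by fun_prop) (.of_forall fun τ => ?_)
    simp [Complex.norm_exp]
  have h_neg : ∫ τ : ℝ, (tent τ : ℂ) * cexp (I * τ * (-v : ℝ)) =
      ∫ τ : ℝ, (tent τ : ℂ) * cexp (I * τ * v) := by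
    rw [← integral_neg_eq_self fun τ : ℝ => (tent τ : ℂ) * cexp (I * τ * v)]
    refine integral_congr_ae (.of_forall fun τ => ?_)
    simp [tent]
  have h_sum := integral_add (h_int v) (h_int (-v))
  have h_cos (τ : ℝ) : (tent τ : ℂ) * cexp (I * τ * v) + (tent τ : ℂ) * cexp (I * τ * (-v : ℝ)) =
      2 * (tent τ * Real.cos (τ * v) : ℝ) := by
    push_cast
    rw [Complex.cos]
    ring_nf
  simp_rw [h_cos] at h_sum
  rw [h_neg, integral_const_mul, integral_complex_ofReal, integral_tent_mul_cos] at h_sum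
  linear_combination -h_sum / 2

end Kernel

section Convolution

open MeasureTheory Filter Topology Set Complex

variable {b : ℝ → ℝ} {C : ℝ} {G : ℂ → ℂ}

lemma integral_mul_exp_mul_fejerKernel (hb_meas : Measurable b) (hb : ∀ u, |b u| ≤ C)
    (hL : ∀ s : ℂ, 0 < s.re → ∫ u in Ioi (0 : ℝ), (b u : ℂ) * cexp (-s * u) = G s)
    (l y : ℝ) {ε : ℝ} (hε : 0 < ε) :
    ∫ u in Ioi (0 : ℝ), (b u : ℂ) * cexp (-ε * u) * fejerKernel (l * (y - u)) =
      ∫ τ : ℝ, (tent τ : ℂ) * (cexp (I * τ * (l * y)) * G (ε + I * (τ * l))) := by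
  have : 0 ≤ C := (abs_nonneg _).trans (hb 0)
  simp_rw [← integral_tent_mul_cexp, ← integral_const_mul]
  rw [integral_integral_swap]
  · refine integral_congr_ae (.of_forall fun τ => ?_)
    dsimp only
    rw [← hL _ (by simpa using hε), ← integral_const_mul, ← integral_const_mul]
    refine integral_congr_ae (.of_forall fun u => ?_)
    have h_exp : cexp (-ε * u) * cexp (I * τ * (l * (y - u) : ℝ)) =
        cexp (I * τ * (l * y)) * cexp (-(ε + I * (τ * l)) * u) := by
      rw [← Complex.exp_add, ← Complex.exp_add]
      push_cast
      ring_nf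
    linear_combination (b u : ℂ) * tent τ * h_exp
  · have h_major : Integrable (fun z : ℝ × ℝ => C * Real.exp (-ε * z.1) * tent z.2)
        ((volume.restrict (Ioi 0)).prod volume) :=
      ((integrableOn_exp_mul_Ioi (by linarith) 0).const_mul C).mul_prod integrable_tent
    have := continuous_tent.measurable
    refine h_major.mono' (by unfold Function.uncurry; fun_prop) (.of_forall fun z => ?_)
    simp only [Function.uncurry, norm_mul, Complex.norm_real, Real.norm_eq_abs,
      abs_of_nonneg (tent_nonneg _)]
    have h_osc : ‖cexp (I * z.2 * (l * (y - z.1) : ℝ))‖ = 1 := by simp [Complex.norm_exp]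
    have h_decay : ‖cexp (-ε * z.1)‖ = Real.exp (-ε * z.1) := by simp [Complex.norm_exp]
    rw [h_osc, h_decay, mul_one]
    gcongr
    · exact tent_nonneg _
    · exact hb _

lemma integrable_fejerKernel_comp {l : ℝ} (hl : l ≠ 0) (y : ℝ) :
    Integrable fun u => fejerKernel (l * (y - u)) :=
  (integrable_fejerKernel.comp_mul_left' hl).comp_sub_left y

lemma tendsto_integral_mul_exp_mul_fejerKernel (hb_meas : Measurable b) (hb : ∀ u, |b u| ≤ C)
    {l : ℝ} (hl : l ≠ 0) (y : ℝ) :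
    Tendsto (fun ε : ℝ => ∫ u in Ioi (0 : ℝ), (b u : ℂ) * cexp (-ε * u) * fejerKernel (l * (y - u)))
      (𝓝[>] 0) (𝓝 (∫ u in Ioi (0 : ℝ), (b u : ℂ) * fejerKernel (l * (y - u)))) := by
  have := continuous_fejerKernel.measurable
  refine tendsto_integral_filter_of_dominated_convergence (fun u => C * fejerKernel (l * (y - u)))
    (.of_forall fun ε => by fun_prop) ?_
    ((integrable_fejerKernel_comp hl y).const_mul C).integrableOn (.of_forall fun u => ?_)
  · filter_upwards [self_mem_nhdsWithin] with ε (hε : 0 < ε)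
    filter_upwards [ae_restrict_mem measurableSet_Ioi] with u (hu : 0 < u)
    have h_decay : ‖cexp (-ε * u)‖ ≤ 1 := by
      simpa [Complex.norm_exp] using (mul_pos hε hu).le
    simp only [norm_mul, Complex.norm_real, Real.norm_eq_abs, abs_of_nonneg (fejerKernel_nonneg _)]
    gcongr
    · exact fejerKernel_nonneg _
    · calc |b u| * ‖cexp (-ε * u)‖ ≤ |b u| * 1 := by gcongr
        _ ≤ C := by simpa using hb u
  · have h_cont : Continuous fun ε : ℝ =>
        (b u : ℂ) * cexp (-ε * u) * fejerKernel (l * (y - u)) := by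
      fun_prop
    simpa using (h_cont.tendsto 0).mono_left nhdsWithin_le_nhds

lemma tendsto_integral_tent_mul_boundary (hG : ContinuousOn G {s | 0 ≤ s.re}) (l y : ℝ) :
    Tendsto (fun ε : ℝ => ∫ τ : ℝ, (tent τ : ℂ) * (cexp (I * τ * (l * y)) * G (ε + I * (τ * l))))
      (𝓝[>] 0) (𝓝 (∫ τ : ℝ, (tent τ : ℂ) * (cexp (I * τ * (l * y)) * G (I * (τ * l))))) := by
  have h_cont : ContinuousOn (fun p : ℝ × ℝ => G (p.1 + I * (p.2 * l))) (Ici 0 ×ˢ univ) :=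
    hG.comp (by fun_prop) fun p hp => by simpa using hp.1
  obtain ⟨M, hM⟩ := ((isCompact_Icc (a := (0 : ℝ)) (b := 1)).prod
    (isCompact_Icc (a := (-1 : ℝ)) (b := 1))).exists_bound_of_continuousOn
    (h_cont.mono fun p hp => ⟨hp.1.1, mem_univ _⟩)
  refine tendsto_integral_filter_of_dominated_convergence (fun τ => M * tent τ) ?_ ?_
    (integrable_tent.const_mul M) (.of_forall fun τ => ?_)
  · filter_upwards [self_mem_nhdsWithin] with ε (hε : 0 < ε)
    have h_slice : Continuous fun τ : ℝ => G (ε + I * (τ * l)) :=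
      h_cont.comp_continuous (f := fun τ : ℝ => (ε, τ)) (by fun_prop) fun τ => ⟨hε.le, mem_univ _⟩
    have h_tent : Continuous fun τ : ℝ => (tent τ : ℂ) := continuous_ofReal.comp continuous_tent
    exact (h_tent.mul (.mul (by fun_prop) h_slice)).aestronglyMeasurable
  · filter_upwards [Ioc_mem_nhdsGT one_pos] with ε hε
    refine .of_forall fun τ => ?_
    have h_osc : ‖cexp (I * τ * (l * y))‖ = 1 := by simp [Complex.norm_exp]
    rw [norm_mul, norm_mul, h_osc, one_mul, Complex.norm_real,
      Real.norm_of_nonneg (tent_nonneg τ), mul_comm]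
    rcases le_or_gt 1 |τ| with hτ | hτ
    · simp [tent_eq_zero hτ]
    · exact mul_le_mul_of_nonneg_right (hM (ε, τ) ⟨⟨hε.1.le, hε.2⟩, abs_le.mp hτ.le⟩)
        (tent_nonneg τ)
  · have h_slice : ContinuousOn (fun ε : ℝ => G (ε + I * (τ * l))) (Ici 0) :=
      h_cont.comp (f := fun ε : ℝ => (ε, τ)) (by fun_prop) fun ε hε => ⟨hε, mem_univ _⟩
    have h_lim := (h_slice 0 self_mem_Ici).mono_left (nhdsWithin_mono 0 Ioi_subset_Ici_self)
    simpa using (h_lim.const_mul (cexp (I * τ * (l * y)))).const_mul (tent τ : ℂ)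

lemma integral_mul_fejerKernel (hb_meas : Measurable b) (hb : ∀ u, |b u| ≤ C)
    (hG : ContinuousOn G {s | 0 ≤ s.re})
    (hL : ∀ s : ℂ, 0 < s.re → ∫ u in Ioi (0 : ℝ), (b u : ℂ) * cexp (-s * u) = G s)
    {l : ℝ} (hl : l ≠ 0) (y : ℝ) :
    ∫ u in Ioi (0 : ℝ), (b u : ℂ) * fejerKernel (l * (y - u)) =
      ∫ τ : ℝ, (tent τ : ℂ) * (cexp (I * τ * (l * y)) * G (I * (τ * l))) := by
  refine tendsto_nhds_unique (tendsto_integral_mul_exp_mul_fejerKernel hb_meas hb hl y)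
    ((tendsto_integral_tent_mul_boundary hG l y).congr' ?_)
  filter_upwards [self_mem_nhdsWithin] with ε hε
  exact (integral_mul_exp_mul_fejerKernel hb_meas hb hL l y hε).symm

/- By `integral_mul_fejerKernel` the convolution is a Fourier integral: apply the Riemann–Lebesgue
lemma. -/
lemma tendsto_integral_mul_fejerKernel (hb_meas : Measurable b) (hb : ∀ u, |b u| ≤ C)
    (hG : ContinuousOn G {s | 0 ≤ s.re})
    (hL : ∀ s : ℂ, 0 < s.re → ∫ u in Ioi (0 : ℝ), (b u : ℂ) * cexp (-s * u) = G s)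
    {l : ℝ} (hl : 0 < l) :
    Tendsto (fun y => ∫ u in Ioi (0 : ℝ), b u * fejerKernel (l * (y - u))) atTop (𝓝 0) := by
  have h_freq : Tendsto (fun y : ℝ => -(l * y / (2 * Real.pi))) atTop (cocompact ℝ) :=
    (tendsto_neg_atTop_atBot.comp ((tendsto_id.const_mul_atTop hl).atTop_div_const
      (by positivity))).mono_right atBot_le_cocompact
  have h_RL := (Real.tendsto_integral_exp_smul_cocompact
    fun τ : ℝ => (tent τ : ℂ) * G (I * (τ * l))).comp h_freq
  rw [← tendsto_ofReal_iff, ofReal_zero]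
  refine h_RL.congr fun y => ?_
  have h_cast : ((∫ u in Ioi (0 : ℝ), b u * fejerKernel (l * (y - u)) : ℝ) : ℂ) =
      ∫ u in Ioi (0 : ℝ), (b u : ℂ) * fejerKernel (l * (y - u)) := by
    rw [← integral_complex_ofReal]
    push_cast
    rfl
  rw [h_cast, integral_mul_fejerKernel hb_meas hb hG hL hl.ne']
  refine integral_congr_ae (.of_forall fun τ => ?_)
  have h_char : cexp (↑(2 * Real.pi * -(τ * -(l * y / (2 * Real.pi)))) * I) =
      cexp (I * τ * (l * y)) := by
    have : (Real.pi : ℂ) ≠ 0 := by exact_mod_cast Real.pi_ne_zero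
    push_cast
    field_simp
  dsimp only
  rw [Circle.smul_def, Real.fourierChar_apply, smul_eq_mul, h_char]
  ring

end Convolution

section Tauberian

open MeasureTheory Filter Topology Set

variable {B K : ℝ → ℝ} {C : ℝ}

lemma le_mul_exp_sub_of_monotone (hB : Monotone fun u => B u * Real.exp u) {u v : ℝ} (huv : u ≤ v) :
    B u ≤ B v * Real.exp (v - u) := by
  rw [Real.exp_sub, ← mul_div_assoc, le_div_iff₀ (Real.exp_pos u)]
  exact hB huv

lemma integrable_mul_kernel (hB : Monotone fun u => B u * Real.exp u) (hB_nonneg : ∀ u, 0 ≤ B u)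
    (hB_le : ∀ u, B u ≤ C) (hK : Integrable K) (y θ : ℝ) :
    Integrable fun w => B (y - θ * w) * K w := by
  have h_meas : Measurable B := by
    have h_eq : B = fun u => B u * Real.exp u * Real.exp (-u) := by
      ext u; rw [mul_assoc, ← Real.exp_add, add_neg_cancel, Real.exp_zero, mul_one]
    rw [h_eq]
    exact hB.measurable.mul (by fun_prop)
  refine hK.bdd_mul (c := C) (h_meas.comp (by fun_prop)).aestronglyMeasurable
    (.of_forall fun w => ?_)
  rw [Real.norm_of_nonneg (hB_nonneg _)]
  exact hB_le _

lemma mul_exp_mul_setIntegral_le (hB : Monotone fun u => B u * Real.exp u)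
    (hB_nonneg : ∀ u, 0 ≤ B u) (hB_le : ∀ u, B u ≤ C) (hK : Integrable K)
    (hK_nonneg : ∀ w, 0 ≤ K w) {θ r : ℝ} (hθ : 0 ≤ θ) (y : ℝ) :
    B y * Real.exp (-(2 * (θ * r))) * ∫ w in Icc (-r) r, K w ≤
      ∫ w, B (y + θ * r - θ * w) * K w := by
  have h_int := integrable_mul_kernel hB hB_nonneg hB_le hK (y + θ * r) θ
  rw [← integral_const_mul]
  refine (setIntegral_mono_on (hK.const_mul _).integrableOn h_int.integrableOn measurableSet_Icc
    fun w hw => mul_le_mul_of_nonneg_right ?_ (hK_nonneg w)).trans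
    (setIntegral_le_integral h_int (.of_forall fun w => mul_nonneg (hB_nonneg _) (hK_nonneg w)))
  have h_near : y ≤ y + θ * r - θ * w := by nlinarith [hw.2]
  rw [Real.exp_neg, ← div_eq_mul_inv, div_le_iff₀ (Real.exp_pos _)]
  refine (le_mul_exp_sub_of_monotone hB h_near).trans ?_
  gcongr
  · exact hB_nonneg _
  · nlinarith [hw.1]

lemma integral_mul_kernel_le (hB : Monotone fun u => B u * Real.exp u)
    (hB_nonneg : ∀ u, 0 ≤ B u) (hB_le : ∀ u, B u ≤ C) (hK : Integrable K)
    (hK_nonneg : ∀ w, 0 ≤ K w) {θ r : ℝ} (hθ : 0 ≤ θ) (y : ℝ) :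
    ∫ w, B (y - θ * r - θ * w) * K w ≤
      B y * Real.exp (2 * (θ * r)) * (∫ w, K w) + C * ((∫ w, K w) - ∫ w in Icc (-r) r, K w) := by
  have h_tail : (∫ w, K w) - ∫ w in Icc (-r) r, K w = ∫ w in (Icc (-r) r)ᶜ, K w := by
    rw [← integral_add_compl measurableSet_Icc hK, add_sub_cancel_left]
  have h_int := integrable_mul_kernel hB hB_nonneg hB_le hK (y - θ * r) θ
  have h_near : ∫ w in Icc (-r) r, B (y - θ * r - θ * w) * K w ≤
      B y * Real.exp (2 * (θ * r)) * ∫ w in Icc (-r) r, K w := by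
    rw [← integral_const_mul]
    refine setIntegral_mono_on h_int.integrableOn (hK.const_mul _).integrableOn measurableSet_Icc
      fun w hw => mul_le_mul_of_nonneg_right ?_ (hK_nonneg w)
    have h_le : y - θ * r - θ * w ≤ y := by nlinarith [hw.1]
    refine (le_mul_exp_sub_of_monotone hB h_le).trans ?_
    gcongr
    · exact hB_nonneg _
    · nlinarith [hw.2]
  have h_far : ∫ w in (Icc (-r) r)ᶜ, B (y - θ * r - θ * w) * K w ≤
      C * ∫ w in (Icc (-r) r)ᶜ, K w := by
    rw [← integral_const_mul]
    exact setIntegral_mono h_int.integrableOn (hK.const_mul _).integrableOn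
      fun w => mul_le_mul_of_nonneg_right (hB_le _) (hK_nonneg w)
  have h_part : ∫ w in Icc (-r) r, K w ≤ ∫ w, K w :=
    setIntegral_le_integral hK (.of_forall hK_nonneg)
  rw [← integral_add_compl measurableSet_Icc h_int, h_tail]
  gcongr
  refine h_near.trans ?_
  gcongr
  exact mul_nonneg (hB_nonneg y) (Real.exp_nonneg _)

lemma eventually_mul_exp_mul_setIntegral_lt (hB : Monotone fun u => B u * Real.exp u)
    (hB_nonneg : ∀ u, 0 ≤ B u) (hB_le : ∀ u, B u ≤ C) (hK : Integrable K)
    (hK_nonneg : ∀ w, 0 ≤ K w) {θ a b : ℝ} (hθ : 0 ≤ θ)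
    (h_lim : Tendsto (fun y => ∫ w, B (y - θ * w) * K w) atTop (𝓝 a)) (hab : a < b) (r : ℝ) :
    ∀ᶠ y in atTop, B y * Real.exp (-(2 * (θ * r))) * (∫ w in Icc (-r) r, K w) < b :=
  ((h_lim.comp (tendsto_atTop_add_const_right atTop (θ * r) tendsto_id)).eventually_lt_const
    hab).mono fun y hy =>
      (mul_exp_mul_setIntegral_le hB hB_nonneg hB_le hK hK_nonneg hθ y).trans_lt hy

lemma eventually_lt_mul_exp_mul_integral_add (hB : Monotone fun u => B u * Real.exp u)
    (hB_nonneg : ∀ u, 0 ≤ B u) (hB_le : ∀ u, B u ≤ C) (hK : Integrable K)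
    (hK_nonneg : ∀ w, 0 ≤ K w) {θ a b : ℝ} (hθ : 0 ≤ θ)
    (h_lim : Tendsto (fun y => ∫ w, B (y - θ * w) * K w) atTop (𝓝 a)) (hba : b < a) (r : ℝ) :
    ∀ᶠ y in atTop, b < B y * Real.exp (2 * (θ * r)) * (∫ w, K w) +
      C * ((∫ w, K w) - ∫ w in Icc (-r) r, K w) :=
  ((h_lim.comp (tendsto_atTop_add_const_right atTop (-(θ * r)) tendsto_id)).eventually_const_lt
    hba).mono fun y hy =>
      hy.trans_le (integral_mul_kernel_le hB hB_nonneg hB_le hK hK_nonneg hθ y)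

-- Compare `B` with its averages at scale `θ = δ ^ 2` over the window `|w| ≤ δ⁻¹`, then let `δ → 0`.
theorem tendsto_of_tendsto_integral_mul_kernel (hB : Monotone fun u => B u * Real.exp u)
    (hB_nonneg : ∀ u, 0 ≤ B u) (hB_le : ∀ u, B u ≤ C) (hK : Integrable K)
    (hK_nonneg : ∀ w, 0 ≤ K w) (hK_pos : 0 < ∫ w, K w) {A : ℝ}
    (h_lim : ∀ θ : ℝ, 0 < θ →
      Tendsto (fun y => ∫ w, B (y - θ * w) * K w) atTop (𝓝 (A * ∫ w, K w))) :
    Tendsto B atTop (𝓝 A) := by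
  set I := ∫ w, K w
  set J : ℝ → ℝ := fun r => ∫ w in Icc (-r) r, K w
  have h_window {δ : ℝ} (hδ : 0 < δ) : δ ^ 2 * δ⁻¹ = δ := by field_simp
  have h_upper {δ : ℝ} (hδ : 0 < δ) :
      ∀ᶠ y in atTop, B y * Real.exp (-2 * δ) * J δ⁻¹ < A * I + δ := by
    simpa only [h_window hδ, ← neg_mul] using eventually_mul_exp_mul_setIntegral_lt hB hB_nonneg
      hB_le hK hK_nonneg (sq_nonneg δ) (h_lim _ (by positivity)) (lt_add_of_pos_right _ hδ) δ⁻¹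
  have h_lower {δ : ℝ} (hδ : 0 < δ) :
      ∀ᶠ y in atTop, A * I - δ < B y * Real.exp (2 * δ) * I + C * (I - J δ⁻¹) := by
    simpa only [h_window hδ] using eventually_lt_mul_exp_mul_integral_add hB hB_nonneg
      hB_le hK hK_nonneg (sq_nonneg δ) (h_lim _ (by positivity)) (sub_lt_self _ hδ) δ⁻¹
  have hJ : Tendsto (fun δ : ℝ => J δ⁻¹) (𝓝[>] 0) (𝓝 I) :=
    ((aecover_Icc tendsto_neg_atTop_atBot tendsto_id).integral_tendsto_of_countably_generated
      hK).comp tendsto_inv_nhdsGT_zero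
  have h_id : Tendsto (fun δ : ℝ => δ) (𝓝[>] 0) (𝓝 0) := tendsto_id.mono_left nhdsWithin_le_nhds
  have h_exp (c : ℝ) : Tendsto (fun δ : ℝ => Real.exp (c * δ)) (𝓝[>] 0) (𝓝 1) := by
    simpa [Function.comp_def] using (Real.continuous_exp.tendsto _).comp (h_id.const_mul c)
  refine tendsto_order.mpr ⟨fun a ha => ?_, fun a ha => ?_⟩
  · have h_bound : Tendsto (fun δ : ℝ => A * I - δ - C * (I - J δ⁻¹) - a * (Real.exp (2 * δ) * I))
        (𝓝[>] 0) (𝓝 (A * I - 0 - C * (I - I) - a * (1 * I))) :=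
      ((h_id.const_sub _).sub ((hJ.const_sub _).const_mul C)).sub
        (((h_exp 2).mul_const I).const_mul a)
    obtain ⟨δ, h_pos, hδ : 0 < δ⟩ := ((h_bound.eventually_const_lt (u := 0) (by nlinarith)).and
      self_mem_nhdsWithin).exists
    filter_upwards [h_lower hδ] with y hy
    refine lt_of_mul_lt_mul_right (a := Real.exp (2 * δ) * I) ?_ (by positivity)
    linarith
  · have h_bound : Tendsto (fun δ : ℝ => a * (Real.exp (-2 * δ) * J δ⁻¹) - (A * I + δ))
        (𝓝[>] 0) (𝓝 (a * (1 * I) - (A * I + 0))) :=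
      (((h_exp (-2)).mul hJ).const_mul a).sub (h_id.const_add _)
    obtain ⟨δ, ⟨h_pos, hJ_pos⟩, hδ : 0 < δ⟩ := (((h_bound.eventually_const_lt (u := 0)
      (by nlinarith)).and (hJ.eventually_const_lt hK_pos)).and self_mem_nhdsWithin).exists
    filter_upwards [h_upper hδ] with y hy
    refine lt_of_mul_lt_mul_right (a := Real.exp (-2 * δ) * J δ⁻¹) ?_ (by positivity)
    linarith

end Tauberian

section WienerIkehara

open MeasureTheory Filter Topology Set Complex

/-- The normalised summatory function `x⁻¹ ∑_{k ≤ x} a k` in the logarithmic variable `u = log x`,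
for which Dirichlet series become Laplace transforms. -/
noncomputable def expMean (a : ℕ → ℝ) (u : ℝ) : ℝ :=
  (∑ k ∈ Finset.Icc 1 ⌊Real.exp u⌋₊, a k) * Real.exp (-u)

variable {a : ℕ → ℝ} {C : ℝ}

lemma expMean_mul_exp (a : ℕ → ℝ) (u : ℝ) :
    expMean a u * Real.exp u = ∑ k ∈ Finset.Icc 1 ⌊Real.exp u⌋₊, a k := by
  rw [expMean, mul_assoc, ← Real.exp_add, neg_add_cancel, Real.exp_zero, mul_one]

lemma expMean_log {N : ℕ} (hN : N ≠ 0) :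
    expMean a (Real.log N) = (∑ k ∈ Finset.Icc 1 N, a k) / N := by
  rw [expMean, Real.exp_neg, Real.exp_log (by positivity), Nat.floor_natCast, div_eq_mul_inv]

lemma expMean_nonneg (ha : ∀ n, 0 ≤ a n) (u : ℝ) : 0 ≤ expMean a u :=
  mul_nonneg (Finset.sum_nonneg fun k _ => ha k) (Real.exp_nonneg _)

lemma expMean_eq_zero {u : ℝ} (hu : u < 0) : expMean a u = 0 := by
  have h_floor : ⌊Real.exp u⌋₊ = 0 := Nat.floor_eq_zero.mpr (by simpa using hu)
  simp [expMean, h_floor]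

lemma monotone_expMean_mul_exp (ha : ∀ n, 0 ≤ a n) :
    Monotone fun u => expMean a u * Real.exp u := fun u v huv => by
  simp only [expMean_mul_exp]
  exact Finset.sum_le_sum_of_subset_of_nonneg
    (Finset.Icc_subset_Icc_right (Nat.floor_mono (Real.exp_le_exp.mpr huv))) fun k _ _ => ha k

lemma measurable_expMean (a : ℕ → ℝ) : Measurable (expMean a) :=
  ((measurable_from_nat (f := fun n : ℕ => ∑ k ∈ Finset.Icc 1 n, a k)).comp
    (Nat.measurable_floor.comp Real.measurable_exp)).mul (by fun_prop)

lemma expMean_le (ha : ∀ n, 0 ≤ a n) (hC : ∀ N : ℕ, ∑ k ∈ Finset.Icc 1 N, a k ≤ C * N) (u : ℝ) :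
    expMean a u ≤ C := by
  have hC_nonneg : 0 ≤ C := (ha 1).trans (by simpa using hC 1)
  refine le_of_mul_le_mul_right ?_ (Real.exp_pos u)
  rw [expMean_mul_exp]
  exact (hC _).trans (mul_le_mul_of_nonneg_left (Nat.floor_le (Real.exp_nonneg u)) hC_nonneg)

lemma integral_expMean_mul_exp (ha : ∀ n, 0 ≤ a n)
    (hC : ∀ N : ℕ, ∑ k ∈ Finset.Icc 1 N, a k ≤ C * N) {s : ℂ} (hs : 0 < s.re) :
    ∫ u in Ioi (0 : ℝ), (expMean a u : ℂ) * cexp (-s * u) =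
      LSeries (fun n => (a n : ℂ)) (s + 1) / (s + 1) := by
  have h_ne : s + 1 ≠ 0 := fun h => by
    have := congrArg re h
    simp only [add_re, one_re, zero_re] at this
    linarith
  have h_bigO : (fun n : ℕ => ∑ k ∈ Finset.Icc 1 n, a k) =O[atTop]
      fun n : ℕ => (n : ℝ) ^ (1 : ℝ) := by
    refine .of_bound C (.of_forall fun n => ?_)
    rw [Real.norm_of_nonneg (Finset.sum_nonneg fun k _ => ha k), Real.rpow_one,
      Real.norm_of_nonneg n.cast_nonneg]
    exact hC n
  rw [LSeries_eq_mul_integral_of_nonneg a zero_le_one (by simpa using hs) h_bigO ha,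
    mul_div_cancel_left₀ _ h_ne, ← Real.exp_zero, ← integral_comp_exp_Ioi]
  refine setIntegral_congr_fun measurableSet_Ioi fun u _ => ?_
  have h_cexp : cexp (-s * u) = cexp u * (cexp u * cexp (u * -(s + 1 + 1))) := by
    rw [← Complex.exp_add, ← Complex.exp_add]
    ring_nf
  rw [h_cexp, real_smul, cpow_def_of_ne_zero (ofReal_ne_zero.mpr (Real.exp_ne_zero u)),
    ← ofReal_log (Real.exp_nonneg u), Real.log_exp]
  have h_sum : (∑ k ∈ Finset.Icc 1 ⌊Real.exp u⌋₊, (a k : ℂ)) = expMean a u * cexp u := by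
    exact_mod_cast (expMean_mul_exp a u).symm
  rw [h_sum, ofReal_exp]
  ring

lemma integral_expMean_sub_mul_exp (ha : ∀ n, 0 ≤ a n)
    (hC : ∀ N : ℕ, ∑ k ∈ Finset.Icc 1 N, a k ≤ C * N) (A : ℝ) {s : ℂ} (hs : 0 < s.re) :
    ∫ u in Ioi (0 : ℝ), ((expMean a u - A : ℝ) : ℂ) * cexp (-s * u) =
      LSeries (fun n => (a n : ℂ)) (s + 1) / (s + 1) - A / s := by
  have h_exp : IntegrableOn (fun u : ℝ => cexp (-s * u)) (Ioi 0) :=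
    integrableOn_exp_mul_complex_Ioi (by simpa using hs) 0
  have h_mean : IntegrableOn (fun u : ℝ => (expMean a u : ℂ) * cexp (-s * u)) (Ioi 0) := by
    refine h_exp.bdd_mul (c := C) (measurable_expMean a).complex_ofReal.aestronglyMeasurable
      (.of_forall fun u => ?_)
    rw [norm_real, Real.norm_of_nonneg (expMean_nonneg ha u)]
    exact expMean_le ha hC u
  simp only [ofReal_sub, sub_mul]
  rw [integral_sub h_mean (h_exp.const_mul _), integral_expMean_mul_exp ha hC hs,
    integral_const_mul, integral_exp_mul_complex_Ioi (by simpa using hs)]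
  simp [div_eq_mul_inv]

lemma integral_comp_sub_mul_left_mul (f K : ℝ → ℝ) {θ : ℝ} (hθ : 0 < θ) (y : ℝ) :
    ∫ w, f (y - θ * w) * K w = θ⁻¹ * ∫ u, f u * K (θ⁻¹ * (y - u)) := by
  have h_scale := Measure.integral_comp_mul_left (fun v => f (y - v) * K (θ⁻¹ * v)) θ
  have h_reflect := integral_sub_left_eq_self (fun u => f u * K (θ⁻¹ * (y - u))) volume y
  simp only [inv_mul_cancel_left₀ hθ.ne', abs_of_pos (inv_pos.mpr hθ), smul_eq_mul] at h_scale
  simp only [sub_sub_cancel] at h_reflect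
  rw [h_scale, h_reflect]

lemma tendsto_integral_Ioi_comp_sub {K : ℝ → ℝ} (hK : Integrable K) {θ : ℝ} (hθ : 0 < θ) :
    Tendsto (fun y => θ⁻¹ * ∫ u in Ioi (0 : ℝ), K (θ⁻¹ * (y - u))) atTop (𝓝 (∫ w, K w)) := by
  have h_lim := ((aecover_Iio tendsto_id).integral_tendsto_of_countably_generated hK).comp
    (tendsto_id.atTop_div_const hθ)
  refine h_lim.congr fun y => ?_
  have h_subst := integral_comp_sub_mul_left_mul ((Ioi 0).indicator 1) K hθ y
  have h_mem (w : ℝ) : y - θ * w ∈ Ioi 0 ↔ w ∈ Iio (y / θ) := by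
    rw [mem_Ioi, sub_pos, mem_Iio, lt_div_iff₀' hθ]
  simp only [Function.comp_apply, id, ← integral_indicator measurableSet_Ioi,
    ← integral_indicator measurableSet_Iio]
  simpa only [indicator_apply, h_mem, Pi.one_apply, ite_mul, one_mul, zero_mul] using h_subst

lemma tendsto_integral_expMean_mul_fejerKernel (ha : ∀ n, 0 ≤ a n)
    (hC : ∀ N : ℕ, ∑ k ∈ Finset.Icc 1 N, a k ≤ C * N) {A : ℝ} {G : ℂ → ℂ}
    (hG : ContinuousOn G {s | 0 ≤ s.re})
    (hL : ∀ s : ℂ, 0 < s.re → LSeries (fun n => (a n : ℂ)) (s + 1) / (s + 1) - A / s = G s)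
    {θ : ℝ} (hθ : 0 < θ) :
    Tendsto (fun y => ∫ w, expMean a (y - θ * w) * fejerKernel w) atTop
      (𝓝 (A * ∫ w, fejerKernel w)) := by
  have h_bdd (u : ℝ) : |expMean a u - A| ≤ C + |A| := (abs_sub _ _).trans <| by
    rw [abs_of_nonneg (expMean_nonneg ha u)]
    gcongr
    exact expMean_le ha hC u
  have h_osc := tendsto_integral_mul_fejerKernel ((measurable_expMean a).sub_const A) h_bdd hG
    (fun s hs => (integral_expMean_sub_mul_exp ha hC A hs).trans (hL s hs)) (inv_pos.mpr hθ)
  have h_main := (tendsto_integral_Ioi_comp_sub integrable_fejerKernel hθ).const_mul A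
  have h_sum := (h_osc.const_mul θ⁻¹).add h_main
  rw [mul_zero, zero_add] at h_sum
  refine h_sum.congr fun y => ?_
  have h_int := (integrable_fejerKernel_comp (inv_ne_zero hθ.ne') y).integrableOn (s := Ioi 0)
  have h_int_sub : IntegrableOn
      (fun u => (expMean a u - A) * fejerKernel (θ⁻¹ * (y - u))) (Ioi 0) :=
    h_int.bdd_mul ((measurable_expMean a).sub_const A).aestronglyMeasurable (.of_forall h_bdd)
  have h_supp : ∫ u, expMean a u * fejerKernel (θ⁻¹ * (y - u)) =
      ∫ u in Ioi (0 : ℝ), expMean a u * fejerKernel (θ⁻¹ * (y - u)) := by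
    rw [← integral_Ici_eq_integral_Ioi, setIntegral_eq_integral_of_forall_compl_eq_zero]
    intro u hu
    rw [expMean_eq_zero (not_le.mp hu), zero_mul]
  rw [integral_comp_sub_mul_left_mul _ _ hθ, h_supp, mul_left_comm A, ← integral_const_mul A,
    ← mul_add, ← integral_add h_int_sub (h_int.const_mul A)]
  simp only [sub_mul, sub_add_cancel]

theorem wiener_ikehara_of_sum_le (ha : ∀ n, 0 ≤ a n)
    (hC : ∀ N : ℕ, ∑ k ∈ Finset.Icc 1 N, a k ≤ C * N) {A : ℝ} {g : ℂ → ℂ}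
    (hg : ContinuousOn g {s | 1 ≤ s.re})
    (h : ∀ s : ℂ, 1 < s.re → LSeries (fun n => (a n : ℂ)) s - A / (s - 1) = g s) :
    Tendsto (fun N : ℕ => (∑ k ∈ Finset.Icc 1 N, a k) / N) atTop (𝓝 A) := by
  have h_ne {s : ℂ} (hs : 0 ≤ s.re) : s + 1 ≠ 0 := fun h0 => by
    have := congrArg re h0
    simp only [add_re, one_re, zero_re] at this
    linarith
  have hG : ContinuousOn (fun s => (g (s + 1) - A) / (s + 1)) {s : ℂ | 0 ≤ s.re} := by
    refine ((hg.comp (f := fun s : ℂ => s + 1) (by fun_prop) fun s hs => ?_).sub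
      continuousOn_const).div (by fun_prop) fun s hs => h_ne hs
    simpa using hs
  have hL (s : ℂ) (hs : 0 < s.re) : LSeries (fun n => (a n : ℂ)) (s + 1) / (s + 1) - A / s =
      (g (s + 1) - A) / (s + 1) := by
    have hs_ne : s ≠ 0 := fun h0 => by simp [h0] at hs
    rw [← h (s + 1) (by simpa using hs), add_sub_cancel_right]
    field_simp [h_ne hs.le]
    ring
  have h_mean : Tendsto (expMean a) atTop (𝓝 A) :=
    tendsto_of_tendsto_integral_mul_kernel (monotone_expMean_mul_exp ha) (expMean_nonneg ha)
      (expMean_le ha hC) integrable_fejerKernel fejerKernel_nonneg integral_fejerKernel_pos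
      fun θ hθ => tendsto_integral_expMean_mul_fejerKernel ha hC hG hL hθ
  refine (h_mean.comp (Real.tendsto_log_atTop.comp tendsto_natCast_atTop_atTop)).congr' ?_
  filter_upwards [eventually_ne_atTop 0] with N hN using expMean_log hN

end WienerIkehara

section Dilation

open Complex Module Set

section Algebra

variable {L ι : Type*} [AddCommGroup L] [Fintype ι] (b : Basis ι ℤ L) (k : ℕ)

/-- The vector of `L` with coordinates `r i ∈ {0, …, k - 1}`: these represent `L ⧸ k L`. -/
noncomputable def latticeResidue (r : ι → Fin k) : L := ∑ i, ((r i : ℕ) : ℤ) • b i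

/-- Division with remainder by `k` in a free `ℤ`-module, the inverse of `(y, r) ↦ k • y + r`. -/
noncomputable def latticeDivMod [NeZero k] : L ≃ L × (ι → Fin k) :=
  b.equivFun.toEquiv.trans <| (Equiv.piCongrRight fun _ => Int.divModEquiv k).trans <|
    (Equiv.arrowProdEquivProdArrow ι (fun _ => ℤ) fun _ => Fin k).trans <|
      b.equivFun.symm.toEquiv.prodCongr (Equiv.refl _)

lemma latticeDivMod_symm_apply [NeZero k] (y : L) (r : ι → Fin k) :
    (latticeDivMod b k).symm (y, r) = k • y + latticeResidue b k r := by
  have h_coord (i : ι) : b.equivFun (latticeResidue b k r) i = (r i : ℕ) := by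
    rw [latticeResidue, ← b.equivFun_symm_apply fun i => ((r i : ℕ) : ℤ),
      LinearEquiv.apply_symm_apply]
  apply b.equivFun.injective
  ext i
  rw [map_add, map_nsmul, Pi.add_apply, Pi.smul_apply, h_coord]
  simp only [latticeDivMod, Equiv.symm_trans_apply, LinearEquiv.coe_toEquiv_symm,
    EquivLike.coe_coe, LinearEquiv.apply_symm_apply]
  simp [Int.divModEquiv, Equiv.arrowProdEquivProdArrow, mul_comm, -Basis.equivFun_apply]

variable {k} [DecidableEq ι]

-- Split the sum over `L` according to residues modulo `k`; subtracting the multiples of `k` from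
-- each residue class costs `k ^ rank L` copies of `∑ f (k • y) = c * ∑ f y`.
lemma hasSum_sum_sub_of_dilation [NeZero k] {f : L → ℂ} {c : ℂ} (hf : Summable f)
    (h_dil : ∀ x, f (k • x) = c * f x) :
    HasSum (fun y => ∑ r, (f (k • y + latticeResidue b k r) - f (k • y)))
      ((1 - k ^ Fintype.card ι * c) * ∑' x, f x) := by
  have h_all : HasSum (fun y => ∑ r, f (k • y + latticeResidue b k r)) (∑' x, f x) := by
    have h := (latticeDivMod b k).symm.hasSum_iff.mpr hf.hasSum
    refine h.prod_fiberwise fun y => ?_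
    simp only [Function.comp_apply, latticeDivMod_symm_apply]
    exact hasSum_fintype _
  have h_mult : HasSum (fun y => ∑ _r : ι → Fin k, f (k • y))
      (k ^ Fintype.card ι * c * ∑' x, f x) := by
    simp only [h_dil, Finset.sum_const, Finset.card_univ, Fintype.card_pi, Fintype.card_fin,
      Finset.prod_const, nsmul_eq_mul, Nat.cast_pow, ← mul_assoc]
    exact hf.hasSum.mul_left _
  simpa only [Finset.sum_sub_distrib, sub_mul, one_mul] using h_all.sub h_mult

end Algebra

variable {E : Type*} [NormedAddCommGroup E] [NormedSpace ℝ E] {L : Submodule ℤ E}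

lemma norm_le_norm_nsmul {k : ℕ} (hk : k ≠ 0) (y : L) : ‖y‖ ≤ ‖k • y‖ := by
  have h_norm : ‖k • y‖ = k * ‖y‖ := by
    change ‖((k • y : L) : E)‖ = k * ‖(y : E)‖
    rw [Submodule.coe_smul_of_tower, ← Nat.cast_smul_eq_nsmul ℝ, norm_smul, Real.norm_natCast]
  rw [h_norm]
  exact le_mul_of_one_le_left (norm_nonneg y) (by exact_mod_cast Nat.one_le_iff_ne_zero.mpr hk)

variable [FiniteDimensional ℝ E]

lemma summable_one_add_norm_rpow (L : Submodule ℤ E) [DiscreteTopology L] {r : ℝ}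
    (hr : r < -finrank ℤ L) : Summable fun x : L => (1 + ‖x‖) ^ r := by
  refine (ZLattice.summable_norm_rpow L r hr).of_norm_bounded_eventually ?_
  filter_upwards [(finite_singleton (0 : L)).compl_mem_cofinite] with x hx
  have hx_pos : 0 < ‖x‖ := norm_pos_iff.mpr hx
  have hr_nonpos : r ≤ 0 := hr.le.trans (by simp)
  rw [Real.norm_of_nonneg (by positivity)]
  exact Real.rpow_le_rpow_of_nonpos hx_pos (by linarith) hr_nonpos

variable [DiscreteTopology L]

lemma differentiableOn_tsum_sub_lattice {κ : Type*} [Fintype κ] (v : κ → L) {F : ℂ → L → ℂ}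
    (hF : ∀ x, DifferentiableOn ℂ (fun s => F s x) {s | 0 < s.re})
    (h_diff : ∀ σ T R : ℝ, 0 < σ → ∃ C : ℝ, ∀ s : ℂ, σ < s.re → ‖s‖ < T → ∀ x v : L, ‖v‖ ≤ R →
      ‖F s (x + v) - F s x‖ ≤ C * (1 + ‖x‖) ^ (-(finrank ℤ L * σ) - 1))
    {k : ℕ} (hk : k ≠ 0) (h_rank : 0 < finrank ℤ L) :
    DifferentiableOn ℂ (fun s => ∑' y, ∑ i, (F s (k • y + v i) - F s (k • y)))
      {s | 1 - 1 / (finrank ℤ L : ℝ) < s.re} := by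
  intro s₀ hs₀
  set n : ℝ := (finrank ℤ L : ℝ)
  have hn : 1 ≤ n := Nat.one_le_cast.mpr h_rank
  obtain ⟨σ, hσ, hσ_lt⟩ := exists_between (mem_ofPred.mp hs₀)
  have hσ_pos : 0 < σ := (sub_nonneg.mpr (div_le_one_of_le₀ hn (by linarith))).trans_lt hσ
  have h_exp : -(n * σ) - 1 < -n := by
    have h := mul_lt_mul_of_pos_left hσ (zero_lt_one.trans_le hn)
    rw [mul_sub, mul_one_div_cancel (by linarith)] at h
    linarith
  let U : Set ℂ := {s | σ < s.re} ∩ {s | ‖s‖ < ‖s₀‖ + 1}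
  have hU : IsOpen U := (isOpen_lt continuous_const continuous_re).inter
    (isOpen_lt continuous_norm continuous_const)
  choose C hC using fun i => h_diff σ (‖s₀‖ + 1) ‖v i‖ hσ_pos
  have h_bound (y : L) (s : ℂ) (hs : s ∈ U) :
      ‖∑ i, (F s (k • y + v i) - F s (k • y))‖ ≤ (∑ i, |C i|) * (1 + ‖y‖) ^ (-(n * σ) - 1) := by
    rw [Finset.sum_mul]
    refine norm_sum_le_of_le _ fun i _ => (hC i s hs.1 hs.2 (k • y) (v i) le_rfl).trans ?_
    gcongr ?_ * ?_
    · exact le_abs_self _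
    · exact Real.rpow_le_rpow_of_nonpos (by positivity)
        (by gcongr; exact norm_le_norm_nsmul hk y) (by linarith)
  have h_diffOn : DifferentiableOn ℂ (fun s => ∑' y, ∑ i, (F s (k • y + v i) - F s (k • y))) U :=
    differentiableOn_tsum_of_summable_norm ((summable_one_add_norm_rpow L h_exp).mul_left _)
      (fun y => DifferentiableOn.fun_sum fun i _ => ((hF _).sub (hF _)).mono
        fun s hs => hσ_pos.trans hs.1) hU h_bound
  exact (h_diffOn.differentiableAt (hU.mem_nhds ⟨hσ_lt, by simp⟩)).differentiableWithinAt

theorem exists_differentiableOn_dilation_mul_tsum [IsZLattice ℝ L]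
    (h_rank : 0 < finrank ℤ L) {F : ℂ → L → ℂ}
    (hF : ∀ x, DifferentiableOn ℂ (fun s => F s x) {s | 0 < s.re})
    {k : ℕ} (hk : k ≠ 0)
    (h_dil : ∀ (s : ℂ) (x : L), F s (k • x) = (k : ℂ) ^ (-(finrank ℤ L * s)) * F s x)
    (h_summable : ∀ s : ℂ, 1 < s.re → Summable (F s))
    (h_diff : ∀ σ T R : ℝ, 0 < σ → ∃ C : ℝ, ∀ s : ℂ, σ < s.re → ‖s‖ < T → ∀ x v : L, ‖v‖ ≤ R →
      ‖F s (x + v) - F s x‖ ≤ C * (1 + ‖x‖) ^ (-(finrank ℤ L * σ) - 1)) :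
    ∃ D : ℂ → ℂ, DifferentiableOn ℂ D {s | 1 - 1 / (finrank ℤ L : ℝ) < s.re} ∧
      ∀ s : ℂ, 1 < s.re →
        (1 - (k : ℂ) ^ (finrank ℤ L * (1 - s))) * ∑' x, F s x = D s := by
  have : NeZero k := ⟨hk⟩
  have : Module.Finite ℤ L := ZLattice.module_finite ℝ L
  have : Module.Free ℤ L := ZLattice.module_free ℝ L
  let b := finBasis ℤ L
  refine ⟨_, differentiableOn_tsum_sub_lattice (latticeResidue b k) hF h_diff hk h_rank,
    fun s hs => ?_⟩
  have h_sum := hasSum_sum_sub_of_dilation b (h_summable s hs) (h_dil s)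
  rw [h_sum.tsum_eq, Fintype.card_fin, ← cpow_natCast,
    ← cpow_add _ _ (Nat.cast_ne_zero.mpr hk), ← sub_eq_add_neg, mul_one_sub]

end Dilation

section WeightedNormPow

open Module NumberField NumberField.InfinitePlace NumberField.mixedEmbedding
open NumberField.Units.dirichletUnitTheorem NumberField.mixedEmbedding.fundamentalCone
open scoped Classical NNReal

lemma abs_le_card_mul_of_sum_eq_zero {ι : Type*} [Fintype ι] {f : ι → ℝ} (h_sum : ∑ i, f i = 0)
    {i₀ : ι} {M : ℝ} (hM : 0 ≤ M) (hf : ∀ i ≠ i₀, |f i| ≤ M) (i : ι) :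
    |f i| ≤ Fintype.card ι * M := by
  by_cases hi : i = i₀
  · rw [← Finset.add_sum_erase _ _ (Finset.mem_univ i)] at h_sum
    rw [eq_neg_of_add_eq_zero_left h_sum, abs_neg]
    calc |∑ j ∈ Finset.univ.erase i, f j| ≤ ∑ j ∈ Finset.univ.erase i, |f j| :=
          Finset.abs_sum_le_sum_abs _ _
      _ ≤ (Finset.univ.erase i).card • M :=
          Finset.sum_le_card_nsmul _ _ _ fun j hj => hf j (hi ▸ Finset.ne_of_mem_erase hj)
      _ ≤ Fintype.card ι * M := by
          rw [nsmul_eq_mul]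
          gcongr
          exact Finset.card_le_univ _
  · have : Nonempty ι := ⟨i⟩
    exact (hf i hi).trans (le_mul_of_one_le_left hM (Nat.one_le_cast.mpr Fintype.card_pos))

lemma abs_log_sub_log_le {a b t : ℝ} (ht : 0 < t) (ha : t ≤ a) (hb : t ≤ b) :
    |Real.log a - Real.log b| ≤ |a - b| / t := by
  have h_oneSided {a b : ℝ} (ha : t ≤ a) (hb : t ≤ b) :
      Real.log a - Real.log b ≤ |a - b| / t := by
    have hb_pos : 0 < b := ht.trans_le hb
    rw [← Real.log_div (ht.trans_le ha).ne' hb_pos.ne']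
    calc Real.log (a / b) ≤ a / b - 1 :=
          Real.log_le_sub_one_of_pos (div_pos (ht.trans_le ha) hb_pos)
      _ = (a - b) / b := by field_simp
      _ ≤ |a - b| / t := div_le_div₀ (abs_nonneg _) (le_abs_self _) ht hb
  exact abs_sub_le_iff.mpr ⟨h_oneSided ha hb, abs_sub_comm a b ▸ h_oneSided hb ha⟩

lemma norm_exp_neg_mul_sub_le {s : ℂ} (hs : 0 ≤ s.re) {a b m : ℝ} (ha : m ≤ a) (hb : m ≤ b) :
    ‖Complex.exp (-s * a) - Complex.exp (-s * b)‖ ≤ ‖s‖ * Real.exp (-s.re * m) * |a - b| := by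
  have h_deriv (u : ℝ) : HasDerivAt (fun u : ℝ => Complex.exp (-s * u))
      (Complex.exp (-s * u) * (-s)) u := by
    simpa using ((hasDerivAt_id (u : ℂ)).const_mul (-s)).cexp.comp_ofReal
  refine (convex_Ici m).norm_image_sub_le_of_norm_hasDerivWithin_le
    (fun u _ => (h_deriv u).hasDerivWithinAt) (fun u hu => ?_) hb ha
  rw [norm_mul, norm_neg, Complex.norm_exp, mul_comm]
  gcongr
  simpa using mul_le_mul_of_nonneg_left (Set.mem_Ici.mp hu) hs

lemma norm_cpow_neg_sub_le {s : ℂ} (hs : 0 ≤ s.re) {a b m : ℝ} (hm : 0 < m) (ha : m ≤ a)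
    (hb : m ≤ b) :
    ‖(a : ℂ) ^ (-s) - (b : ℂ) ^ (-s)‖ ≤ ‖s‖ * m ^ (-s.re) * |Real.log a - Real.log b| := by
  have h_cpow {u : ℝ} (hu : m ≤ u) : (u : ℂ) ^ (-s) = Complex.exp (-s * Real.log u) := by
    have hu_pos : 0 < u := hm.trans_le hu
    rw [Complex.cpow_def_of_ne_zero (Complex.ofReal_ne_zero.mpr hu_pos.ne'),
      Complex.ofReal_log hu_pos.le, mul_comm]
  rw [h_cpow ha, h_cpow hb, Real.rpow_def_of_pos hm, mul_comm (Real.log m)]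
  exact norm_exp_neg_mul_sub_le hs (Real.log_le_log hm ha) (Real.log_le_log hm hb)

variable {K : Type*} [Field K] [NumberField K]

lemma sum_mult_mul_log_normAtPlace {x : mixedSpace K} (hx : mixedEmbedding.norm x ≠ 0) :
    ∑ w, mult w * Real.log (normAtPlace w x) = Real.log (mixedEmbedding.norm x) := by
  rw [mixedEmbedding.norm_apply,
    Real.log_prod fun w _ => pow_ne_zero _ (mixedEmbedding.norm_ne_zero_iff.mp hx w)]
  simp only [Real.log_pow]

lemma pow_finrank_le_norm {x : mixedSpace K} {t : ℝ} (ht : 0 ≤ t) (h : ∀ w, t ≤ normAtPlace w x) :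
    t ^ finrank ℚ K ≤ mixedEmbedding.norm x := by
  rw [mixedEmbedding.norm_apply, ← InfinitePlace.sum_mult_eq, ← Finset.prod_pow_eq_pow_sum]
  gcongr with w
  exact h w

lemma abs_normAtPlace_add_sub_le (x v : mixedSpace K) (w : InfinitePlace K) :
    |normAtPlace w (x + v) - normAtPlace w x| ≤ ‖v‖ := by
  have hv : normAtPlace w v ≤ ‖v‖ := by
    rw [norm_eq_sup'_normAtPlace]
    exact Finset.le_sup' (fun w => normAtPlace w v) (Finset.mem_univ w)
  have h_sub := normAtPlace_add_le w (x + v) (-v)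
  rw [add_neg_cancel_right, normAtPlace_neg] at h_sub
  rw [abs_sub_le_iff]
  constructor <;> linarith [normAtPlace_add_le w x v]

lemma le_normAtPlace_add_and_le_normAtPlace {c R t : ℝ} (hc : 0 ≤ c) (hc_le : c ≤ 1)
    {x v : mixedSpace K} (hv : ‖v‖ ≤ R) (h_large : t + 2 * R ≤ c * ‖x‖)
    (h : (∀ w, c * ‖x + v‖ ≤ normAtPlace w (x + v)) ∨ ∀ w, c * ‖x‖ ≤ normAtPlace w x)
    (w : InfinitePlace K) : t ≤ normAtPlace w (x + v) ∧ t ≤ normAtPlace w x := by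
  have hR : 0 ≤ R := (norm_nonneg v).trans hv
  have h_near := abs_sub_le_iff.mp ((abs_normAtPlace_add_sub_le x v w).trans hv)
  rcases h with h | h
  · have h_norm : c * (‖x‖ - R) ≤ c * ‖x + v‖ := by
      gcongr
      linarith [norm_sub_le_norm_add x v]
    have h_cR : c * R ≤ R := mul_le_of_le_one_left hR hc_le
    constructor <;> linarith [h w]
  · constructor <;> linarith [h w]

lemma abs_log_normAtPlace_sub_le {x : mixedSpace K} (hx : mixedEmbedding.norm x ≠ 0)
    (w : InfinitePlace K) :
    |Real.log (normAtPlace w x) - Real.log (mixedEmbedding.norm x) * (finrank ℚ K : ℝ)⁻¹| ≤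
      Fintype.card (InfinitePlace K) * ‖logMap x‖ := by
  have h_finrank : (finrank ℚ K : ℝ) ≠ 0 := Nat.cast_ne_zero.mpr finrank_pos.ne'
  have h_sum : ∑ w, mult w * (Real.log (normAtPlace w x) -
      Real.log (mixedEmbedding.norm x) * (finrank ℚ K : ℝ)⁻¹) = 0 := by
    simp_rw [mul_sub, Finset.sum_sub_distrib, sum_mult_mul_log_normAtPlace hx, ← Finset.sum_mul,
      ← Nat.cast_sum, InfinitePlace.sum_mult_eq]
    field_simp
    ring
  refine le_trans ?_ <| abs_le_card_mul_of_sum_eq_zero h_sum (i₀ := w₀) (norm_nonneg (logMap x))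
    (fun w hw => norm_le_pi_norm (logMap x) ⟨w, hw⟩) w
  rw [abs_mul, Nat.abs_cast]
  exact le_mul_of_one_le_left (abs_nonneg _) (Nat.one_le_cast.mpr mult_pos)

variable (K) in
-- Bounding `logMap x` makes the absolute values of `x` at all infinite places comparable.
lemma exists_mul_norm_le_normAtPlace (A : ℝ) : ∃ c : ℝ, 0 < c ∧ c ≤ 1 ∧ ∀ x : mixedSpace K,
    mixedEmbedding.norm x ≠ 0 → ‖logMap x‖ ≤ A → ∀ w, c * ‖x‖ ≤ normAtPlace w x := by
  let A' : ℝ := Fintype.card (InfinitePlace K) * |A|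
  refine ⟨Real.exp (-(2 * A')), Real.exp_pos _, Real.exp_le_one_iff.mpr
    (neg_nonpos.mpr (by positivity)), fun x hx hA w => ?_⟩
  have h_dev (w : InfinitePlace K) := (abs_log_normAtPlace_sub_le hx w).trans
    (mul_le_mul_of_nonneg_left (hA.trans (le_abs_self A)) (Nat.cast_nonneg _))
  have h_pos (w : InfinitePlace K) : 0 < normAtPlace w x :=
    (normAtPlace_nonneg w x).lt_of_ne' (mixedEmbedding.norm_ne_zero_iff.mp hx w)
  rw [Real.exp_neg, inv_mul_le_iff₀ (Real.exp_pos _), norm_eq_sup'_normAtPlace]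
  refine Finset.sup'_le _ _ fun v _ => ?_
  rw [← Real.exp_log (h_pos v), ← Real.exp_log (h_pos w), ← Real.exp_add, Real.exp_le_exp]
  linarith [(abs_le.mp (h_dev v)).2, (abs_le.mp (h_dev w)).1]

section Comparison

variable {x y : mixedSpace K} {ε : ℝ}
  (h : ∀ w, |Real.log (normAtPlace w x) - Real.log (normAtPlace w y)| ≤ ε)
include h

lemma abs_log_norm_sub_le (hx : mixedEmbedding.norm x ≠ 0) (hy : mixedEmbedding.norm y ≠ 0) :
    |Real.log (mixedEmbedding.norm x) - Real.log (mixedEmbedding.norm y)| ≤ finrank ℚ K * ε := by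
  rw [← sum_mult_mul_log_normAtPlace hx, ← sum_mult_mul_log_normAtPlace hy,
    ← Finset.sum_sub_distrib, ← InfinitePlace.sum_mult_eq, Nat.cast_sum, Finset.sum_mul]
  refine (Finset.abs_sum_le_sum_abs _ _).trans (Finset.sum_le_sum fun w _ => ?_)
  rw [← mul_sub, abs_mul, Nat.abs_cast]
  gcongr
  exact h w

lemma norm_logMap_sub_le (hx : mixedEmbedding.norm x ≠ 0) (hy : mixedEmbedding.norm y ≠ 0) :
    ‖logMap x - logMap y‖ ≤ 4 * ε := by
  have hn : (0 : ℝ) < finrank ℚ K := Nat.cast_pos.mpr finrank_pos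
  have hε : 0 ≤ ε := (abs_nonneg _).trans (h w₀)
  refine (pi_norm_le_iff_of_nonneg (by positivity)).mpr fun w => ?_
  have h_norm : |Real.log (mixedEmbedding.norm x) - Real.log (mixedEmbedding.norm y)| *
      (finrank ℚ K : ℝ)⁻¹ ≤ ε := by
    rw [← div_eq_mul_inv, div_le_iff₀ hn, mul_comm]
    exact abs_log_norm_sub_le h hx hy
  have h_mult : (mult w.val : ℝ) ≤ 2 := by
    rw [mult]
    split_ifs <;> norm_num
  rw [Pi.sub_apply, logMap_apply, logMap_apply, ← mul_sub, sub_sub_sub_comm, ← sub_mul,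
    Real.norm_eq_abs, abs_mul, Nat.abs_cast]
  calc _ ≤ 2 * (ε + ε) := by
        gcongr
        refine (abs_sub _ _).trans (add_le_add (h w) ?_)
        rwa [abs_mul, abs_of_pos (inv_pos.mpr hn)]
    _ = 4 * ε := by ring

end Comparison

/-- The power `N(x) ^ (-s)` of the norm, weighted by a function `φ` of the logarithmic coordinates
of `x`. It is set to `0` where the norm vanishes. -/
noncomputable def weightedNormPow (φ : logSpace K → ℝ) (s : ℂ) (x : mixedSpace K) : ℂ :=
  if mixedEmbedding.norm x = 0 then 0 else φ (logMap x) * (mixedEmbedding.norm x : ℂ) ^ (-s)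

variable {φ : logSpace K → ℝ}

lemma weightedNormPow_of_norm_ne_zero {x : mixedSpace K} (hx : mixedEmbedding.norm x ≠ 0) (s : ℂ) :
    weightedNormPow φ s x = φ (logMap x) * (mixedEmbedding.norm x : ℂ) ^ (-s) :=
  if_neg hx

@[simp]
lemma weightedNormPow_zero (s : ℂ) : weightedNormPow φ s 0 = 0 := by
  simp [weightedNormPow]

lemma differentiable_weightedNormPow (x : mixedSpace K) :
    Differentiable ℂ fun s => weightedNormPow φ s x := by
  unfold weightedNormPow
  split_ifs with hx
  · exact differentiable_const 0
  · exact (differentiable_id.neg.const_cpow (Or.inl (Complex.ofReal_ne_zero.mpr hx))).const_mul _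

lemma weightedNormPow_smul {t : ℝ} (ht : 0 < t) (s : ℂ) (x : mixedSpace K) :
    weightedNormPow φ s (t • x) = (t : ℂ) ^ (-(finrank ℚ K * s)) * weightedNormPow φ s x := by
  by_cases hx : mixedEmbedding.norm x = 0
  · simp [weightedNormPow, mixedEmbedding.norm_smul, hx]
  have h_norm : mixedEmbedding.norm (t • x) = t ^ finrank ℚ K * mixedEmbedding.norm x := by
    rw [mixedEmbedding.norm_smul, abs_of_pos ht]
  have h_pow : ((t ^ finrank ℚ K : ℝ) : ℂ) ^ (-s) = (t : ℂ) ^ (-(finrank ℚ K * s)) := by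
    rw [← Real.rpow_natCast, ← Complex.cpow_mul_ofReal_nonneg ht.le, mul_neg,
      Complex.ofReal_natCast]
  rw [weightedNormPow_of_norm_ne_zero hx, weightedNormPow_of_norm_ne_zero
    (h_norm ▸ mul_ne_zero (pow_pos ht _).ne' hx), logMap_real_smul hx ht.ne', h_norm,
    Complex.ofReal_mul,
    Complex.mul_cpow_ofReal_nonneg (by positivity) (mixedEmbedding.norm_nonneg _), h_pow]
  ring

variable (h_abs : ∀ a, |φ a| ≤ 1)
include h_abs

lemma norm_weightedNormPow_le {x : mixedSpace K} (hx : mixedEmbedding.norm x ≠ 0) (s : ℂ) :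
    ‖weightedNormPow φ s x‖ ≤ mixedEmbedding.norm x ^ (-s.re) := by
  have hx_pos := (mixedEmbedding.norm_nonneg x).lt_of_ne' hx
  rw [weightedNormPow_of_norm_ne_zero hx, norm_mul, Complex.norm_cpow_eq_rpow_re_of_pos hx_pos,
    Complex.norm_real, Complex.neg_re]
  exact mul_le_of_le_one_left (by positivity) (h_abs _)

lemma norm_weightedNormPow_le_one {x : mixedSpace K} (hx : x = 0 ∨ 1 ≤ mixedEmbedding.norm x)
    {s : ℂ} (hs : 0 ≤ s.re) : ‖weightedNormPow φ s x‖ ≤ 1 := by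
  rcases hx with rfl | hx
  · simp
  · exact (norm_weightedNormPow_le h_abs (zero_lt_one.trans_le hx).ne' s).trans
      (Real.rpow_le_one_of_one_le_of_nonpos hx (neg_nonpos.mpr hs))

omit h_abs in
lemma norm_norm_cpow_neg_le {s : ℂ} (hs : 0 ≤ s.re) {x : mixedSpace K} {t : ℝ} (ht : 0 < t)
    (hx : ∀ w, t ≤ normAtPlace w x) :
    ‖(mixedEmbedding.norm x : ℂ) ^ (-s)‖ ≤ t ^ (-(finrank ℚ K * s.re)) := by
  have h_base : 0 < t ^ finrank ℚ K := pow_pos ht _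
  have h_norm : t ^ finrank ℚ K ≤ mixedEmbedding.norm x := pow_finrank_le_norm ht.le hx
  rw [Complex.norm_cpow_eq_rpow_re_of_pos (h_base.trans_le h_norm), Complex.neg_re, ← mul_neg,
    Real.rpow_mul ht.le, Real.rpow_natCast]
  exact Real.rpow_le_rpow_of_nonpos h_base h_norm (neg_nonpos.mpr hs)

omit h_abs in
lemma norm_norm_cpow_neg_sub_le {s : ℂ} (hs : 0 ≤ s.re) {x y : mixedSpace K} {t r : ℝ} (ht : 0 < t)
    (hx : ∀ w, t ≤ normAtPlace w x) (hy : ∀ w, t ≤ normAtPlace w y)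
    (h_ratio : ∀ w, |Real.log (normAtPlace w x) - Real.log (normAtPlace w y)| ≤ r) :
    ‖(mixedEmbedding.norm x : ℂ) ^ (-s) - (mixedEmbedding.norm y : ℂ) ^ (-s)‖ ≤
      ‖s‖ * t ^ (-(finrank ℚ K * s.re)) * (finrank ℚ K * r) := by
  have h_base : 0 < t ^ finrank ℚ K := pow_pos ht _
  have hNx : t ^ finrank ℚ K ≤ mixedEmbedding.norm x := pow_finrank_le_norm ht.le hx
  have hNy : t ^ finrank ℚ K ≤ mixedEmbedding.norm y := pow_finrank_le_norm ht.le hy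
  refine (norm_cpow_neg_sub_le hs h_base hNx hNy).trans ?_
  rw [← mul_neg, Real.rpow_mul ht.le, Real.rpow_natCast]
  gcongr
  exact abs_log_norm_sub_le h_ratio (h_base.trans_le hNx).ne' (h_base.trans_le hNy).ne'

lemma norm_weightedNormPow_sub_le {B : ℝ≥0} (h_lip : LipschitzWith B φ) {s : ℂ} (hs : 0 ≤ s.re)
    {x y : mixedSpace K} {t δ : ℝ} (ht : 0 < t) (hx : ∀ w, t ≤ normAtPlace w x)
    (hy : ∀ w, t ≤ normAtPlace w y) (hxy : ∀ w, |normAtPlace w x - normAtPlace w y| ≤ δ) :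
    ‖weightedNormPow φ s x - weightedNormPow φ s y‖ ≤
      (‖s‖ * finrank ℚ K + 4 * B) * (δ / t) * t ^ (-(finrank ℚ K * s.re)) := by
  have hNx_ne := ((pow_pos ht _).trans_le (pow_finrank_le_norm ht.le hx)).ne'
  have hNy_ne := ((pow_pos ht _).trans_le (pow_finrank_le_norm ht.le hy)).ne'
  have h_ratio (w : InfinitePlace K) :
      |Real.log (normAtPlace w x) - Real.log (normAtPlace w y)| ≤ δ / t :=
    (abs_log_sub_log_le ht (hx w) (hy w)).trans (by gcongr; exact hxy w)
  have hδ : 0 ≤ δ / t := (abs_nonneg _).trans (h_ratio w₀)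
  have h_weight : ‖((φ (logMap x) - φ (logMap y) : ℝ) : ℂ)‖ ≤ B * (4 * (δ / t)) := by
    rw [Complex.norm_real]
    refine (h_lip.norm_sub_le _ _).trans ?_
    gcongr
    exact norm_logMap_sub_le h_ratio hNx_ne hNy_ne
  have h_split : weightedNormPow φ s x - weightedNormPow φ s y =
      φ (logMap x) * ((mixedEmbedding.norm x : ℂ) ^ (-s) - (mixedEmbedding.norm y : ℂ) ^ (-s)) +
        ((φ (logMap x) - φ (logMap y) : ℝ) : ℂ) * (mixedEmbedding.norm y : ℂ) ^ (-s) := by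
    rw [weightedNormPow_of_norm_ne_zero hNx_ne, weightedNormPow_of_norm_ne_zero hNy_ne]
    push_cast
    ring
  rw [h_split]
  calc _ ≤ 1 * (‖s‖ * t ^ (-(finrank ℚ K * s.re)) * (finrank ℚ K * (δ / t))) +
        B * (4 * (δ / t)) * t ^ (-(finrank ℚ K * s.re)) := by
        refine norm_add_le_of_le ?_ ?_ <;> rw [norm_mul]
        · gcongr
          · rw [Complex.norm_real]
            exact h_abs _
          · exact norm_norm_cpow_neg_sub_le hs ht hx hy h_ratio
        · gcongr
          exact norm_norm_cpow_neg_le hs ht hy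
    _ = _ := by ring

variable {A : ℝ} (h_supp : ∀ a, φ a ≠ 0 → ‖a‖ ≤ A)
include h_supp

omit h_abs in
lemma exists_mul_norm_le_normAtPlace_of_weightedNormPow_ne_zero : ∃ c : ℝ, 0 < c ∧ c ≤ 1 ∧
    ∀ s (x : mixedSpace K), weightedNormPow φ s x ≠ 0 → ∀ w, c * ‖x‖ ≤ normAtPlace w x := by
  obtain ⟨c, hc_pos, hc_le, hc⟩ := exists_mul_norm_le_normAtPlace K A
  refine ⟨c, hc_pos, hc_le, fun s x hx => ?_⟩
  have h_norm : mixedEmbedding.norm x ≠ 0 := fun h => hx (if_pos h)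
  rw [weightedNormPow_of_norm_ne_zero h_norm] at hx
  exact hc x h_norm (h_supp _ (Complex.ofReal_ne_zero.mp (left_ne_zero_of_mul hx)))

lemma exists_norm_weightedNormPow_le {s : ℂ} (hs : 0 ≤ s.re) : ∃ C : ℝ, ∀ x : mixedSpace K,
    (x = 0 ∨ 1 ≤ mixedEmbedding.norm x) →
      ‖weightedNormPow φ s x‖ ≤ C * (1 + ‖x‖) ^ (-(finrank ℚ K * s.re)) := by
  obtain ⟨c, hc_pos, hc_le, hc⟩ := exists_mul_norm_le_normAtPlace_of_weightedNormPow_ne_zero h_supp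
  refine ⟨(c / 2) ^ (-(finrank ℚ K * s.re)), fun x hx => ?_⟩
  rcases hx with rfl | hx
  · rw [weightedNormPow_zero, norm_zero]
    positivity
  by_cases h_zero : weightedNormPow φ s x = 0
  · rw [h_zero, norm_zero]
    positivity
  have h_base : (c / 2 * (1 + ‖x‖)) ^ finrank ℚ K ≤ mixedEmbedding.norm x := by
    calc (c / 2 * (1 + ‖x‖)) ^ finrank ℚ K ≤ max 1 (c * ‖x‖) ^ finrank ℚ K := by
          gcongr
          rcases le_total 1 (c * ‖x‖) with h | h
          · exact le_max_of_le_right (by linarith)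
          · exact le_max_of_le_left (by linarith)
      _ ≤ mixedEmbedding.norm x := by
          rcases max_cases 1 (c * ‖x‖) with ⟨h, -⟩ | ⟨h, -⟩ <;> rw [h]
          · rwa [one_pow]
          · exact pow_finrank_le_norm (by positivity) (hc s x h_zero)
  refine (norm_weightedNormPow_le h_abs (zero_lt_one.trans_le hx).ne' s).trans ?_
  rw [← Real.mul_rpow (by positivity) (by positivity), ← mul_neg, Real.rpow_mul (by positivity),
    Real.rpow_natCast]
  exact Real.rpow_le_rpow_of_nonpos (by positivity) h_base (neg_nonpos.mpr hs)

-- With `t` comparable to `1 + ‖x‖`, either `t` is bounded, or all the absolute values of `x` and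
-- `x + v` are at least `t` unless both terms vanish.
theorem exists_norm_weightedNormPow_add_sub_le {B : ℝ≥0} (h_lip : LipschitzWith B φ)
    {σ : ℝ} (hσ : 0 < σ) (T R : ℝ) : ∃ C : ℝ, ∀ s : ℂ, σ < s.re → ‖s‖ < T →
      ∀ x v : mixedSpace K, (x = 0 ∨ 1 ≤ mixedEmbedding.norm x) →
        (x + v = 0 ∨ 1 ≤ mixedEmbedding.norm (x + v)) → ‖v‖ ≤ R →
          ‖weightedNormPow φ s (x + v) - weightedNormPow φ s x‖ ≤
            C * (1 + ‖x‖) ^ (-(finrank ℚ K * σ) - 1) := by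
  obtain ⟨c, hc_pos, hc_le, hc⟩ := exists_mul_norm_le_normAtPlace_of_weightedNormPow_ne_zero h_supp
  let p : ℝ := -(finrank ℚ K * σ) - 1
  have hp : p ≤ 0 := sub_nonpos.mpr ((neg_nonpos.mpr (by positivity)).trans zero_le_one)
  let M : ℝ := 2 + 2 * |R|
  have hM : 0 < M := by positivity
  refine ⟨((T * finrank ℚ K + 4 * B) * R + 2 * (M ^ p)⁻¹) * (c / 2) ^ p,
    fun s hs hsT x v hx hxv hv => ?_⟩
  have hs_nonneg : 0 ≤ s.re := (hσ.trans hs).le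
  have hR : 0 ≤ R := (norm_nonneg v).trans hv
  have hT : 0 ≤ T := (norm_nonneg s).trans hsT.le
  set t : ℝ := c / 2 * (1 + ‖x‖) with ht_def
  have ht : 0 < t := by positivity
  rw [mul_assoc, ← Real.mul_rpow (by positivity) (by positivity), ← ht_def, add_mul]
  rcases le_or_gt t M with htM | htM
  · calc _ ≤ (1 : ℝ) + 1 := norm_sub_le_of_le (norm_weightedNormPow_le_one h_abs hxv hs_nonneg)
          (norm_weightedNormPow_le_one h_abs hx hs_nonneg)
      _ = 2 * (M ^ p)⁻¹ * M ^ p := by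
        rw [mul_assoc, inv_mul_cancel₀ (Real.rpow_pos_of_pos hM p).ne']
        norm_num
      _ ≤ 2 * (M ^ p)⁻¹ * t ^ p := mul_le_mul_of_nonneg_left
          (Real.rpow_le_rpow_of_nonpos ht htM hp) (by positivity)
      _ ≤ _ := le_add_of_nonneg_left (by positivity)
  by_cases h_zero : weightedNormPow φ s (x + v) = 0 ∧ weightedNormPow φ s x = 0
  · rw [h_zero.1, h_zero.2, sub_self, norm_zero]
    positivity
  have h_near (w : InfinitePlace K) := (abs_normAtPlace_add_sub_le x v w).trans hv
  have h_large : t + 2 * R ≤ c * ‖x‖ := by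
    have : |R| = R := abs_of_nonneg hR
    linarith
  have h_places := le_normAtPlace_add_and_le_normAtPlace hc_pos.le hc_le hv h_large
    ((not_and_or.mp h_zero).imp (hc s _) (hc s _))
  have h_one : 1 ≤ t := by linarith [abs_nonneg R]
  calc _ ≤ (‖s‖ * finrank ℚ K + 4 * B) * (R / t) * t ^ (-(finrank ℚ K * s.re)) :=
        norm_weightedNormPow_sub_le h_abs h_lip hs_nonneg ht (fun w => (h_places w).1)
          (fun w => (h_places w).2) h_near
    _ ≤ (T * finrank ℚ K + 4 * B) * (R / t) * t ^ (-(finrank ℚ K * σ)) := by gcongr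
    _ = (T * finrank ℚ K + 4 * B) * R * t ^ p := by
        rw [Real.rpow_sub_one ht.ne']
        ring
    _ ≤ _ := le_add_of_nonneg_right (by positivity)

end WeightedNormPow

section LatticePartition

open Module
open scoped NNReal

lemma lipschitzWith_tent : LipschitzWith 1 tent := by
  refine LipschitzWith.of_le_add fun a b => ?_
  unfold tent
  rw [Real.dist_eq]
  refine max_le (by positivity) ?_
  linarith [le_max_right 0 (1 - |b|), abs_sub_abs_le_abs_sub b a, abs_sub_comm a b]

lemma abs_prod_sub_prod_le {ι : Type*} (s : Finset ι) {a b : ι → ℝ} (ha : ∀ i, 0 ≤ a i ∧ a i ≤ 1)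
    (hb : ∀ i, 0 ≤ b i ∧ b i ≤ 1) : |∏ i ∈ s, a i - ∏ i ∈ s, b i| ≤ ∑ i ∈ s, |a i - b i| := by
  classical
  induction s using Finset.induction_on with
  | empty => simp
  | insert j s hj ih =>
    rw [Finset.prod_insert hj, Finset.prod_insert hj, Finset.sum_insert hj,
      show a j * ∏ i ∈ s, a i - b j * ∏ i ∈ s, b i =
        (a j - b j) * ∏ i ∈ s, a i + b j * (∏ i ∈ s, a i - ∏ i ∈ s, b i) by ring]
    have h_prod_nonneg : 0 ≤ ∏ i ∈ s, a i := Finset.prod_nonneg fun i _ => (ha i).1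
    have h_prod_le : ∏ i ∈ s, a i ≤ 1 :=
      Finset.prod_le_one (fun i _ => (ha i).1) fun i _ => (ha i).2
    refine (abs_add_le _ _).trans (add_le_add ?_ ?_)
    · rw [abs_mul, abs_of_nonneg h_prod_nonneg]
      exact mul_le_of_le_one_right (abs_nonneg _) h_prod_le
    · rw [abs_mul, abs_of_nonneg (hb j).1]
      exact (mul_le_of_le_one_left (abs_nonneg _) (hb j).2).trans ih

lemma tent_add_intCast_eq_zero {t : ℝ} {c : ℤ} (hc : c ∉ ({-⌊t⌋, -⌊t⌋ - 1} : Finset ℤ)) :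
    tent (t + c) = 0 := by
  apply tent_eq_zero
  have h_fract : t + c = Int.fract t + (⌊t⌋ + c : ℤ) := by
    push_cast
    linarith [Int.floor_add_fract t]
  simp only [Finset.mem_insert, Finset.mem_singleton, not_or] at hc
  rw [h_fract, le_abs]
  rcases lt_or_gt_of_ne (show ⌊t⌋ + c ≠ 0 by lia) with h | h
  · have : ((⌊t⌋ + c : ℤ) : ℝ) ≤ -2 := by exact_mod_cast (show ⌊t⌋ + c ≤ -2 by lia)
    exact Or.inr (by linarith [Int.fract_lt_one t])
  · have : (1 : ℝ) ≤ ((⌊t⌋ + c : ℤ) : ℝ) := by exact_mod_cast h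
    exact Or.inl (by linarith [Int.fract_nonneg t])

lemma sum_tent_add_intCast (t : ℝ) : ∑ c ∈ {-⌊t⌋, -⌊t⌋ - 1}, tent (t + (c : ℤ)) = 1 := by
  rw [Finset.sum_pair (by lia)]
  push_cast
  have h_floor := Int.floor_le t
  have h_lt := Int.lt_floor_add_one t
  rw [tent, tent, abs_of_nonneg (by linarith), abs_of_nonpos (by linarith),
    max_eq_right (by linarith), max_eq_right (by linarith)]
  ring

lemma hasSum_prod_tent {ι : Type*} [Fintype ι] (x : ι → ℝ) :
    HasSum (fun c : ι → ℤ => ∏ i, tent (x i + c i)) 1 := by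
  classical
  have h_sum : ∑ c ∈ Fintype.piFinset fun i => {-⌊x i⌋, -⌊x i⌋ - 1}, ∏ i, tent (x i + c i) = 1 := by
    rw [← Finset.prod_univ_sum (fun i => {-⌊x i⌋, -⌊x i⌋ - 1}) fun i c => tent (x i + (c : ℤ))]
    exact Finset.prod_eq_one fun i _ => sum_tent_add_intCast _
  rw [← h_sum]
  refine hasSum_sum_of_ne_finset_zero fun c hc => ?_
  obtain ⟨i, hi⟩ := not_forall.mp (Fintype.mem_piFinset.not.mp hc)
  exact Finset.prod_eq_zero (Finset.mem_univ i) (tent_add_intCast_eq_zero hi)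

variable {E : Type*} [NormedAddCommGroup E] [NormedSpace ℝ E]

/-- A smoothed fundamental domain for the lattice `L`: a Lipschitz function with bounded support and
values in `[0, 1]` whose translates by `L` add up to `1`. -/
structure IsLatticePartition (L : Submodule ℤ E) (φ : E → ℝ) : Prop where
  nonneg : ∀ a, 0 ≤ φ a
  abs_le_one : ∀ a, |φ a| ≤ 1
  bounded_support : ∃ A, ∀ a, φ a ≠ 0 → ‖a‖ ≤ A
  lipschitz : ∃ B, LipschitzWith B φ
  hasSum_add : ∀ x, HasSum (fun u : L => φ (u + x)) 1

theorem exists_isLatticePartition [FiniteDimensional ℝ E] (L : Submodule ℤ E) [DiscreteTopology L]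
    [IsZLattice ℝ L] : ∃ φ, IsLatticePartition L φ := by
  have : Module.Finite ℤ L := ZLattice.module_finite ℝ L
  have : Module.Free ℤ L := ZLattice.module_free ℝ L
  let b := finBasis ℤ L
  let b' := b.ofZLatticeBasis ℝ L
  let coord : E →L[ℝ] (Fin (finrank ℤ L) → ℝ) := b'.equivFun.toLinearMap.toContinuousLinearMap
  have h_nonneg (a : E) : 0 ≤ ∏ i, tent (coord a i) := Finset.prod_nonneg fun i _ => tent_nonneg _
  refine ⟨fun a => ∏ i, tent (coord a i), h_nonneg, fun a => ?_, ⟨∑ i, ‖b' i‖, fun a ha => ?_⟩,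
    ⟨finrank ℤ L * ‖coord‖₊, LipschitzWith.of_dist_le_mul fun x y => ?_⟩, fun x => ?_⟩
  · rw [abs_of_nonneg (h_nonneg a)]
    exact Finset.prod_le_one (fun i _ => tent_nonneg _) fun i _ => tent_le_one _
  · rw [← b'.sum_repr a]
    refine norm_sum_le_of_le _ fun i _ => ?_
    rw [norm_smul]
    refine mul_le_of_le_one_left (norm_nonneg _) (le_of_not_gt fun h => ?_)
    exact Finset.prod_ne_zero_iff.mp ha i (Finset.mem_univ i) (tent_eq_zero h.le)
  · have h_range (z : ℝ) : 0 ≤ tent z ∧ tent z ≤ 1 := ⟨tent_nonneg z, tent_le_one z⟩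
    have h_coord (i : Fin (finrank ℤ L)) :
        |tent (coord x i) - tent (coord y i)| ≤ ‖coord‖ * dist x y :=
      calc _ ≤ |coord x i - coord y i| := by
            simpa [Real.dist_eq] using lipschitzWith_tent.dist_le_mul _ _
        _ ≤ dist (coord x) (coord y) := dist_le_pi_dist (coord x) (coord y) i
        _ ≤ ‖coord‖ * dist x y := coord.lipschitz.dist_le_mul x y
    calc _ ≤ ∑ i, |tent (coord x i) - tent (coord y i)| :=
          abs_prod_sub_prod_le _ (fun i => h_range _) fun i => h_range _
      _ ≤ ∑ _i : Fin (finrank ℤ L), ‖coord‖ * dist x y := Finset.sum_le_sum fun i _ => h_coord i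
      _ = _ := by simp [mul_assoc]
  · refine (b.equivFun.toEquiv.hasSum_iff.mpr (hasSum_prod_tent (coord x))).congr_fun fun u => ?_
    refine Finset.prod_congr rfl fun i _ => congrArg tent ?_
    rw [map_add, Pi.add_apply, add_comm]
    exact congrArg (coord x i + ·) (b.ofZLatticeBasis_repr_apply ℝ L u i)

end LatticePartition

section ClassZeta

open Module NumberField NumberField.InfinitePlace NumberField.mixedEmbedding NumberField.Units
open NumberField.Units.dirichletUnitTheorem NumberField.mixedEmbedding.fundamentalCone
open scoped nonZeroDivisors Classical

lemma hasSum_comp_quotientGroupMk {G : Type*} [Group G] (H : Subgroup G) [Finite H] {f : G ⧸ H → ℝ}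
    {a : ℝ} (hf : HasSum f a) : HasSum (fun g : G => f (g : G ⧸ H)) (Nat.card H * a) := by
  have := Fintype.ofFinite H
  let e : G ≃ H × (G ⧸ H) := (Equiv.Set.univ G).symm.trans <|
    (QuotientGroup.preimageMkEquivSubgroupProdSet H Set.univ).trans <|
      (Equiv.refl H).prodCongr (Equiv.Set.univ (G ⧸ H))
  have h_card : HasSum (fun _ : H => (1 : ℝ)) (Nat.card H) := by
    simpa using hasSum_fintype fun _ : H => (1 : ℝ)
  have h_prod := h_card.mul hf (summable_mul_of_summable_norm h_card.summable.norm hf.summable.norm)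
  refine (e.hasSum_iff.mpr h_prod).congr_fun fun g => ?_
  exact (one_mul _).symm

variable {K : Type*} [Field K] [NumberField K]

lemma hasSum_unit_smul {φ : logSpace K → ℝ} (hφ : IsLatticePartition (unitLattice K) φ)
    {x : mixedSpace K} (hx : mixedEmbedding.norm x ≠ 0) :
    HasSum (fun u : (𝓞 K)ˣ => φ (logMap (u • x))) (torsionOrder K) := by
  have h_quot : HasSum (fun c : (𝓞 K)ˣ ⧸ torsion K =>
      φ ((logEmbeddingEquiv K (Additive.ofMul c) : logSpace K) + logMap x)) 1 :=
    ((Additive.ofMul.trans (logEmbeddingEquiv K).toEquiv).hasSum_iff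
      (f := fun u : unitLattice K => φ (u + logMap x))).mpr (hφ.hasSum_add (logMap x))
  have h_sum := hasSum_comp_quotientGroupMk (torsion K) h_quot
  rw [mul_one] at h_sum
  refine h_sum.congr_fun fun u => ?_
  rw [logEmbeddingEquiv_apply, logMap_unit_smul u hx]

lemma mem_idealLattice_mk0 {J : (Ideal (𝓞 K))⁰} {x : mixedSpace K} :
    x ∈ idealLattice K (FractionalIdeal.mk0 K J) ↔
      ∃ z ∈ (J : Ideal (𝓞 K)), mixedEmbedding K (z : K) = x := by
  rw [mem_idealLattice, FractionalIdeal.coe_mk0]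
  constructor
  · rintro ⟨y, hy, rfl⟩
    obtain ⟨z, hz, rfl⟩ := (FractionalIdeal.mem_coeIdeal _).mp hy
    exact ⟨z, hz, rfl⟩
  · rintro ⟨z, hz, rfl⟩
    exact ⟨z, (FractionalIdeal.mem_coeIdeal _).mpr ⟨z, hz, rfl⟩, rfl⟩

lemma norm_mixedEmbedding_eq_absNorm (z : 𝓞 K) :
    mixedEmbedding.norm (mixedEmbedding K (z : K)) = Ideal.absNorm (Ideal.span {z}) := by
  rw [mixedEmbedding.norm_eq_norm, ← Algebra.coe_norm_int, ← Int.cast_abs, Rat.cast_intCast,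
    Int.abs_eq_natAbs, ← Ideal.absNorm_span_singleton, Int.cast_natCast]

lemma eq_zero_or_one_le_norm {J : (Ideal (𝓞 K))⁰} {x : mixedSpace K}
    (hx : x ∈ idealLattice K (FractionalIdeal.mk0 K J)) : x = 0 ∨ 1 ≤ mixedEmbedding.norm x := by
  obtain ⟨z, -, rfl⟩ := mem_idealLattice_mk0.mp hx
  rcases eq_or_ne z 0 with rfl | hz
  · simp
  · right
    rw [norm_mixedEmbedding_eq_absNorm]
    exact Nat.one_le_cast.mpr (Nat.one_le_iff_ne_zero.mpr
      (Ideal.absNorm_ne_zero_iff_mem_nonZeroDivisors.mpr (by simpa using hz)))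

lemma exists_differentiableOn_idealLattice {φ : logSpace K → ℝ}
    (hφ : IsLatticePartition (unitLattice K) φ) (J : (Ideal (𝓞 K))⁰) {k : ℕ} (hk : k ≠ 0) :
    (∀ s : ℂ, 1 < s.re → Summable fun x : idealLattice K (FractionalIdeal.mk0 K J) =>
      weightedNormPow φ s x) ∧
    ∃ D : ℂ → ℂ, DifferentiableOn ℂ D {s | 1 - 1 / (finrank ℚ K : ℝ) < s.re} ∧
      ∀ s : ℂ, 1 < s.re → (1 - (k : ℂ) ^ (finrank ℚ K * (1 - s))) *
        ∑' x : idealLattice K (FractionalIdeal.mk0 K J), weightedNormPow φ s x = D s := by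
  let L := idealLattice K (FractionalIdeal.mk0 K J)
  obtain ⟨A, hA⟩ := hφ.bounded_support
  obtain ⟨B, hB⟩ := hφ.lipschitz
  have h_rank : finrank ℤ L = finrank ℚ K := by rw [ZLattice.rank ℝ L, mixedEmbedding.finrank]
  have h_summable (s : ℂ) (hs : 1 < s.re) : Summable fun x : L => weightedNormPow φ s x := by
    obtain ⟨C, hC⟩ := exists_norm_weightedNormPow_le hφ.abs_le_one hA (zero_lt_one.trans hs).le
    have h_exp : -(finrank ℚ K * s.re) < -(finrank ℤ L : ℝ) := by
      rw [h_rank]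
      exact neg_lt_neg (lt_mul_of_one_lt_right (Nat.cast_pos.mpr finrank_pos) hs)
    exact .of_norm_bounded ((summable_one_add_norm_rpow L h_exp).mul_left C)
      fun x => hC x (eq_zero_or_one_le_norm x.2)
  refine ⟨h_summable, ?_⟩
  rw [← h_rank]
  refine exists_differentiableOn_dilation_mul_tsum (h_rank ▸ finrank_pos)
    (fun x => (differentiable_weightedNormPow _).differentiableOn) hk (fun s x => ?_) h_summable
    fun σ T R hσ => ?_
  · rw [h_rank, Submodule.coe_smul_of_tower, ← Nat.cast_smul_eq_nsmul ℝ,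
      weightedNormPow_smul (by positivity), Complex.ofReal_natCast]
  · obtain ⟨C, hC⟩ := exists_norm_weightedNormPow_add_sub_le hφ.abs_le_one hA hB hσ T R
    refine ⟨C, fun s hs hsT x v hv => ?_⟩
    rw [h_rank]
    exact hC s hs hsT x v (eq_zero_or_one_le_norm x.2) (eq_zero_or_one_le_norm (x + v).2) hv

lemma hasSum_of_hasSum_fibers {X ι E : Type*} [Fintype ι] [AddCommMonoid E] [TopologicalSpace E]
    [ContinuousAdd E] {π : X → ι} {f : X → E} {a : ι → E}
    (h : ∀ i, HasSum (fun x : {x // π x = i} => f x) (a i)) : HasSum f (∑ i, a i) := by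
  classical
  refine (hasSum_sum (s := Finset.univ) fun i _ =>
    (hasSum_subtype_iff_indicator (f := f) (s := {x | π x = i})).mp (h i)).congr_fun fun x => ?_
  rw [Finset.sum_eq_single (π x)]
  · simp
  · exact fun i _ hi => Set.indicator_of_notMem (fun hx => hi hx.symm) _
  · simp

lemma exists_span_singleton_eq_mul {C : ClassGroup (𝓞 K)} {I J : (Ideal (𝓞 K))⁰}
    (hI : ClassGroup.mk0 I = C) (hJ : ClassGroup.mk0 J = C⁻¹) :
    ∃ g : 𝓞 K, Ideal.span {g} = (J : Ideal (𝓞 K)) * I := by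
  have h_one : ClassGroup.mk0 (J * I) = 1 := by rw [map_mul, hI, hJ, inv_mul_cancel]
  obtain ⟨g, hg⟩ := ((ClassGroup.mk0_eq_one_iff (J * I).2).mp h_one).principal
  exact ⟨g, hg.symm⟩

lemma exists_span_singleton_eq_mul_of_mem {C : ClassGroup (𝓞 K)} {J : (Ideal (𝓞 K))⁰}
    (hJ : ClassGroup.mk0 J = C⁻¹) {z : 𝓞 K} (hz : z ∈ (J : Ideal (𝓞 K))) (hz₀ : z ≠ 0) :
    ∃ I : (Ideal (𝓞 K))⁰, ClassGroup.mk0 I = C ∧ Ideal.span {z} = (J : Ideal (𝓞 K)) * I := by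
  obtain ⟨I, hI⟩ := Ideal.dvd_span_singleton.mpr hz
  have hI₀ : I ≠ 0 := fun h => hz₀ (by simpa [h] using hI)
  let I' : (Ideal (𝓞 K))⁰ := ⟨I, mem_nonZeroDivisors_of_ne_zero hI₀⟩
  have h_one : ClassGroup.mk0 (J * I') = 1 :=
    (ClassGroup.mk0_eq_one_iff (J * I').2).mpr ⟨⟨z, hI.symm⟩⟩
  rw [map_mul, hJ] at h_one
  exact ⟨I', (inv_mul_eq_one.mp h_one).symm, hI⟩

lemma exists_generators_of_mk0_eq {C : ClassGroup (𝓞 K)} {J : (Ideal (𝓞 K))⁰}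
    (hJ : ClassGroup.mk0 J = C⁻¹) :
    ∃ g : {I : (Ideal (𝓞 K))⁰ // ClassGroup.mk0 I = C} → 𝓞 K,
      (∀ I, Ideal.span {g I} = (J : Ideal (𝓞 K)) * I.1) ∧
      (fun p : _ × (𝓞 K)ˣ => p.2 * g p.1).Injective ∧
      Set.range (fun p : _ × (𝓞 K)ˣ => p.2 * g p.1) = {z | z ∈ (J : Ideal (𝓞 K)) ∧ z ≠ 0} := by
  choose g hg using fun I : {I : (Ideal (𝓞 K))⁰ // ClassGroup.mk0 I = C} =>
    exists_span_singleton_eq_mul I.2 hJ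
  have hJ₀ : (J : Ideal (𝓞 K)) ≠ 0 := nonZeroDivisors.coe_ne_zero J
  have hg₀ (I) : g I ≠ 0 := fun h => nonZeroDivisors.coe_ne_zero (J * I.1) (by
    simpa [h] using (hg I).symm)
  have hg_span (I) (u : (𝓞 K)ˣ) : Ideal.span {u * g I} = (J : Ideal (𝓞 K)) * I.1 := by
    rw [← hg, Ideal.span_singleton_mul_left_unit u.isUnit]
  refine ⟨g, hg, ?_, Set.Subset.antisymm ?_ ?_⟩
  · rintro ⟨I, u⟩ ⟨I', u'⟩ h
    have h_ideal : (J : Ideal (𝓞 K)) * I.1 = J * I'.1 := by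
      rw [← hg_span I u, ← hg_span I' u']
      exact congrArg (fun z => Ideal.span {z}) h
    obtain rfl : I = I' := Subtype.ext (Subtype.ext (mul_left_cancel₀ hJ₀ h_ideal))
    exact Prod.ext rfl (Units.ext (mul_right_cancel₀ (hg₀ I) h))
  · rintro _ ⟨⟨I, u⟩, rfl⟩
    refine ⟨Ideal.mul_le_right (I := I.1.1) ?_, mul_ne_zero u.ne_zero (hg₀ I)⟩
    rw [mul_comm, ← hg_span I u]
    exact Ideal.mem_span_singleton_self _
  · rintro z ⟨hz, hz₀⟩
    obtain ⟨I, hI, h_span⟩ := exists_span_singleton_eq_mul_of_mem hJ hz hz₀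
    obtain ⟨u, hu⟩ : Associated (g ⟨I, hI⟩) z := by
      rw [← Ideal.span_singleton_eq_span_singleton, hg, h_span]
    exact ⟨(⟨I, hI⟩, u), by rw [← hu, mul_comm]⟩

lemma hasSum_class_absNorm_cpow {φ : logSpace K → ℝ} (hφ : IsLatticePartition (unitLattice K) φ)
    {C : ClassGroup (𝓞 K)} {J : (Ideal (𝓞 K))⁰} (hJ : ClassGroup.mk0 J = C⁻¹) {s : ℂ}
    (hs : Summable fun x : idealLattice K (FractionalIdeal.mk0 K J) => weightedNormPow φ s x) :
    HasSum (fun I : {I : (Ideal (𝓞 K))⁰ // ClassGroup.mk0 I = C} =>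
        torsionOrder K * (Ideal.absNorm (J : Ideal (𝓞 K)) : ℂ) ^ (-s) *
          (Ideal.absNorm (I.1 : Ideal (𝓞 K)) : ℂ) ^ (-s))
      (∑' x : idealLattice K (FractionalIdeal.mk0 K J), weightedNormPow φ s x) := by
  obtain ⟨g, hg_span, hg_inj, hg_range⟩ := exists_generators_of_mk0_eq hJ
  have hg_mem (p : _ × (𝓞 K)ˣ) : p.2 * g p.1 ∈ (J : Ideal (𝓞 K)) ∧ p.2 * g p.1 ≠ 0 :=
    hg_range.subset (Set.mem_range_self p)
  let e (p : _ × (𝓞 K)ˣ) : idealLattice K (FractionalIdeal.mk0 K J) :=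
    ⟨mixedEmbedding K ((p.2 * g p.1 : 𝓞 K) : K), mem_idealLattice_mk0.mpr ⟨_, (hg_mem p).1, rfl⟩⟩
  have he_inj : e.Injective := fun p p' h =>
    hg_inj (RingOfIntegers.coe_injective (mixedEmbedding_injective K (congrArg Subtype.val h)))
  have he_zero : ∀ x ∉ Set.range e, weightedNormPow φ s (x : mixedSpace K) = 0 := by
    intro x hx
    obtain ⟨z, hz, hzx⟩ := mem_idealLattice_mk0.mp x.2
    rcases eq_or_ne z 0 with rfl | hz₀
    · simp [← hzx]
    · obtain ⟨p, hp⟩ := hg_range.superset ⟨hz, hz₀⟩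
      exact absurd ⟨p, Subtype.ext (by rw [← hzx, ← hp])⟩ hx
  have h_sum := (he_inj.hasSum_iff (f := fun x : idealLattice K (FractionalIdeal.mk0 K J) =>
    weightedNormPow φ s x) he_zero).mpr hs.hasSum
  refine h_sum.prod_fiberwise fun I => ?_
  have h_norm : mixedEmbedding.norm (mixedEmbedding K (g I : K)) =
      (Ideal.absNorm (J : Ideal (𝓞 K)) : ℝ) * Ideal.absNorm (I.1 : Ideal (𝓞 K)) := by
    rw [norm_mixedEmbedding_eq_absNorm, hg_span, map_mul, Nat.cast_mul]
  have h_norm_ne : mixedEmbedding.norm (mixedEmbedding K (g I : K)) ≠ 0 := by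
    simpa [mixedEmbedding.norm_eq_norm] using (mul_ne_zero_iff.mp (hg_mem (I, 1)).2).2
  have h_units := (Complex.hasSum_ofReal.mpr (hasSum_unit_smul hφ h_norm_ne)).mul_right
    ((Ideal.absNorm (J : Ideal (𝓞 K)) : ℂ) ^ (-s) * (Ideal.absNorm (I.1 : Ideal (𝓞 K)) : ℂ) ^ (-s))
  rw [← mul_assoc, Complex.ofReal_natCast] at h_units
  refine h_units.congr_fun fun u => ?_
  have h_smul : (e (I, u) : mixedSpace K) = u • mixedEmbedding K (g I : K) := by
    simp [e, unitSMul_smul]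
  simp only [Function.comp_apply, h_smul]
  rw [weightedNormPow_of_norm_ne_zero (by rwa [norm_unit_smul]), norm_unit_smul, h_norm,
    Complex.ofReal_mul, Complex.mul_cpow_ofReal_nonneg (by positivity) (by positivity),
    Complex.ofReal_natCast, Complex.ofReal_natCast]

variable (K) in
theorem exists_differentiableOn_tsum_absNorm_cpow {k : ℕ} (hk : k ≠ 0) :
    (∀ s : ℂ, 1 < s.re →
      Summable fun I : (Ideal (𝓞 K))⁰ => (Ideal.absNorm (I : Ideal (𝓞 K)) : ℂ) ^ (-s)) ∧
    ∃ D : ℂ → ℂ, DifferentiableOn ℂ D {s | 1 - 1 / (finrank ℚ K : ℝ) < s.re} ∧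
      ∀ s : ℂ, 1 < s.re → (1 - (k : ℂ) ^ (finrank ℚ K * (1 - s))) *
        ∑' I : (Ideal (𝓞 K))⁰, (Ideal.absNorm (I : Ideal (𝓞 K)) : ℂ) ^ (-s) = D s := by
  obtain ⟨φ, hφ⟩ := exists_isLatticePartition (unitLattice K)
  choose J hJ using fun C : ClassGroup (𝓞 K) => ClassGroup.mk0_surjective C⁻¹
  choose h_summable D hD h_eq using fun C => exists_differentiableOn_idealLattice hφ (J C) hk
  have hJ₀ (C) : (Ideal.absNorm (J C : Ideal (𝓞 K)) : ℂ) ≠ 0 :=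
    Nat.cast_ne_zero.mpr (Ideal.absNorm_ne_zero_of_nonZeroDivisors (J C))
  let coeff (C : ClassGroup (𝓞 K)) (s : ℂ) : ℂ :=
    (torsionOrder K : ℂ)⁻¹ * (Ideal.absNorm (J C : Ideal (𝓞 K)) : ℂ) ^ s
  have h_class (s : ℂ) (hs : 1 < s.re) (C : ClassGroup (𝓞 K)) :
      HasSum (fun I : {I : (Ideal (𝓞 K))⁰ // ClassGroup.mk0 I = C} =>
        (Ideal.absNorm (I.1 : Ideal (𝓞 K)) : ℂ) ^ (-s)) (coeff C s *
          ∑' x : idealLattice K (FractionalIdeal.mk0 K (J C)), weightedNormPow φ s x) := by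
    refine ((hasSum_class_absNorm_cpow hφ (hJ C) (h_summable C s hs)).mul_left
      (coeff C s)).congr_fun fun I => ?_
    have h_torsion : (torsionOrder K : ℂ) ≠ 0 := Nat.cast_ne_zero.mpr (torsionOrder_ne_zero K)
    have h_pow : (Ideal.absNorm (J C : Ideal (𝓞 K)) : ℂ) ^ s ≠ 0 :=
      Complex.cpow_ne_zero_iff.mpr (Or.inl (hJ₀ C))
    simp only [coeff, Complex.cpow_neg (Ideal.absNorm (J C : Ideal (𝓞 K)) : ℂ)]
    field_simp
  have h_sum (s : ℂ) (hs : 1 < s.re) :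
      HasSum (fun I : (Ideal (𝓞 K))⁰ => (Ideal.absNorm (I : Ideal (𝓞 K)) : ℂ) ^ (-s)) (∑ C,
        coeff C s * ∑' x : idealLattice K (FractionalIdeal.mk0 K (J C)), weightedNormPow φ s x) :=
    hasSum_of_hasSum_fibers (h_class s hs)
  refine ⟨fun s hs => (h_sum s hs).summable, fun s => ∑ C, coeff C s * D C s, ?_, fun s hs => ?_⟩
  · refine DifferentiableOn.fun_sum fun C _ => DifferentiableOn.mul ?_ (hD C)
    exact ((differentiable_id.const_cpow (Or.inl (hJ₀ C))).const_mul _).differentiableOn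
  · rw [(h_sum s hs).tsum_eq, Finset.mul_sum]
    refine Finset.sum_congr rfl fun C _ => ?_
    rw [← h_eq C s hs]
    ring

end ClassZeta

section DedekindZetaContinuation

open Filter Topology Module NumberField
open scoped nonZeroDivisors

lemma hasSum_lseriesTerm_of_fiberwise {X : Type*} {N : X → ℕ} [∀ n, Finite {x // N x = n}]
    (hN : ∀ x, N x ≠ 0) {c : X → ℂ} {s S : ℂ} (h : HasSum (fun x => c x * (N x : ℂ) ^ (-s)) S) :
    HasSum (LSeries.term (fun n => ∑' x : {x // N x = n}, c x) s) S := by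
  rw [← (Equiv.sigmaFiberEquiv N).hasSum_iff] at h
  refine h.sigma fun n => ?_
  rcases eq_or_ne n 0 with rfl | hn
  · have : IsEmpty {x // N x = 0} := ⟨fun x => hN x.1 x.2⟩
    exact hasSum_empty
  · rw [LSeries.term_of_ne_zero hn, div_eq_mul_inv, ← Complex.cpow_neg]
    refine (Summable.of_finite.hasSum.mul_right ((n : ℂ) ^ (-s))).congr_fun fun x => ?_
    simp [Equiv.sigmaFiberEquiv, x.2]

lemma eq_zero_of_mul_log_three_eq_mul_log_two {a b : ℤ}
    (h : (a : ℝ) * Real.log 3 = b * Real.log 2) : a = 0 := by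
  have h_abs := congrArg abs h
  rw [abs_mul, abs_mul, abs_of_pos (Real.log_pos (by norm_num : (1 : ℝ) < 3)),
    abs_of_pos (Real.log_pos one_lt_two), ← Int.cast_abs, ← Int.cast_abs, ← Nat.cast_natAbs,
    ← Nat.cast_natAbs, ← Real.log_pow, ← Real.log_pow] at h_abs
  have h_pow : 3 ^ a.natAbs = 2 ^ b.natAbs := by
    exact_mod_cast Real.log_injOn_pos (by simp) (by simp) h_abs
  have h_coprime : Nat.Coprime (3 ^ a.natAbs) (2 ^ b.natAbs) := Nat.Coprime.pow _ _ (by norm_num)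
  rw [← h_pow, Nat.coprime_self] at h_coprime
  simpa using h_coprime

lemma eq_zero_of_two_cpow_eq_one_of_three_cpow_eq_one {w : ℂ} (h₂ : (2 : ℂ) ^ w = 1)
    (h₃ : (3 : ℂ) ^ w = 1) : w = 0 := by
  rw [Complex.cpow_def_of_ne_zero (by norm_num), Complex.exp_eq_one_iff] at h₂ h₃
  obtain ⟨a, ha⟩ := h₂
  obtain ⟨b, hb⟩ := h₃
  have h_log₂ : Complex.log 2 = Real.log 2 := by exact_mod_cast (Complex.natCast_log (n := 2)).symm
  have h_log₃ : Complex.log 3 = Real.log 3 := by exact_mod_cast (Complex.natCast_log (n := 3)).symm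
  have h_rel : (a : ℂ) * Complex.log 3 = b * Complex.log 2 :=
    mul_right_cancel₀ Complex.two_pi_I_ne_zero
      (by linear_combination Complex.log 2 * hb - Complex.log 3 * ha)
  obtain rfl : a = 0 := by
    rw [h_log₂, h_log₃] at h_rel
    exact eq_zero_of_mul_log_three_eq_mul_log_two (b := b) (by exact_mod_cast h_rel)
  have h_log_ne : Complex.log 2 ≠ 0 := by
    rw [h_log₂]
    exact_mod_cast (Real.log_pos one_lt_two).ne'
  simpa only [Int.cast_zero, zero_mul, mul_eq_zero, h_log_ne, false_or] using ha

lemma exists_differentiableOn_mul_eq {Ω : Set ℂ} (hΩ : IsOpen Ω) {D₁ D₂ v₁ v₂ : ℂ → ℂ}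
    (hD₁ : DifferentiableOn ℂ D₁ Ω) (hD₂ : DifferentiableOn ℂ D₂ Ω)
    (hv₁ : DifferentiableOn ℂ v₁ Ω) (hv₂ : DifferentiableOn ℂ v₂ Ω)
    (h_eq : Set.EqOn (D₁ * v₂) (D₂ * v₁) Ω) (h_ne : ∀ s ∈ Ω, v₁ s = 0 → v₂ s ≠ 0) :
    ∃ H : ℂ → ℂ, DifferentiableOn ℂ H Ω ∧ Set.EqOn (H * v₁) D₁ Ω ∧ Set.EqOn (H * v₂) D₂ Ω := by
  let H (s : ℂ) : ℂ := if v₁ s = 0 then D₂ s / v₂ s else D₁ s / v₁ s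
  have h_left {s : ℂ} (hs : s ∈ Ω) : H s * v₁ s = D₁ s := by
    by_cases h₁ : v₁ s = 0
    · have := h_eq hs
      simp only [Pi.mul_apply, h₁, mul_zero, mul_eq_zero, h_ne s hs h₁, or_false] at this
      simp [h₁, this]
    · simp [H, h₁]
  have h_right {s : ℂ} (hs : s ∈ Ω) : H s * v₂ s = D₂ s := by
    by_cases h₁ : v₁ s = 0
    · simp [H, h₁, h_ne s hs h₁]
    · rw [← mul_left_inj' h₁, mul_right_comm, h_left hs]
      exact h_eq hs
  refine ⟨H, fun s hs => DifferentiableAt.differentiableWithinAt ?_, fun _ => h_left,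
    fun _ => h_right⟩
  have hs_mem := hΩ.mem_nhds hs
  by_cases h₁ : v₁ s = 0
  · have h₂ := h_ne s hs h₁
    refine ((hD₂.differentiableAt hs_mem).div (hv₂.differentiableAt hs_mem)
      h₂).congr_of_eventuallyEq ?_
    filter_upwards [hs_mem, (hv₂.differentiableAt hs_mem).continuousAt.eventually_ne h₂]
      with t ht ht₂ using eq_div_of_mul_eq ht₂ (h_right ht)
  · refine ((hD₁.differentiableAt hs_mem).div (hv₁.differentiableAt hs_mem)
      h₁).congr_of_eventuallyEq ?_
    filter_upwards [hs_mem, (hv₁.differentiableAt hs_mem).continuousAt.eventually_ne h₁]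
      with t ht ht₁ using eq_div_of_mul_eq ht₁ (h_left ht)

/-- The entire function `(1 - k ^ (n (1 - s))) / (s - 1)`, i.e. the factor `1 - k ^ (n (1 - s))`
created by a dilation by `k` in dimension `n` with its zero at `s = 1` removed. -/
noncomputable def dilationFactor (n k : ℕ) : ℂ → ℂ :=
  dslope (fun s => 1 - (k : ℂ) ^ (n * (1 - s))) 1

lemma hasDerivAt_one_sub_cpow (n : ℕ) {k : ℕ} (hk : k ≠ 0) (s : ℂ) :
    HasDerivAt (fun s : ℂ => 1 - (k : ℂ) ^ (n * (1 - s)))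
      (n * Complex.log k * (k : ℂ) ^ (n * (1 - s))) s := by
  have h_inner : HasDerivAt (fun s : ℂ => n * (1 - s)) (n * (-1)) s :=
    ((hasDerivAt_id s).const_sub 1).const_mul _
  refine ((h_inner.const_cpow (Or.inl (Nat.cast_ne_zero.mpr hk))).const_sub 1).congr_deriv ?_
  ring

lemma differentiable_dilationFactor (n : ℕ) {k : ℕ} (hk : k ≠ 0) :
    Differentiable ℂ (dilationFactor n k) := by
  rw [← differentiableOn_univ, dilationFactor, Complex.differentiableOn_dslope univ_mem,
    differentiableOn_univ]
  exact fun s => (hasDerivAt_one_sub_cpow n hk s).differentiableAt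

lemma sub_one_mul_dilationFactor (n k : ℕ) (s : ℂ) :
    (s - 1) * dilationFactor n k s = 1 - (k : ℂ) ^ (n * (1 - s)) := by
  simpa [dilationFactor] using sub_smul_dslope (fun s : ℂ => 1 - (k : ℂ) ^ (n * (1 - s))) 1 s

lemma dilationFactor_one_ne_zero {n k : ℕ} (hn : n ≠ 0) (hk : 1 < k) :
    dilationFactor n k 1 ≠ 0 := by
  have h_log : (Real.log k : ℂ) ≠ 0 :=
    Complex.ofReal_ne_zero.mpr (Real.log_pos (Nat.one_lt_cast.mpr hk)).ne'
  rw [dilationFactor, dslope_same, (hasDerivAt_one_sub_cpow n (by lia) 1).deriv,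
    ← Complex.natCast_log, sub_self, mul_zero, Complex.cpow_zero, mul_one]
  exact mul_ne_zero (Nat.cast_ne_zero.mpr hn) h_log

lemma dilationFactor_three_ne_zero {n : ℕ} (hn : n ≠ 0) {s : ℂ} (h₂ : dilationFactor n 2 s = 0) :
    dilationFactor n 3 s ≠ 0 := by
  intro h₃
  have h_two := sub_one_mul_dilationFactor n 2 s
  have h_three := sub_one_mul_dilationFactor n 3 s
  rw [h₂, mul_zero, eq_comm, sub_eq_zero, eq_comm] at h_two
  rw [h₃, mul_zero, eq_comm, sub_eq_zero, eq_comm] at h_three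
  have h_zero := eq_zero_of_two_cpow_eq_one_of_three_cpow_eq_one
    (by exact_mod_cast h_two) (by exact_mod_cast h_three)
  obtain rfl : 1 = s := by simpa [hn, sub_eq_zero] using h_zero
  exact dilationFactor_one_ne_zero hn one_lt_two h₂

variable (K : Type*) [Field K] [NumberField K]

instance finite_nonZeroDivisors_absNorm_eq (n : ℕ) :
    Finite {I : (Ideal (𝓞 K))⁰ // Ideal.absNorm (I : Ideal (𝓞 K)) = n} :=
  ((Ideal.finite_setOfPred_absNorm_eq (S := 𝓞 K) n).preimage
    Subtype.val_injective.injOn).to_subtype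

lemma tsum_one_absNorm_eq {n : ℕ} (hn : n ≠ 0) :
    ∑' _ : {I : (Ideal (𝓞 K))⁰ // Ideal.absNorm (I : Ideal (𝓞 K)) = n}, (1 : ℂ) =
      Nat.card {I : Ideal (𝓞 K) // Ideal.absNorm I = n} := by
  have := Fintype.ofFinite {I : (Ideal (𝓞 K))⁰ // Ideal.absNorm (I : Ideal (𝓞 K)) = n}
  rw [tsum_fintype, Finset.sum_const, nsmul_one, Finset.card_univ, ← Nat.card_eq_fintype_card]
  refine congrArg _ (Nat.card_congr ⟨fun I => ⟨I.1, I.2⟩, fun I => ⟨⟨I.1, ?_⟩, I.2⟩,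
    fun _ => rfl, fun _ => rfl⟩)
  refine mem_nonZeroDivisors_of_ne_zero fun h => hn ?_
  rw [← I.2, h, Ideal.zero_eq_bot, Ideal.absNorm_bot]

variable {K} in
lemma summable_absNorm_cpow {s : ℂ} (hs : 1 < s.re) :
    Summable fun I : (Ideal (𝓞 K))⁰ => (Ideal.absNorm (I : Ideal (𝓞 K)) : ℂ) ^ (-s) :=
  (exists_differentiableOn_tsum_absNorm_cpow K one_ne_zero).1 s hs

lemma hasSum_lseriesTerm_card_absNorm {s : ℂ} (hs : 1 < s.re) :
    HasSum (LSeries.term (fun n => Nat.card {I : Ideal (𝓞 K) // Ideal.absNorm I = n}) s)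
      (∑' I : (Ideal (𝓞 K))⁰, (Ideal.absNorm (I : Ideal (𝓞 K)) : ℂ) ^ (-s)) := by
  have h_sum := hasSum_lseriesTerm_of_fiberwise (c := fun _ => 1)
    (fun I : (Ideal (𝓞 K))⁰ => Ideal.absNorm_ne_zero_of_nonZeroDivisors I)
    (by simpa using (summable_absNorm_cpow hs).hasSum)
  refine h_sum.congr_fun fun n => ?_
  rcases eq_or_ne n 0 with rfl | hn
  · simp
  · rw [LSeries.term_of_ne_zero hn, LSeries.term_of_ne_zero hn, tsum_one_absNorm_eq K hn]

variable {K} in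
lemma tsum_absNorm_cpow_eq_dedekindZeta {s : ℂ} (hs : 1 < s.re) :
    ∑' I : (Ideal (𝓞 K))⁰, (Ideal.absNorm (I : Ideal (𝓞 K)) : ℂ) ^ (-s) = dedekindZeta K s :=
  (hasSum_lseriesTerm_card_absNorm K hs).tsum_eq.symm

lemma exists_differentiableOn_dilation_mul_dedekindZeta {k : ℕ} (hk : k ≠ 0) :
    ∃ D : ℂ → ℂ, DifferentiableOn ℂ D {s | 1 - 1 / (finrank ℚ K : ℝ) < s.re} ∧
      ∀ s : ℂ, 1 < s.re →
        D s = dilationFactor (finrank ℚ K) k s * ((s - 1) * dedekindZeta K s) := by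
  obtain ⟨-, D, hD, h_eq⟩ := exists_differentiableOn_tsum_absNorm_cpow K hk
  refine ⟨D, hD, fun s hs => ?_⟩
  rw [← h_eq s hs, ← sub_one_mul_dilationFactor, tsum_absNorm_cpow_eq_dedekindZeta hs]
  ring

/- The factors `1 - 2 ^ (n (1 - s))` and `1 - 3 ^ (n (1 - s))` have no common zero but the simple
one at `s = 1`, so dividing the dilation identities for `2` and `3` by them reaches every `s`. -/
theorem exists_differentiableOn_sub_one_mul_dedekindZeta :
    ∃ H : ℂ → ℂ, DifferentiableOn ℂ H {s | 1 - 1 / (finrank ℚ K : ℝ) < s.re} ∧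
      (∀ s : ℂ, 1 < s.re → H s = (s - 1) * dedekindZeta K s) ∧ H 1 ≠ 0 := by
  set Ω : Set ℂ := {s | 1 - 1 / (finrank ℚ K : ℝ) < s.re}
  have hΩ : IsOpen Ω := isOpen_lt continuous_const Complex.continuous_re
  have hn : finrank ℚ K ≠ 0 := finrank_pos.ne'
  have h_mem {s : ℂ} (hs : 1 ≤ s.re) : s ∈ Ω :=
    (sub_lt_self 1 (one_div_pos.mpr (Nat.cast_pos.mpr finrank_pos))).trans_le hs
  obtain ⟨D₂, hD₂, h_eq₂⟩ := exists_differentiableOn_dilation_mul_dedekindZeta K two_ne_zero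
  obtain ⟨D₃, hD₃, h_eq₃⟩ := exists_differentiableOn_dilation_mul_dedekindZeta K three_ne_zero
  have hv₂ := (differentiable_dilationFactor (finrank ℚ K) two_ne_zero).differentiableOn (s := Ω)
  have hv₃ := (differentiable_dilationFactor (finrank ℚ K) three_ne_zero).differentiableOn (s := Ω)
  have h_compat : Set.EqOn (D₂ * dilationFactor (finrank ℚ K) 3)
      (D₃ * dilationFactor (finrank ℚ K) 2) Ω := by
    refine ((hD₂.mul hv₃).analyticOnNhd hΩ).eqOn_of_preconnected_of_eventuallyEq
      ((hD₃.mul hv₂).analyticOnNhd hΩ) (convex_halfSpace_re_gt _).isPreconnected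
      (h_mem (s := 2) (by norm_num)) ?_
    filter_upwards [(isOpen_lt continuous_const Complex.continuous_re).mem_nhds
      (show (2 : ℂ) ∈ {s | 1 < s.re} by norm_num)] with s hs
    simp only [Pi.mul_apply, h_eq₂ s hs, h_eq₃ s hs]
    ring
  obtain ⟨H, hH, hH₂, hH₃⟩ := exists_differentiableOn_mul_eq hΩ hD₂ hD₃ hv₂ hv₃ h_compat
    fun s _ => dilationFactor_three_ne_zero hn
  have h_eq (s : ℂ) (hs : 1 < s.re) : H s = (s - 1) * dedekindZeta K s := by
    by_cases hv : dilationFactor (finrank ℚ K) 2 s = 0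
    · refine mul_right_cancel₀ (dilationFactor_three_ne_zero hn hv)
        ((hH₃ (h_mem hs.le)).trans ?_)
      rw [h_eq₃ s hs, mul_comm]
    · refine mul_right_cancel₀ hv ((hH₂ (h_mem hs.le)).trans ?_)
      rw [h_eq₂ s hs, mul_comm]
  refine ⟨H, hH, h_eq, ?_⟩
  have h_lim : Tendsto (fun s : ℝ => H s) (𝓝[>] 1) (𝓝 (H 1)) :=
    (hH.differentiableAt (hΩ.mem_nhds (h_mem (by simp)))).continuousAt.tendsto.comp
      ((Complex.continuous_ofReal.tendsto' 1 1 (by simp)).mono_left nhdsWithin_le_nhds)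
  have h_residue : H 1 = dedekindZeta_residue K := by
    refine tendsto_nhds_unique h_lim ((tendsto_sub_one_mul_dedekindZeta_nhdsGT K).congr' ?_)
    filter_upwards [self_mem_nhdsWithin] with s hs
    exact (h_eq s (by simpa using hs)).symm
  rw [h_residue]
  exact_mod_cast dedekindZeta_residue_ne_zero K

end DedekindZetaContinuation

section VonMangoldt

open Filter Topology Module NumberField IsDedekindDomain
open scoped nonZeroDivisors

lemma hasSum_dirichlet_convolution {M W : Type*} [CommMonoid M] {ι : W → M}
    (hι : ∀ w, IsLeftRegular (ι w)) {c : W → ℂ} {b χ : M → ℂ} (hχ : ∀ x y, χ (x * y) = χ x * χ y)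
    (hc : Summable fun w => c w * χ (ι w)) (hχ_sum : Summable χ)
    (h : ∀ x, HasSum ({w | ι w ∣ x}.indicator c) (b x)) :
    HasSum (fun x => b x * χ x) ((∑' w, c w * χ (ι w)) * ∑' x, χ x) := by
  have h_prod : HasSum (fun p : W × M => c p.1 * χ (ι p.1) * χ p.2)
      ((∑' w, c w * χ (ι w)) * ∑' x, χ x) := by
    have h_norm := summable_mul_of_summable_norm hc.norm hχ_sum.norm
    exact hc.tsum_mul_tsum hχ_sum h_norm ▸ h_norm.hasSum
  rw [← (Equiv.sigmaFiberEquiv (fun p : W × M => ι p.1 * p.2)).hasSum_iff] at h_prod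
  refine h_prod.sigma fun x => ?_
  let e : {p : W × M // ι p.1 * p.2 = x} → {w | ι w ∣ x} :=
    fun p => ⟨p.1.1, p.1.2, p.2.symm⟩
  have he : e.Bijective := by
    constructor
    · rintro ⟨⟨w, y⟩, hy⟩ ⟨⟨w', y'⟩, hy'⟩ h_eq
      obtain rfl : w = w' := congrArg Subtype.val h_eq
      obtain rfl : y = y' := hι w (hy.trans hy'.symm)
      rfl
    · rintro ⟨w, y, hy⟩
      exact ⟨⟨(w, y), hy.symm⟩, rfl⟩
  refine (((Equiv.ofBijective e he).hasSum_iff.mpr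
    (hasSum_subtype_iff_indicator.mpr (h x))).mul_right (χ x)).congr_fun ?_
  rintro ⟨⟨w, y⟩, rfl⟩
  simp [e, hχ, mul_assoc]

/-- The ideal `P ^ (k + 1)`; as `(P, k)` varies these are all the nontrivial prime powers. -/
def primePowIdeal {R : Type*} [CommRing R] [IsDedekindDomain R] (w : HeightOneSpectrum R × ℕ) :
    (Ideal R)⁰ :=
  ⟨w.1.asIdeal ^ (w.2 + 1), mem_nonZeroDivisors_of_ne_zero (pow_ne_zero _ w.1.ne_bot)⟩

@[simp]
lemma coe_primePowIdeal {R : Type*} [CommRing R] [IsDedekindDomain R]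
    (w : HeightOneSpectrum R × ℕ) : (primePowIdeal w : Ideal R) = w.1.asIdeal ^ (w.2 + 1) := rfl

variable {K : Type*} [Field K] [NumberField K]

lemma eq_of_asIdeal_dvd_asIdeal {P Q : HeightOneSpectrum (𝓞 K)} (h : P.asIdeal ∣ Q.asIdeal) :
    P = Q :=
  HeightOneSpectrum.ext (associated_iff_eq.mp (P.prime.associated_of_dvd Q.prime h))

lemma primePowIdeal_injective : (primePowIdeal (R := 𝓞 K)).Injective := by
  rintro ⟨P, k⟩ ⟨Q, l⟩ h
  have h_pow : P.asIdeal ^ (k + 1) = Q.asIdeal ^ (l + 1) := congrArg Subtype.val h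
  obtain rfl : P = Q := eq_of_asIdeal_dvd_asIdeal
    (P.prime.dvd_of_dvd_pow (h_pow ▸ dvd_pow_self P.asIdeal k.succ_ne_zero))
  obtain rfl : k = l :=
    Nat.succ_injective ((pow_inj_of_not_isUnit P.prime.not_isUnit P.prime.ne_zero).mp h_pow)
  rfl

lemma log_absNorm_pos (P : HeightOneSpectrum (𝓞 K)) : 0 < Real.log (Ideal.absNorm P.asIdeal) :=
  Real.log_pos (Nat.one_lt_cast.mpr (NumberField.HeightOneSpectrum.one_lt_absNorm P))

lemma pow_succ_dvd_mul_iff {M : Type*} [CommMonoidWithZero M] [IsCancelMulZero M]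
    {x y : M} (hx : x ≠ 0) (h : FiniteMultiplicity x y) (k : ℕ) :
    x ^ (k + 1) ∣ x * y ↔ x ^ (k + 1) ∣ y ∨ k = multiplicity x y := by
  rw [pow_succ', mul_dvd_mul_iff_left hx, ← pow_succ', h.pow_dvd_iff_le_multiplicity,
    h.pow_dvd_iff_le_multiplicity]
  lia

lemma hasSum_log_absNorm_of_primePowIdeal_dvd {J : Ideal (𝓞 K)} (hJ : J ≠ 0) :
    HasSum ({w : HeightOneSpectrum (𝓞 K) × ℕ | (primePowIdeal w : Ideal (𝓞 K)) ∣ J}.indicator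
      fun w => (Real.log (Ideal.absNorm w.1.asIdeal) : ℂ)) (Real.log (Ideal.absNorm J)) := by
  classical
  induction J using UniqueFactorizationMonoid.induction_on_prime with
  | h₁ => exact absurd rfl hJ
  | h₂ J hJ_unit =>
    obtain rfl : J = 1 := by simpa using hJ_unit
    rw [map_one, Nat.cast_one, Real.log_one, Complex.ofReal_zero]
    refine hasSum_zero.congr_fun fun w => Set.indicator_of_notMem (fun h => ?_) _
    exact w.1.prime.not_isUnit
      (isUnit_of_dvd_one ((dvd_pow_self _ w.2.succ_ne_zero).trans h))
  | h₃ J Q hJ' hQ ih =>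
    replace hJ := hJ'
    let Q' : HeightOneSpectrum (𝓞 K) := ⟨Q, Ideal.isPrime_of_prime hQ, hQ.ne_zero⟩
    have h_mult : FiniteMultiplicity Q J := .of_prime_left hQ hJ
    have h_log : Real.log (Ideal.absNorm (Q * J)) =
        Real.log (Ideal.absNorm J) + Real.log (Ideal.absNorm Q) := by
      rw [map_mul, Nat.cast_mul, Real.log_mul, add_comm] <;> rw [Nat.cast_ne_zero]
      · exact Ideal.absNorm_eq_zero_iff.not.mpr hQ.ne_zero
      · exact Ideal.absNorm_eq_zero_iff.not.mpr hJ
    rw [h_log, Complex.ofReal_add]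
    refine ((ih hJ).add (hasSum_ite_eq (Q', multiplicity Q J) _)).congr_fun ?_
    rintro ⟨P, k⟩
    simp only [Set.indicator_apply, Set.mem_ofPred_eq, coe_primePowIdeal]
    rcases eq_or_ne P Q' with rfl | hP
    · have h_iff := pow_succ_dvd_mul_iff hQ.ne_zero h_mult k
      have h_not : k = multiplicity Q J → ¬Q ^ (k + 1) ∣ J :=
        fun hk => h_mult.not_pow_dvd_of_multiplicity_lt (by lia)
      by_cases hk : k = multiplicity Q J <;> by_cases h_dvd : Q ^ (k + 1) ∣ J <;> simp_all [Q']
    · have h_iff : P.asIdeal ^ (k + 1) ∣ Q * J ↔ P.asIdeal ^ (k + 1) ∣ J :=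
        ⟨P.prime.pow_dvd_of_dvd_mul_left _ fun h => hP (eq_of_asIdeal_dvd_asIdeal (Q := Q') h),
          fun h => h.mul_left _⟩
      by_cases h_dvd : P.asIdeal ^ (k + 1) ∣ J <;> simp [h_iff, hP, h_dvd]

lemma summable_log_mul_absNorm_cpow {s : ℂ} (hs : 1 < s.re) :
    Summable fun J : (Ideal (𝓞 K))⁰ => (Real.log (Ideal.absNorm (J : Ideal (𝓞 K))) : ℂ) *
      (Ideal.absNorm (J : Ideal (𝓞 K)) : ℂ) ^ (-s) := by
  obtain ⟨r, hr, hrs⟩ := exists_between hs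
  have hε : 0 < s.re - r := sub_pos.mpr hrs
  refine .of_norm_bounded ((summable_absNorm_cpow (s := r) hr).norm.mul_left (1 / (s.re - r)))
    fun J => ?_
  have hN : 0 < Ideal.absNorm (J : Ideal (𝓞 K)) := Ideal.absNorm_pos_of_nonZeroDivisors J
  have hN' : (0 : ℝ) < Ideal.absNorm (J : Ideal (𝓞 K)) := Nat.cast_pos.mpr hN
  rw [norm_mul, Complex.norm_natCast_cpow_of_pos hN, Complex.norm_natCast_cpow_of_pos hN,
    Complex.norm_real, Real.norm_of_nonneg (Real.log_nonneg (Nat.one_le_cast.mpr hN))]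
  calc Real.log (Ideal.absNorm (J : Ideal (𝓞 K))) * (Ideal.absNorm (J : Ideal (𝓞 K)) : ℝ) ^ (-s).re
      ≤ (Ideal.absNorm (J : Ideal (𝓞 K)) : ℝ) ^ (s.re - r) / (s.re - r) *
          (Ideal.absNorm (J : Ideal (𝓞 K)) : ℝ) ^ (-s).re := by
        gcongr
        exact Real.log_le_rpow_div hN'.le hε
    _ = 1 / (s.re - r) * (Ideal.absNorm (J : Ideal (𝓞 K)) : ℝ) ^ (-(r : ℂ)).re := by
        rw [div_mul_eq_mul_div, ← Real.rpow_add hN', one_div_mul_eq_div]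
        congr 2
        simp only [Complex.neg_re, Complex.ofReal_re]
        ring

lemma summable_log_mul_absNorm_primePowIdeal_cpow {s : ℂ} (hs : 1 < s.re) :
    Summable fun w : HeightOneSpectrum (𝓞 K) × ℕ => (Real.log (Ideal.absNorm w.1.asIdeal) : ℂ) *
      (Ideal.absNorm (primePowIdeal w : Ideal (𝓞 K)) : ℂ) ^ (-s) := by
  refine .of_norm_bounded ((summable_log_mul_absNorm_cpow (K := K) hs).norm.comp_injective
    primePowIdeal_injective) fun w => ?_
  have h_le : Ideal.absNorm w.1.asIdeal ≤ Ideal.absNorm (primePowIdeal w : Ideal (𝓞 K)) := by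
    rw [coe_primePowIdeal, map_pow]
    exact Nat.le_self_pow w.2.succ_ne_zero _
  have h_pos := NumberField.HeightOneSpectrum.one_lt_absNorm w.1
  simp only [Function.comp_apply, norm_mul, Complex.norm_real]
  gcongr
  rw [Real.norm_of_nonneg (log_absNorm_pos _).le]
  exact (Real.log_le_log (by positivity) (Nat.cast_le.mpr h_le)).trans (Real.le_norm_self _)

instance finite_primePowIdeal_absNorm_eq (n : ℕ) :
    Finite {w : HeightOneSpectrum (𝓞 K) × ℕ //
      Ideal.absNorm (primePowIdeal w : Ideal (𝓞 K)) = n} :=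
  .of_injective (β := {I : (Ideal (𝓞 K))⁰ // Ideal.absNorm (I : Ideal (𝓞 K)) = n})
    (fun w => ⟨primePowIdeal w.1, w.2⟩)
    fun _ _ h => Subtype.ext (primePowIdeal_injective (congrArg Subtype.val h))

variable (K) in
/-- The von Mangoldt function of the number field `K`, collected by norms: `n` is sent to the sum of
`log N(P)` over the prime powers `P ^ k`, `k ≥ 1`, of norm `n`. -/
noncomputable def fieldVonMangoldt (n : ℕ) : ℝ :=
  ∑' w : {w : HeightOneSpectrum (𝓞 K) × ℕ // Ideal.absNorm (primePowIdeal w : Ideal (𝓞 K)) = n},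
    Real.log (Ideal.absNorm w.1.1.asIdeal)

lemma fieldVonMangoldt_nonneg (n : ℕ) : 0 ≤ fieldVonMangoldt K n :=
  tsum_nonneg fun _ => (log_absNorm_pos _).le

lemma hasSum_lseriesTerm_fieldVonMangoldt {s : ℂ} (hs : 1 < s.re) :
    HasSum (LSeries.term (fun n => (fieldVonMangoldt K n : ℂ)) s)
      (∑' w : HeightOneSpectrum (𝓞 K) × ℕ, (Real.log (Ideal.absNorm w.1.asIdeal) : ℂ) *
        (Ideal.absNorm (primePowIdeal w : Ideal (𝓞 K)) : ℂ) ^ (-s)) := by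
  simp only [fieldVonMangoldt, Complex.ofReal_tsum]
  exact hasSum_lseriesTerm_of_fiberwise
    (N := fun w : HeightOneSpectrum (𝓞 K) × ℕ => Ideal.absNorm (primePowIdeal w : Ideal (𝓞 K)))
    (c := fun w => (Real.log (Ideal.absNorm w.1.asIdeal) : ℂ))
    (fun w => Ideal.absNorm_ne_zero_of_nonZeroDivisors (primePowIdeal w))
    (summable_log_mul_absNorm_primePowIdeal_cpow hs).hasSum

lemma hasSum_log_mul_absNorm_cpow {s : ℂ} (hs : 1 < s.re) :
    HasSum (fun J : (Ideal (𝓞 K))⁰ => (Real.log (Ideal.absNorm (J : Ideal (𝓞 K))) : ℂ) *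
        (Ideal.absNorm (J : Ideal (𝓞 K)) : ℂ) ^ (-s))
      (LSeries (fun n => (fieldVonMangoldt K n : ℂ)) s * dedekindZeta K s) := by
  have h_mul (I J : (Ideal (𝓞 K))⁰) : (Ideal.absNorm (↑(I * J) : Ideal (𝓞 K)) : ℂ) ^ (-s) =
      (Ideal.absNorm (I : Ideal (𝓞 K)) : ℂ) ^ (-s) *
        (Ideal.absNorm (J : Ideal (𝓞 K)) : ℂ) ^ (-s) := by
    rw [Submonoid.coe_mul, map_mul, Nat.cast_mul, Complex.natCast_mul_natCast_cpow]
  have h_dvd (J : (Ideal (𝓞 K))⁰) := hasSum_log_absNorm_of_primePowIdeal_dvd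
    (nonZeroDivisors.coe_ne_zero J)
  simp only [← nonZeroDivisors_dvd_iff_dvd_coe] at h_dvd
  have h_reg (w : HeightOneSpectrum (𝓞 K) × ℕ) : IsLeftRegular (primePowIdeal w) :=
    fun I J h => Subtype.ext (mul_left_cancel₀
      (nonZeroDivisors.coe_ne_zero (primePowIdeal w)) (congrArg Subtype.val h))
  have h_conv := hasSum_dirichlet_convolution
    (χ := fun I => (Ideal.absNorm (I : Ideal (𝓞 K)) : ℂ) ^ (-s)) h_reg h_mul
    (summable_log_mul_absNorm_primePowIdeal_cpow hs) (summable_absNorm_cpow hs) h_dvd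
  rwa [tsum_absNorm_cpow_eq_dedekindZeta hs,
    ← (hasSum_lseriesTerm_fieldVonMangoldt hs).tsum_eq, ← LSeries] at h_conv

lemma lseries_logMul_card_absNorm {s : ℂ} (hs : 1 < s.re) :
    LSeries (LSeries.logMul fun n => Nat.card {I : Ideal (𝓞 K) // Ideal.absNorm I = n}) s =
      LSeries (fun n => (fieldVonMangoldt K n : ℂ)) s * dedekindZeta K s := by
  refine HasSum.tsum_eq ((hasSum_lseriesTerm_of_fiberwise
    (fun J : (Ideal (𝓞 K))⁰ => Ideal.absNorm_ne_zero_of_nonZeroDivisors J)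
    (hasSum_log_mul_absNorm_cpow hs)).congr_fun fun n => ?_)
  rcases eq_or_ne n 0 with rfl | hn
  · simp
  rw [LSeries.term_of_ne_zero hn, LSeries.term_of_ne_zero hn, LSeries.logMul,
    ← tsum_one_absNorm_eq K hn, ← tsum_mul_left]
  congr 1
  refine tsum_congr fun J => ?_
  rw [J.2, Complex.natCast_log, mul_one]

lemma hasDerivAt_dedekindZeta {s : ℂ} (hs : 1 < s.re) :
    HasDerivAt (dedekindZeta K)
      (-(LSeries (fun n => (fieldVonMangoldt K n : ℂ)) s * dedekindZeta K s)) s := by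
  obtain ⟨r, hr, hrs⟩ := exists_between hs
  rw [← lseries_logMul_card_absNorm hs]
  exact LSeries_hasDerivAt ((LSeriesSummable.abscissaOfAbsConv_le
    (hasSum_lseriesTerm_card_absNorm K (s := r) hr).summable).trans_lt (by exact_mod_cast hrs))

lemma exists_prime_mem_and_vonMangoldt_eq (w : HeightOneSpectrum (𝓞 K) × ℕ) :
    ∃ p : ℕ, p.Prime ∧ (p : 𝓞 K) ∈ w.1.asIdeal ∧
      ArithmeticFunction.vonMangoldt (Ideal.absNorm (primePowIdeal w : Ideal (𝓞 K))) =
        Real.log p := by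
  have := w.1.isMaximal
  obtain ⟨p, f, hf, hp_mem, hp, h_norm⟩ := Ideal.exists_prime_and_absNorm_eq_pow w.1.asIdeal
  refine ⟨p, hp, hp_mem, ?_⟩
  rw [coe_primePowIdeal, map_pow, h_norm, ← pow_mul,
    ArithmeticFunction.vonMangoldt_apply_pow (by positivity),
    ArithmeticFunction.vonMangoldt_apply_prime hp]

lemma prod_absNorm_le_pow_finrank {ι : Type*} [Fintype ι] {P : ι → HeightOneSpectrum (𝓞 K)}
    (hP : P.Injective) {p : ℕ} (hp : p ≠ 0) (h_mem : ∀ i, (p : 𝓞 K) ∈ (P i).asIdeal) :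
    ∏ i, Ideal.absNorm (P i).asIdeal ≤ p ^ finrank ℚ K := by
  classical
  have hP' : (fun i => (P i).asIdeal).Injective := HeightOneSpectrum.asIdeal_injective.comp hP
  have h_dvd : ∏ i, (P i).asIdeal ∣ Ideal.span {(p : 𝓞 K)} := by
    rw [← Finset.prod_image (f := fun I => I) hP'.injOn]
    refine Finset.prod_primes_dvd _ ?_ ?_ <;> rw [Finset.forall_mem_image]
    · exact fun i _ => (P i).prime
    · exact fun i _ => Ideal.dvd_span_singleton.mpr (h_mem i)
  have h_norm := Ideal.absNorm_dvd_absNorm_of_le (Ideal.le_of_dvd h_dvd)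
  rw [Ideal.absNorm_span_natCast, map_prod, RingOfIntegers.rank] at h_norm
  exact Nat.le_of_dvd (by positivity) h_norm

lemma fieldVonMangoldt_le (n : ℕ) :
    fieldVonMangoldt K n ≤ finrank ℚ K * ArithmeticFunction.vonMangoldt n := by
  let W := {w : HeightOneSpectrum (𝓞 K) × ℕ //
    Ideal.absNorm (primePowIdeal w : Ideal (𝓞 K)) = n}
  have : Fintype W := .ofFinite W
  rcases isEmpty_or_nonempty W with _ | ⟨⟨w₀⟩⟩
  · rw [fieldVonMangoldt, tsum_empty]
    exact mul_nonneg (Nat.cast_nonneg _) ArithmeticFunction.vonMangoldt_nonneg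
  obtain ⟨p, hp, -, h_eq⟩ := exists_prime_mem_and_vonMangoldt_eq w₀.1
  rw [w₀.2] at h_eq
  have h_mem (w : W) : (p : 𝓞 K) ∈ w.1.1.asIdeal := by
    obtain ⟨p', hp', hp'_mem, hp'_eq⟩ := exists_prime_mem_and_vonMangoldt_eq w.1
    rw [w.2, h_eq] at hp'_eq
    obtain rfl : p = p' := Nat.cast_injective (R := ℝ)
      (Real.log_injOn_pos (Set.mem_Ioi.mpr (Nat.cast_pos.mpr hp.pos))
        (Set.mem_Ioi.mpr (Nat.cast_pos.mpr hp'.pos)) hp'_eq)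
    exact hp'_mem
  have h_inj : Function.Injective fun w : W => w.1.1 := by
    rintro ⟨⟨P, k⟩, hk⟩ ⟨⟨Q, l⟩, hl⟩ (rfl : P = Q)
    obtain rfl : k = l := Nat.succ_injective (Nat.pow_right_injective
      (NumberField.HeightOneSpectrum.one_lt_absNorm P) (by
      simpa using hk.trans hl.symm))
    rfl
  have h_ne (w : W) : (Ideal.absNorm w.1.1.asIdeal : ℝ) ≠ 0 :=
    Nat.cast_ne_zero.mpr
      (zero_lt_one.trans (NumberField.HeightOneSpectrum.one_lt_absNorm w.1.1)).ne'
  rw [fieldVonMangoldt, tsum_fintype, h_eq, ← Real.log_prod fun w _ => h_ne w, ← Real.log_pow]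
  refine Real.log_le_log (Finset.prod_pos fun w _ => (Nat.cast_nonneg _).lt_of_ne' (h_ne w)) ?_
  exact_mod_cast prod_absNorm_le_pow_finrank h_inj hp.ne_zero h_mem

lemma fieldVonMangoldt_prime {p : ℕ} (hp : p.Prime) :
    fieldVonMangoldt K p = Nat.card {I : Ideal (𝓞 K) // Ideal.absNorm I = p} * Real.log p := by
  let W := {w : HeightOneSpectrum (𝓞 K) × ℕ //
    Ideal.absNorm (primePowIdeal w : Ideal (𝓞 K)) = p}
  have : Fintype W := .ofFinite W
  have h_exp (w : W) : w.1.2 = 0 := by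
    have h := hp
    rw [← w.2, coe_primePowIdeal, map_pow] at h
    exact Nat.succ_injective (Nat.Prime.eq_one_of_pow h)
  have h_norm (w : W) : Ideal.absNorm w.1.1.asIdeal = p := by
    simpa [h_exp w] using w.2
  have h_bij : Function.Bijective
      (fun w : W => (⟨w.1.1.asIdeal, h_norm w⟩ : {I : Ideal (𝓞 K) // Ideal.absNorm I = p})) := by
    constructor
    · intro w w' h
      refine Subtype.ext (Prod.ext (HeightOneSpectrum.ext (congrArg Subtype.val h)) ?_)
      rw [h_exp, h_exp]
    · rintro ⟨I, hI⟩
      have hI_prime : I.IsPrime := Ideal.isPrime_of_irreducible_absNorm (by rwa [hI])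
      have hI_ne : I ≠ ⊥ := by
        rintro rfl
        exact hp.ne_zero (by rw [← hI, Ideal.absNorm_bot])
      exact ⟨⟨(⟨I, hI_prime, hI_ne⟩, 0), by simpa using hI⟩, rfl⟩
  rw [fieldVonMangoldt, tsum_fintype, ← Nat.card_congr (.ofBijective _ h_bij)]
  simp only [h_norm, Finset.sum_const, Finset.card_univ, nsmul_eq_mul]
  rw [Nat.card_eq_fintype_card]

lemma card_absNorm_eq_prime_le_finrank {p : ℕ} (hp : p.Prime) :
    Nat.card {I : Ideal (𝓞 K) // Ideal.absNorm I = p} ≤ finrank ℚ K := by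
  have h_le := fieldVonMangoldt_le (K := K) p
  rw [fieldVonMangoldt_prime hp, ArithmeticFunction.vonMangoldt_apply_prime hp] at h_le
  exact_mod_cast le_of_mul_le_mul_right h_le (Real.log_pos (Nat.one_lt_cast.mpr hp.one_lt))

end VonMangoldt

section Nonvanishing

open Filter Topology Complex

lemma tendsto_add_ofReal_nhdsGT_zero (s : ℂ) :
    Tendsto (fun σ : ℝ => s + σ) (𝓝[>] 0) (𝓝 s) :=
  ((by fun_prop : Continuous fun σ : ℝ => s + σ).tendsto' 0 s (by simp)).mono_left
    nhdsWithin_le_nhds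

lemma tendsto_ofReal_nhdsGT_zero : Tendsto (fun σ : ℝ => (σ : ℂ)) (𝓝[>] 0) (𝓝 0) := by
  simpa using tendsto_add_ofReal_nhdsGT_zero 0

lemma tendsto_mul_inv_sub_one (s : ℂ) :
    Tendsto (fun σ : ℝ => (σ : ℂ) * (1 / (s + σ - 1))) (𝓝[>] 0) (𝓝 (if s = 1 then 1 else 0)) := by
  split_ifs with hs
  · refine tendsto_const_nhds.congr' ?_
    filter_upwards [self_mem_nhdsWithin] with σ hσ
    rw [hs, add_sub_cancel_left, mul_one_div_cancel (ofReal_ne_zero.mpr (ne_of_gt hσ))]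
  · have h_inv : Tendsto (fun σ : ℝ => 1 / (s + σ - 1)) (𝓝[>] 0) (𝓝 (1 / (s - 1))) :=
      tendsto_const_nhds.div ((tendsto_add_ofReal_nhdsGT_zero s).sub_const 1) (sub_ne_zero.mpr hs)
    simpa only [zero_mul] using tendsto_ofReal_nhdsGT_zero.mul h_inv

lemma tendsto_mul_of_deriv_eq_mul {H f : ℂ → ℂ} {s : ℂ} (hH : AnalyticAt ℂ H s)
    (h_order : analyticOrderAt H s ≠ ⊤)
    (hf : ∀ᶠ σ : ℝ in 𝓝[>] 0, deriv H (s + σ) = f (s + σ) * H (s + σ)) :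
    Tendsto (fun σ : ℝ => σ * f (s + σ)) (𝓝[>] 0) (𝓝 (analyticOrderNatAt H s)) := by
  obtain ⟨g, hg, hg_ne, hHg⟩ := hH.analyticOrderAt_ne_top.mp h_order
  set m := analyticOrderNatAt H s
  have h_shift := tendsto_add_ofReal_nhdsGT_zero s
  have h_lim : Tendsto (fun σ : ℝ => m + σ * (deriv g (s + σ) / g (s + σ))) (𝓝[>] 0)
      (𝓝 (m + 0 * (deriv g s / g s))) :=
    tendsto_const_nhds.add (tendsto_ofReal_nhdsGT_zero.mul
      ((hg.deriv.continuousAt.div hg.continuousAt hg_ne).tendsto.comp h_shift))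
  rw [zero_mul, add_zero] at h_lim
  refine h_lim.congr' ?_
  filter_upwards [hf, h_shift.eventually (eventually_eventuallyEq_nhds.mpr hHg),
    h_shift.eventually (hg.continuousAt.eventually_ne hg_ne),
    h_shift.eventually hg.eventually_analyticAt, self_mem_nhdsWithin] with σ hf h_eq h_ne h_an hσ
  have hσ_ne : (σ : ℂ) ≠ 0 := ofReal_ne_zero.mpr (ne_of_gt hσ)
  have h_logDeriv : logDeriv H (s + σ) = m / σ + logDeriv g (s + σ) := by
    have h_deriv := h_eq.deriv_eq
    replace h_eq := h_eq.self_of_nhds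
    simp only [smul_eq_mul] at h_deriv h_eq
    rw [logDeriv_apply, h_deriv, h_eq, ← logDeriv_apply (fun z => (z - s) ^ m * g z),
      logDeriv_mul (f := fun z => (z - s) ^ m) _ (pow_ne_zero _ (by simpa using hσ_ne)) h_ne
        (by fun_prop) h_an.differentiableAt,
      logDeriv_fun_pow (f := fun z => z - s) (by fun_prop), logDeriv_apply, deriv_sub_const,
      deriv_id'', add_sub_cancel_left, mul_one_div]
  have hH_ne : H (s + σ) ≠ 0 := by
    rw [h_eq.self_of_nhds]
    exact smul_ne_zero (pow_ne_zero _ (by simpa using hσ_ne)) h_ne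
  rw [logDeriv_apply, hf, mul_div_cancel_right₀ _ hH_ne] at h_logDeriv
  rw [h_logDeriv, mul_add, mul_div_cancel₀ _ hσ_ne, logDeriv_apply]

lemma three_four_one_lseries {a : ℕ → ℝ} (ha : ∀ n, 0 ≤ a n) {x : ℝ}
    (hx : LSeriesSummable (fun n => (a n : ℂ)) x) (t : ℝ) :
    0 ≤ 3 * (LSeries (fun n => (a n : ℂ)) x).re +
      4 * (LSeries (fun n => (a n : ℂ)) (x + t * I)).re +
      (LSeries (fun n => (a n : ℂ)) (x + 2 * t * I)).re := by
  have h_sum (s : ℂ) (hs : s.re = x) := hasSum_re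
    ((LSeriesSummable_iff_of_re_eq_re (s' := s) (by simpa using hs.symm)).mp hx).hasSum
  refine (((h_sum x (by simp)).mul_left 3).add ((h_sum (x + t * I) (by simp)).mul_left 4) |>.add
    (h_sum (x + 2 * t * I) (by simp))).nonneg fun n => ?_
  rcases eq_or_ne n 0 with rfl | hn
  · simp
  set z : ℂ := (n : ℂ) ^ (-(t * I)) with hz
  have hz_sq : z.re ^ 2 + z.im ^ 2 = 1 := by
    have h_norm : ‖z‖ = 1 := by
      rw [hz, norm_natCast_cpow_of_pos (Nat.pos_of_ne_zero hn)]
      simp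
    rw [← one_pow 2, ← h_norm, Complex.sq_norm, normSq_apply, sq, sq]
  have h_term (k : ℕ) : LSeries.term (fun n => (a n : ℂ)) (x + k * t * I) n =
      (a n * (n : ℝ) ^ (-x) : ℝ) * z ^ k := by
    rw [LSeries.term_of_ne_zero hn, ofReal_mul, ofReal_cpow n.cast_nonneg, hz, ← cpow_nat_mul,
      mul_assoc (a n : ℂ), ofReal_natCast, ofReal_neg, ← cpow_add _ _ (Nat.cast_ne_zero.mpr hn),
      div_eq_mul_inv, ← cpow_neg]
    congr 2
    ring
  have h_zero := h_term 0
  have h_one := h_term 1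
  have h_two := h_term 2
  simp only [Nat.cast_zero, Nat.cast_one, Nat.cast_ofNat, zero_mul, one_mul, add_zero, pow_zero,
    mul_one, pow_one] at h_zero h_one h_two
  rw [h_zero, h_one, h_two, re_ofReal_mul, re_ofReal_mul, ofReal_re, sq, mul_re]
  have h_nonneg : 0 ≤ a n * (n : ℝ) ^ (-x) * (2 * (1 + z.re) ^ 2) :=
    mul_nonneg (mul_nonneg (ha n) (by positivity)) (by positivity)
  linear_combination h_nonneg + a n * (n : ℝ) ^ (-x) * hz_sq

lemma nonneg_re_of_tendsto_mul_lseries {a : ℕ → ℝ} (ha : ∀ n, 0 ≤ a n)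
    (h_sum : ∀ x : ℝ, 1 < x → LSeriesSummable (fun n => (a n : ℂ)) x) {t : ℝ} {u v w : ℂ}
    (hu : Tendsto (fun σ : ℝ => σ * LSeries (fun n => (a n : ℂ)) (1 + σ)) (𝓝[>] 0) (𝓝 u))
    (hv : Tendsto (fun σ : ℝ => σ * LSeries (fun n => (a n : ℂ)) (1 + t * I + σ)) (𝓝[>] 0) (𝓝 v))
    (hw : Tendsto (fun σ : ℝ => σ * LSeries (fun n => (a n : ℂ)) (1 + 2 * t * I + σ)) (𝓝[>] 0)
      (𝓝 w)) :
    0 ≤ (3 * u + 4 * v + w).re := by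
  set L := LSeries fun n => (a n : ℂ)
  refine ge_of_tendsto ((continuous_re.tendsto _).comp
    (((hu.const_mul 3).add (hv.const_mul 4)).add hw)) ?_
  filter_upwards [self_mem_nhdsWithin] with σ (hσ : 0 < σ)
  have h_three_four_one := three_four_one_lseries ha (h_sum (1 + σ) (by simpa using hσ)) t
  have h_eq : 3 * (σ * L (1 + σ)) + 4 * (σ * L (1 + t * I + σ)) + σ * L (1 + 2 * t * I + σ) =
      (σ : ℂ) * ((3 : ℝ) * L (1 + σ : ℝ) + (4 : ℝ) * L ((1 + σ : ℝ) + t * I) +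
        L ((1 + σ : ℝ) + 2 * t * I)) := by
    rw [ofReal_add, ofReal_one, add_right_comm 1 (t * I : ℂ), add_right_comm 1 (2 * t * I)]
    push_cast
    ring
  rw [Function.comp_apply, h_eq, re_ofReal_mul, add_re, add_re, re_ofReal_mul, re_ofReal_mul]
  exact mul_nonneg hσ.le h_three_four_one

variable {H L : ℂ → ℂ}

lemma tendsto_mul_of_deriv_eq_inv_sub_one_sub_mul
    (h_deriv : ∀ s, 1 < s.re → deriv H s = (1 / (s - 1) - L s) * H s) {s : ℂ} (hs : 1 ≤ s.re)
    (hH : AnalyticAt ℂ H s) (h_order : analyticOrderAt H s ≠ ⊤) :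
    Tendsto (fun σ : ℝ => σ * L (s + σ)) (𝓝[>] 0)
      (𝓝 ((if s = 1 then 1 else 0) - analyticOrderNatAt H s)) := by
  refine ((tendsto_mul_inv_sub_one s).sub (tendsto_mul_of_deriv_eq_mul
    (f := fun s => 1 / (s - 1) - L s) hH h_order ?_)).congr fun σ => by
      simp only [mul_sub, sub_sub_cancel]
  filter_upwards [self_mem_nhdsWithin] with σ (hσ : 0 < σ)
  exact h_deriv _ (by simpa using by linarith)

lemma ne_zero_of_analyticOrderNatAt_eq_zero {s : ℂ} (hH : AnalyticAt ℂ H s)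
    (h_order : analyticOrderAt H s ≠ ⊤) (h : analyticOrderNatAt H s = 0) : H s ≠ 0 := by
  rw [← hH.analyticOrderAt_eq_zero, ← Nat.cast_analyticOrderNatAt h_order, h, Nat.cast_zero]

theorem ne_zero_of_deriv_eq_inv_sub_one_sub_lseries_mul {a : ℕ → ℝ} (ha : ∀ n, 0 ≤ a n)
    (h_conv : LSeries.abscissaOfAbsConv (fun n => (a n : ℂ)) ≤ 1)
    (hH : AnalyticOnNhd ℂ H {s | 1 ≤ s.re}) (hH_one : H 1 ≠ 0)
    (h_deriv : ∀ s, 1 < s.re →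
      deriv H s = (1 / (s - 1) - LSeries (fun n => (a n : ℂ)) s) * H s)
    {s : ℂ} (hs : 1 ≤ s.re) : H s ≠ 0 := by
  set L := LSeries fun n => (a n : ℂ)
  have h_one_mem : (1 : ℂ) ∈ {s : ℂ | 1 ≤ s.re} := by simp
  have h_conv_lt {s : ℂ} (hs : 1 < s.re) :
      LSeries.abscissaOfAbsConv (fun n => (a n : ℂ)) < s.re :=
    h_conv.trans_lt (by exact_mod_cast hs)
  have h_order_one : analyticOrderAt H 1 = 0 := (hH 1 h_one_mem).analyticOrderAt_eq_zero.mpr hH_one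
  have h_order {s : ℂ} (hs : 1 ≤ s.re) : analyticOrderAt H s ≠ ⊤ :=
    hH.analyticOrderAt_ne_top_of_isPreconnected (convex_halfSpace_re_ge 1).isPreconnected
      h_one_mem hs (by simp [h_order_one])
  have h_lim {s : ℂ} (hs : 1 ≤ s.re) :=
    tendsto_mul_of_deriv_eq_inv_sub_one_sub_mul h_deriv hs (hH s hs) (h_order hs)
  rcases eq_or_ne s 1 with rfl | hs_ne
  · exact hH_one
  refine ne_zero_of_analyticOrderNatAt_eq_zero (hH s hs) (h_order hs) ?_
  rcases hs.lt_or_eq with hs_lt | hs_eq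
  · have h_zero := tendsto_ofReal_nhdsGT_zero.mul
      ((LSeries_hasDerivAt (h_conv_lt hs_lt)).continuousAt.tendsto.comp
        (tendsto_add_ofReal_nhdsGT_zero s))
    simpa [hs_ne] using tendsto_nhds_unique h_zero (h_lim hs)
  obtain ⟨t, rfl⟩ : ∃ t : ℝ, s = 1 + t * I := ⟨s.im, Complex.ext (by simp [← hs_eq]) (by simp)⟩
  have h_two_ne : 1 + 2 * t * I ≠ 1 := by simpa using hs_ne
  have h_nonneg := nonneg_re_of_tendsto_mul_lseries ha
    (fun x hx => LSeriesSummable_of_abscissaOfAbsConv_lt_re (h_conv_lt (by simpa using hx)))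
    (h_lim (s := 1) (by simp)) (h_lim hs) (h_lim (s := 1 + 2 * t * I) (by simp))
  rw [if_pos rfl, if_neg hs_ne, if_neg h_two_ne, analyticOrderNatAt, h_order_one] at h_nonneg
  generalize analyticOrderNatAt H (1 + t * I) = m,
    analyticOrderNatAt H (1 + 2 * t * I) = n at h_nonneg ⊢
  have h_cast : (3 * (1 - (ENat.toNat 0 : ℕ)) + 4 * (0 - m) + (0 - n) : ℂ) =
      ((3 - 4 * m - n : ℝ) : ℂ) := by
    push_cast [ENat.toNat_zero]
    ring
  rw [h_cast, ofReal_re] at h_nonneg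
  have h_le : 4 * m + n ≤ 3 := by exact_mod_cast (by linarith : (4 * m + n : ℝ) ≤ 3)
  lia

end Nonvanishing

section PrimeIdealTheorem

open Filter Topology Module NumberField Complex

variable (K : Type*) [Field K] [NumberField K]

lemma abscissaOfAbsConv_fieldVonMangoldt_le :
    LSeries.abscissaOfAbsConv (fun n => (fieldVonMangoldt K n : ℂ)) ≤ 1 := by
  exact_mod_cast LSeries.abscissaOfAbsConv_le_of_forall_lt_LSeriesSummable (x := 1) fun y hy =>
    (hasSum_lseriesTerm_fieldVonMangoldt (K := K) (s := y) (by simpa using hy)).summable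

lemma deriv_sub_one_mul_dedekindZeta {s : ℂ} (hs : 1 < s.re) :
    deriv (fun s => (s - 1) * dedekindZeta K s) s =
      (1 / (s - 1) - LSeries (fun n => (fieldVonMangoldt K n : ℂ)) s) *
        ((s - 1) * dedekindZeta K s) := by
  have hs_ne : s - 1 ≠ 0 := sub_ne_zero.mpr fun h => by simp [h] at hs
  refine (((hasDerivAt_id' s).sub_const 1).mul (hasDerivAt_dedekindZeta hs)).deriv.trans ?_
  field_simp
  ring

lemma exists_continuousOn_lseries_fieldVonMangoldt :
    ∃ g : ℂ → ℂ, ContinuousOn g {s | 1 ≤ s.re} ∧ ∀ s, 1 < s.re →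
      LSeries (fun n => (fieldVonMangoldt K n : ℂ)) s - 1 / (s - 1) = g s := by
  obtain ⟨H, hH, hH_eq, hH_one⟩ := exists_differentiableOn_sub_one_mul_dedekindZeta K
  have h_subset : {s : ℂ | 1 ≤ s.re} ⊆ {s | 1 - 1 / (finrank ℚ K : ℝ) < s.re} :=
    fun s (hs : 1 ≤ s.re) =>
      (sub_lt_self 1 (one_div_pos.mpr (Nat.cast_pos.mpr finrank_pos))).trans_le hs
  have hH_an : AnalyticOnNhd ℂ H {s | 1 ≤ s.re} :=
    (hH.analyticOnNhd (isOpen_lt continuous_const continuous_re)).mono h_subset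
  have h_deriv (s : ℂ) (hs : 1 < s.re) : deriv H s =
      (1 / (s - 1) - LSeries (fun n => (fieldVonMangoldt K n : ℂ)) s) * H s := by
    have h_nhds : H =ᶠ[𝓝 s] fun s => (s - 1) * dedekindZeta K s :=
      eventually_of_mem ((isOpen_lt continuous_const continuous_re).mem_nhds hs) hH_eq
    rw [h_nhds.deriv_eq, hH_eq s hs, deriv_sub_one_mul_dedekindZeta K hs]
  have hH_ne {s : ℂ} (hs : 1 ≤ s.re) : H s ≠ 0 :=
    ne_zero_of_deriv_eq_inv_sub_one_sub_lseries_mul (fieldVonMangoldt_nonneg)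
      (abscissaOfAbsConv_fieldVonMangoldt_le K) hH_an hH_one h_deriv hs
  refine ⟨fun s => -(deriv H s / H s),
    (hH_an.deriv.continuousOn.div hH_an.continuousOn fun s hs => hH_ne hs).neg, fun s hs => ?_⟩
  beta_reduce
  rw [h_deriv s hs, mul_div_cancel_right₀ _ (hH_ne hs.le), neg_sub]

lemma sum_fieldVonMangoldt_le (N : ℕ) :
    ∑ k ∈ Finset.Icc 1 N, fieldVonMangoldt K k ≤ (finrank ℚ K * (Real.log 4 + 4)) * N :=
  calc ∑ k ∈ Finset.Icc 1 N, fieldVonMangoldt K k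
    _ ≤ ∑ k ∈ Finset.Icc 1 N, finrank ℚ K * ArithmeticFunction.vonMangoldt k :=
        Finset.sum_le_sum fun k _ => fieldVonMangoldt_le k
    _ = finrank ℚ K * Chebyshev.psi N := by
        rw [← Finset.mul_sum, Chebyshev.psi, Nat.floor_natCast]
        rfl
    _ ≤ finrank ℚ K * ((Real.log 4 + 4) * N) := by
        gcongr
        exact Chebyshev.psi_le_const_mul_self N.cast_nonneg
    _ = _ := by rw [mul_assoc]

theorem tendsto_sum_fieldVonMangoldt_div :
    Tendsto (fun N : ℕ => (∑ k ∈ Finset.Icc 1 N, fieldVonMangoldt K k) / N) atTop (𝓝 1) := by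
  obtain ⟨g, hg, hg_eq⟩ := exists_continuousOn_lseries_fieldVonMangoldt K
  exact wiener_ikehara_of_sum_le (fieldVonMangoldt_nonneg) (sum_fieldVonMangoldt_le K) hg
    (by simpa only [ofReal_one] using hg_eq)

lemma tendsto_sqrt_mul_log_div_nhds_zero :
    Tendsto (fun x : ℝ => √x * Real.log x / x) atTop (𝓝 0) := by
  refine (isLittleO_log_rpow_atTop (r := 1 / 2) (by norm_num)).tendsto_div_nhds_zero.congr' ?_
  filter_upwards with x
  rw [← Real.sqrt_eq_rpow, mul_comm, mul_div_assoc, Real.sqrt_div_self, ← div_eq_mul_inv]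

lemma tendsto_sum_not_prime_fieldVonMangoldt_div :
    Tendsto (fun N : ℕ => (∑ k ∈ Finset.Ioc 0 N with ¬ k.Prime, fieldVonMangoldt K k) / N)
      atTop (𝓝 0) := by
  have h_bound := (tendsto_sqrt_mul_log_div_nhds_zero.comp
    tendsto_natCast_atTop_atTop).const_mul (finrank ℚ K * 2 : ℝ)
  rw [mul_zero] at h_bound
  refine squeeze_zero' (.of_forall fun N => div_nonneg
    (Finset.sum_nonneg fun k _ => fieldVonMangoldt_nonneg k) N.cast_nonneg) ?_ h_bound
  filter_upwards [eventually_ge_atTop 1] with N hN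
  have h_psi := Chebyshev.psi_sub_theta_le (x := N) (by exact_mod_cast hN)
  rw [Chebyshev.psi_sub_theta_eq_sum_not_prime, Nat.floor_natCast] at h_psi
  rw [Function.comp_apply, ← mul_div_assoc]
  gcongr
  calc ∑ k ∈ Finset.Ioc 0 N with ¬ k.Prime, fieldVonMangoldt K k
    _ ≤ ∑ k ∈ Finset.Ioc 0 N with ¬ k.Prime, finrank ℚ K * ArithmeticFunction.vonMangoldt k :=
        Finset.sum_le_sum fun k _ => fieldVonMangoldt_le k
    _ ≤ finrank ℚ K * (2 * √N * Real.log N) := by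
        rw [← Finset.mul_sum]
        gcongr
    _ = _ := by ring

theorem prime_ideal_theorem :
    Tendsto (fun N : ℕ => (∑ p ∈ Finset.Ioc 0 N with p.Prime,
      (Nat.card {I : Ideal (𝓞 K) // Ideal.absNorm I = p} : ℝ) * Real.log p) / N) atTop (𝓝 1) := by
  have h_sub := (tendsto_sum_fieldVonMangoldt_div K).sub
    (tendsto_sum_not_prime_fieldVonMangoldt_div K)
  rw [sub_zero] at h_sub
  refine h_sub.congr fun N => ?_
  rw [← sub_div, show Finset.Icc 1 N = Finset.Ioc 0 N from rfl,
    ← Finset.sum_filter_add_sum_filter_not _ Nat.Prime, add_sub_cancel_right]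
  congr 1
  exact Finset.sum_congr rfl fun p hp => fieldVonMangoldt_prime (Finset.mem_filter.mp hp).2

end PrimeIdealTheorem

section KummerDegree

open NumberField Module Polynomial
open scoped IntermediateField

lemma exists_pow_eq_of_forall_dvd_factorization {q l : ℕ} (hq : q ≠ 0)
    (h : ∀ r, r.Prime → r ∣ q → l ∣ q.factorization r) : ∃ x, x ^ l = q := by
  refine ⟨∏ r ∈ q.primeFactors, r ^ (q.factorization r / l), ?_⟩
  conv_rhs => rw [← Nat.prod_factorization_pow_eq_self hq]
  rw [← Finset.prod_pow, Finsupp.prod, Nat.support_factorization]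
  refine Finset.prod_congr rfl fun r hr => ?_
  rw [← pow_mul, Nat.div_mul_cancel
    (h r (Nat.prime_of_mem_primeFactors hr) (Nat.dvd_of_mem_primeFactors hr))]

lemma emultiplicity_span_natCast_of_ramificationIdx'_eq_one {R : Type*} [CommRing R]
    [IsDedekindDomain R] [CharZero R] {r : ℕ} (hr : r.Prime) {P : Ideal R} [P.IsPrime]
    [P.LiesOver (Ideal.span {(r : ℤ)})] (hram : (Ideal.span {(r : ℤ)}).ramificationIdx' P = 1)
    {q : ℕ} (hq : q ≠ 0) :
    emultiplicity P (Ideal.span {(q : R)}) = q.factorization r := by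
  have : Fact r.Prime := ⟨hr⟩
  have hr' : Prime (r : ℤ) := Nat.prime_iff_prime_int.mp hr
  have hbot : P ≠ ⊥ := by
    refine Ideal.ne_bot_of_liesOver_of_ne_bot (p := Ideal.span {(r : ℤ)}) ?_ P
    simpa using hr.ne_zero
  have hmap : Ideal.span {(q : R)} = (Ideal.span {(q : ℤ)}).map (algebraMap ℤ R) := by
    simp [Ideal.map_span]
  have hmul := Ideal.IsDedekindDomain.emultiplicity_map_eq_ramificationIdx'_mul
    (v := Ideal.span {(r : ℤ)}) (w := P) (I := Ideal.span {(q : ℤ)}) (by simpa using hq)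
    (Ideal.prime_span_singleton_iff.mpr hr').irreducible
    (Ideal.prime_of_isPrime hbot inferInstance).irreducible hbot
  rw [hmap, hmul, hram, Nat.cast_one, one_mul, Ideal.emultiplicity_eq_emultiplicity_span,
    Int.natCast_emultiplicity, Nat.factorization_def _ hr, padicValNat_eq_emultiplicity hq]

lemma dvd_factorization_of_pow_eq_natCast {R : Type*} [CommRing R]
    [IsDedekindDomain R] [CharZero R] {r : ℕ} (hr : r.Prime) {P : Ideal R} [P.IsPrime]
    [P.LiesOver (Ideal.span {(r : ℤ)})] (hram : (Ideal.span {(r : ℤ)}).ramificationIdx' P = 1)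
    {q l : ℕ} (hq : q ≠ 0) {b : R} (hb : b ^ l = q) : l ∣ q.factorization r := by
  have hbot : P ≠ ⊥ := by
    refine Ideal.ne_bot_of_liesOver_of_ne_bot (p := Ideal.span {(r : ℤ)}) ?_ P
    simpa using hr.ne_zero
  have hval := emultiplicity_span_natCast_of_ramificationIdx'_eq_one hr hram hq
  rw [← hb, ← Ideal.span_singleton_pow, emultiplicity_pow (Ideal.prime_of_isPrime hbot ‹_›)] at hval
  rcases eq_or_ne l 0 with rfl | hl
  · simpa using hval.symm
  have hfin : emultiplicity P (Ideal.span {b}) ≠ ⊤ := by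
    intro htop
    rw [htop, ENat.mul_top (by exact_mod_cast hl)] at hval
    exact ENat.top_ne_natCast _ hval
  lift emultiplicity P (Ideal.span {b}) to ℕ using hfin with k
  exact ⟨k, by exact_mod_cast hval.symm⟩

lemma exists_liesOver_span_natCast (K : Type*) [Field K] [NumberField K] {p : ℕ}
    (hp : p.Prime) : ∃ P : Ideal (𝓞 K), P.IsMaximal ∧ P.LiesOver (Ideal.span {(p : ℤ)}) := by
  have : (Ideal.span {(p : ℤ)}).IsMaximal :=
    (Ideal.isPrime_of_prime (Ideal.prime_span_singleton_iff.mpr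
      (Nat.prime_iff_prime_int.mp hp))).isMaximal (by simpa using hp.ne_zero)
  exact Ideal.exists_maximal_ideal_liesOver_of_isIntegral (S := 𝓞 K) (Ideal.span {(p : ℤ)})

lemma isIntegral_of_pow_eq_natCast {R : Type*} [CommRing R] {x : R} {n q : ℕ} (hn : n ≠ 0)
    (hx : x ^ n = q) : IsIntegral ℤ x := by
  refine .of_pow hn.bot_lt ?_
  simpa [hx] using isIntegral_algebraMap (R := ℤ) (A := R) (x := (q : ℤ))

/- The primes dividing `q` are unramified in the `d`-th cyclotomic field, so an `l`-th root of `q`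
there forces `l` to divide every exponent in the factorization of `q`. -/
lemma pow_ne_natCast_of_isCyclotomicExtension (d : ℕ) [NeZero d] {E : Type*} [Field E]
    [NumberField E] [IsCyclotomicExtension {d} ℚ E] {q l : ℕ} (hq : q ≠ 0) (hl : l ≠ 0)
    (hdq : d.Coprime q) (hpow : ¬ ∃ x : ℕ, x ^ l = q) (β : E) : β ^ l ≠ q := by
  refine fun hβ => hpow (exists_pow_eq_of_forall_dvd_factorization hq fun r hr hrq => ?_)
  have : Fact r.Prime := ⟨hr⟩
  obtain ⟨P, hP, _⟩ := exists_liesOver_span_natCast E hr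
  have hrd : ¬ r ∣ d := fun hrd => hr.ne_one (Nat.eq_one_of_dvd_coprimes hdq hrd hrq)
  have hram : (Ideal.span {(r : ℤ)}).ramificationIdx' P = 1 := by
    rw [Ideal.ramificationIdx'_eq_ramificationIdx _ _ (by simpa using hr.ne_zero)]
    exact IsCyclotomicExtension.Rat.ramificationIdx_eq_of_not_dvd r E P hrd
  let b : 𝓞 E := ⟨β, isIntegral_of_pow_eq_natCast hl hβ⟩
  have hb : b ^ l = q := RingOfIntegers.ext <| by
    rw [RingOfIntegers.coe_eq_algebraMap, map_pow, RingOfIntegers.coe_eq_algebraMap,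
      map_natCast]
    exact hβ
  exact dvd_factorization_of_pow_eq_natCast hr hram hq hb

section

variable {K : Type*} [Field K] [NumberField K] {d e q : ℕ} {ζ α : K}

lemma totient_mul_le_finrank (hd : d ≠ 0) (he : Squarefree e) (hq : q ≠ 0)
    (hdq : d.Coprime q) (hpow : ∀ l, l.Prime → l ∣ e → ¬ ∃ x : ℕ, x ^ l = q)
    (hζ : IsPrimitiveRoot ζ d) (hα : α ^ e = q) : d.totient * e ≤ finrank ℚ K := by
  have : NeZero d := ⟨hd⟩
  have : IsCyclotomicExtension {d} ℚ ℚ⟮ζ⟯ := hζ.intermediateField_adjoin_isCyclotomicExtension ℚ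
  rw [← finrank_mul_finrank ℚ ℚ⟮ζ⟯ K, IsCyclotomicExtension.Rat.finrank d ℚ⟮ζ⟯]
  refine Nat.mul_le_mul_left _ (Nat.le_of_dvd finrank_pos ?_)
  rw [← Nat.prod_primeFactors_of_squarefree he]
  refine Finset.prod_primes_dvd _ (fun l hl => (Nat.prime_of_mem_primeFactors hl).prime)
    fun l hl => ?_
  have hlp := Nat.prime_of_mem_primeFactors hl
  have hle := Nat.dvd_of_mem_primeFactors hl
  have hirr : Irreducible (X ^ l - C (q : ℚ⟮ζ⟯)) :=
    (X_pow_sub_C_irreducible_iff_of_prime hlp).mpr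
      (pow_ne_natCast_of_isCyclotomicExtension d hq hlp.ne_zero hdq (hpow l hlp hle))
  have hmin := minpoly.eq_of_irreducible_of_monic hirr (x := α ^ (e / l)) (by
    simp only [map_sub, map_pow, aeval_X, map_natCast]
    rw [← pow_mul, Nat.div_mul_cancel hle, hα, sub_self]) (monic_X_pow_sub_C _ hlp.ne_zero)
  have hdeg := minpoly.degree_dvd (K := ℚ⟮ζ⟯) (Algebra.IsIntegral.isIntegral (α ^ (e / l)))
  rwa [← hmin, natDegree_X_pow_sub_C] at hdeg

lemma finrank_le_totient_mul [IsGalois ℚ K] (hd : d ≠ 0) (he : e ≠ 0)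
    (hζ : IsPrimitiveRoot ζ d) (hα : α ^ e = q)
    (hgen : ∀ σ : Gal(K/ℚ), σ ζ = ζ → σ α = α → σ = 1) : finrank ℚ K ≤ d.totient * e := by
  classical
  have hroots : (nthRoots e (q : K)).toFinset.card ≤ e :=
    (Multiset.toFinset_card_le _).trans (card_nthRoots _ _)
  rw [← IsGalois.card_aut_eq_finrank ℚ K, ← hζ.card_primitiveRoots]
  refine le_trans ?_ (Nat.mul_le_mul_left _ hroots)
  rw [← Finset.card_product, Nat.card_eq_fintype_card, ← Finset.card_univ]
  refine Finset.card_le_card_of_injOn (fun σ : Gal(K/ℚ) => (σ ζ, σ α)) ?_ ?_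
  · intro σ _
    simp only [Finset.coe_product, Set.mem_prod, Finset.mem_coe, Multiset.mem_toFinset]
    exact ⟨(mem_primitiveRoots hd.bot_lt).mpr (hζ.map_of_injective σ.injective),
      by rw [mem_nthRoots he.bot_lt, ← map_pow, hα, map_natCast]⟩
  · intro σ _ τ _ hστ
    obtain ⟨hστζ, hστα⟩ := Prod.mk.inj hστ
    refine (inv_mul_eq_one.mp (hgen (τ⁻¹ * σ) ?_ ?_)).symm
    · rw [AlgEquiv.mul_apply, hστζ]; exact τ.symm_apply_apply ζ
    · rw [AlgEquiv.mul_apply, hστα]; exact τ.symm_apply_apply α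

end

end KummerDegree

section SplitPrimes

open NumberField Module Polynomial
open scoped Pointwise

lemma intCast_mem_iff_of_liesOver {R : Type*} [CommRing R] (P : Ideal R) {p : ℕ}
    [P.LiesOver (Ideal.span {(p : ℤ)})] (n : ℤ) : (n : R) ∈ P ↔ (n : ZMod p) = 0 := by
  rw [ZMod.intCast_zmod_eq_zero_iff_dvd, ← Ideal.mem_span_singleton,
    Ideal.over_def P (Ideal.span {(p : ℤ)}), Ideal.under_def, Ideal.mem_comap, eq_intCast]

lemma natCast_mem_iff_dvd_of_liesOver {R : Type*} [CommRing R] (P : Ideal R) {p : ℕ}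
    [P.LiesOver (Ideal.span {(p : ℤ)})] (n : ℕ) : (n : R) ∈ P ↔ p ∣ n := by
  simpa [ZMod.natCast_eq_zero_iff] using intCast_mem_iff_of_liesOver (p := p) P (n : ℤ)

lemma eq_of_pow_eq_pow_of_sub_mem {R : Type*} [CommRing R] [IsDomain R] {P : Ideal R}
    (hP : P.IsPrime) {n : ℕ} (hn : (n : R) ∉ P) {u v : R} (huv : u ^ n = v ^ n) (hv : v ∉ P)
    (hsub : u - v ∈ P) : u = v := by
  by_contra hne
  have hmk : Ideal.Quotient.mk P u = Ideal.Quotient.mk P v := Ideal.Quotient.eq.mpr hsub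
  have hsum : ∑ i ∈ Finset.range n, u ^ i * v ^ (n - 1 - i) = 0 := by
    refine (mul_eq_zero.mp ?_).resolve_right (sub_ne_zero.mpr hne)
    rw [geom_sum₂_mul, huv, sub_self]
  have hmem : (n : R) * v ^ (n - 1) ∈ P := by
    rw [← Ideal.Quotient.eq_zero_iff_mem, map_mul, map_natCast, map_pow, ← geom_sum₂_self]
    simpa only [RingHom.map_geom_sum₂, hmk, map_zero] using congrArg (Ideal.Quotient.mk P) hsum
  exact (hP.mem_or_mem hmem).elim hn fun h => hv (hP.mem_of_pow_mem _ h)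

lemma card_eq_of_forall_pow_eq_self {F : Type*} [Field F] [Finite F] (p : ℕ)
    [Fact p.Prime] [CharP F p] (h : ∀ x : F, x ^ p = x) : Nat.card F = p := by
  have hp : 1 < p := (Fact.out : p.Prime).one_lt
  have hunits : Nat.card Fˣ ∣ p - 1 := by
    rw [← IsCyclic.exponent_eq_card]
    refine Monoid.exponent_dvd_of_forall_pow_eq_one fun u => Units.ext ?_
    refine mul_right_cancel₀ u.ne_zero ?_
    rw [Units.val_pow_eq_pow_val, ← pow_succ, Nat.sub_add_cancel hp.le, h, Units.val_one, one_mul]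
  have hle := Nat.le_of_dvd (Nat.sub_pos_of_lt hp) hunits
  rw [Nat.card_units] at hle
  refine le_antisymm (by omega) (Nat.le_of_dvd Nat.card_pos ?_)
  have := Fintype.ofFinite F
  rw [← CharP.cast_eq_zero_iff F p, Nat.card_eq_fintype_card, FiniteField.cast_card_eq_zero]

variable {K : Type*} [Field K] [NumberField K]

lemma absNorm_smul (σ : Gal(K/ℚ)) (I : Ideal (𝓞 K)) :
    Ideal.absNorm (σ • I) = Ideal.absNorm I := by
  simp only [Ideal.absNorm_apply, Submodule.cardQuot_apply]
  exact (Nat.card_congr (Ideal.quotientEquiv I (σ • I)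
    (MulSemiringAction.toRingEquiv _ (𝓞 K) σ) (Ideal.pointwise_smul_def I)).toEquiv).symm

lemma card_quotient_eq_absNorm (I : Ideal (𝓞 K)) : Nat.card (𝓞 K ⧸ I) = Ideal.absNorm I := by
  rw [Ideal.absNorm_apply, Submodule.cardQuot_apply]

lemma absNorm_eq_of_forall_pow_sub_mem {p : ℕ} (hp : p.Prime) {P : Ideal (𝓞 K)}
    [P.IsMaximal] [P.LiesOver (Ideal.span {(p : ℤ)})] (h : ∀ x : 𝓞 K, x ^ p - x ∈ P) :
    Ideal.absNorm P = p := by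
  have : Fact p.Prime := ⟨hp⟩
  let _ := Ideal.Quotient.field P
  have : CharP (𝓞 K ⧸ P) p := by
    rw [CharP.charP_iff_prime_eq_zero hp, ← map_natCast (Ideal.Quotient.mk P),
      Ideal.Quotient.eq_zero_iff_mem, natCast_mem_iff_dvd_of_liesOver (p := p) P]
  have hP : P ≠ ⊥ := by
    refine Ideal.ne_bot_of_liesOver_of_ne_bot (p := Ideal.span {(p : ℤ)}) ?_ P
    simpa using hp.ne_zero
  have : Finite (𝓞 K ⧸ P) := Ideal.finiteQuotientOfFreeOfNeBot P hP
  rw [← card_quotient_eq_absNorm]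
  refine card_eq_of_forall_pow_eq_self p fun y => ?_
  obtain ⟨x, rfl⟩ := Ideal.Quotient.mk_surjective y
  exact Ideal.Quotient.eq.mpr (h x)

lemma nonempty_zmod_ringEquiv_quotient {p : ℕ} (hp : p.Prime) {I : Ideal (𝓞 K)}
    (hI : Ideal.absNorm I = p) : Nonempty (ZMod p ≃+* 𝓞 K ⧸ I) := by
  have hcard : Nat.card (𝓞 K ⧸ I) = p := (card_quotient_eq_absNorm I).trans hI
  have : Finite (𝓞 K ⧸ I) := Nat.finite_of_card_ne_zero (hcard ▸ hp.ne_zero)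
  let _ := Fintype.ofFinite (𝓞 K ⧸ I)
  exact ⟨ZMod.ringEquivOfPrime _ hp (by rw [← Nat.card_eq_fintype_card, hcard])⟩

lemma exists_intCast_sub_mem {p : ℕ} (hp : p.Prime) {P : Ideal (𝓞 K)}
    (hP : Ideal.absNorm P = p) (x : 𝓞 K) : ∃ n : ℤ, x - n ∈ P := by
  obtain ⟨φ⟩ := nonempty_zmod_ringEquiv_quotient hp hP
  obtain ⟨n, hn⟩ := (φ.surjective.comp ZMod.intCast_surjective) (Ideal.Quotient.mk P x)
  refine ⟨n, Ideal.Quotient.eq.mp ?_⟩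
  rw [← hn, Function.comp_apply, map_intCast, map_intCast]

lemma mem_inertia_of_smul_eq_self {p : ℕ} (hp : p.Prime) {P : Ideal (𝓞 K)}
    (hP : Ideal.absNorm P = p) {σ : Gal(K/ℚ)} (hσ : σ • P = P) : σ ∈ P.inertia Gal(K/ℚ) := by
  intro x
  obtain ⟨n, hn⟩ := exists_intCast_sub_mem hp hP x
  have hσn : σ • (x - n) ∈ P := hσ ▸ Ideal.smul_mem_pointwise_smul_iff.mpr hn
  have hfix : σ • (n : 𝓞 K) = n := map_intCast (MulSemiringAction.toRingHom _ (𝓞 K) σ) n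
  rw [smul_sub, hfix] at hσn
  simpa using Ideal.sub_mem _ hσn hn

lemma finrank_le_card_absNorm_eq [IsGalois ℚ K] {p : ℕ} (hp : p.Prime) {P : Ideal (𝓞 K)}
    (hP : Ideal.absNorm P = p) (hI : P.inertia Gal(K/ℚ) = ⊥) :
    finrank ℚ K ≤ Nat.card {I : Ideal (𝓞 K) // Ideal.absNorm I = p} := by
  have : Finite {I : Ideal (𝓞 K) // Ideal.absNorm I = p} := Ideal.finite_setOfPred_absNorm_eq p
  rw [← IsGalois.card_aut_eq_finrank ℚ K]
  refine Nat.card_le_card_of_injective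
    (fun σ : Gal(K/ℚ) => (⟨σ • P, (absNorm_smul σ P).trans hP⟩ :
      {I : Ideal (𝓞 K) // Ideal.absNorm I = p})) fun σ τ hστ => ?_
  have hστ : σ • P = τ • P := congrArg Subtype.val hστ
  have hmem := mem_inertia_of_smul_eq_self hp hP (σ := τ⁻¹ * σ)
    (by rw [mul_smul, hστ, inv_smul_smul])
  rw [hI, Subgroup.mem_bot] at hmem
  exact (inv_mul_eq_one.mp hmem).symm

variable {p d e q : ℕ} {ζ α : 𝓞 K}

lemma dvd_and_exists_pow_eq_of_absNorm_eq (hp : p.Prime) (hpd : ¬ p ∣ d)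
    (hζ : IsPrimitiveRoot ζ d) (hα : α ^ e = q) {I : Ideal (𝓞 K)}
    (hI : Ideal.absNorm I = p) : d ∣ p - 1 ∧ ∃ c : ZMod p, c ^ e = q := by
  have : Fact p.Prime := ⟨hp⟩
  obtain ⟨φ⟩ := nonempty_zmod_ringEquiv_quotient hp hI
  let f : 𝓞 K →+* ZMod p := φ.symm.toRingHom.comp (Ideal.Quotient.mk I)
  have hd : d ≠ 0 := by rintro rfl; exact hpd (dvd_zero _)
  have : NeZero (d : ZMod p) := ⟨by rwa [Ne, ZMod.natCast_eq_zero_iff]⟩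
  have hroot : IsRoot (cyclotomic d (ZMod p)) (f ζ) := by
    simpa only [map_cyclotomic] using (hζ.isRoot_cyclotomic hd.bot_lt).map (f := f)
  rw [isRoot_cyclotomic_iff] at hroot
  exact ⟨hroot.dvd_of_pow_eq_one _ (ZMod.pow_card_sub_one_eq_one (hroot.ne_zero hd)),
    f α, by rw [← map_pow, hα, map_natCast]⟩

lemma pow_sub_self_mem {R : Type*} [CommRing R] {P : Ideal R} [Fact p.Prime]
    [P.LiesOver (Ideal.span {(p : ℤ)})] {a : R} (ha : a ^ e = q) (hpq : ¬ p ∣ q)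
    (hep : e ∣ p - 1) (hc : ∃ c : ZMod p, c ^ e = q) : a ^ p - a ∈ P := by
  obtain ⟨k, hk⟩ := hep
  obtain ⟨c, hc⟩ := hc
  have hp : 1 < p := (Fact.out : p.Prime).one_lt
  have hqk : ((q : ZMod p)) ^ k = 1 := by
    rw [← hc, ← pow_mul, ← hk]
    refine ZMod.pow_card_sub_one_eq_one ?_
    rintro rfl
    have he : e ≠ 0 := by rintro rfl; omega
    exact hpq ((ZMod.natCast_eq_zero_iff _ _).mp (by rw [← hc, zero_pow he]))
  have hmem : (q : R) ^ k - 1 ∈ P := by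
    simpa using (intCast_mem_iff_of_liesOver (p := p) P ((q : ℤ) ^ k - 1)).mpr (by simp [hqk])
  have hap : a ^ p - a = ((q : R) ^ k - 1) * a := by
    rw [← ha, ← pow_mul, ← hk, sub_one_mul, ← pow_succ, Nat.sub_add_cancel hp.le]
  exact hap ▸ P.mul_mem_right _ hmem

lemma eq_one_of_smul_sub_mem {P : Ideal (𝓞 K)} (hP : P.IsPrime) (hd : (d : 𝓞 K) ∉ P)
    (he : (e : 𝓞 K) ∉ P) (hq : (q : 𝓞 K) ∉ P) (hζ : IsPrimitiveRoot ζ d) (hα : α ^ e = q)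
    (hgen : ∀ σ : Gal(K/ℚ), σ • ζ = ζ → σ • α = α → σ = 1)
    {σ : Gal(K/ℚ)} (hσζ : σ • ζ - ζ ∈ P) (hσα : σ • α - α ∈ P) : σ = 1 := by
  have hd0 : d ≠ 0 := by rintro rfl; simp at hd
  have he0 : e ≠ 0 := by rintro rfl; simp at he
  refine hgen σ (eq_of_pow_eq_pow_of_sub_mem hP hd ?_ ?_ hσζ)
    (eq_of_pow_eq_pow_of_sub_mem hP he ?_ ?_ hσα)
  · rw [← smul_pow', hζ.pow_eq_one, smul_one]
  · refine fun hmem => hP.ne_top ((Ideal.eq_top_iff_one _).mpr ?_)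
    exact hζ.pow_eq_one ▸ Ideal.pow_mem_of_mem _ hmem _ hd0.bot_lt
  · rw [← smul_pow', hα]
    exact map_natCast (MulSemiringAction.toRingHom _ (𝓞 K) σ) q
  · exact fun hmem => hq (hα ▸ Ideal.pow_mem_of_mem _ hmem _ he0.bot_lt)

/- Under these conditions the Frobenius elements at `p` are trivial, so `p` splits completely. -/
lemma card_absNorm_eq_of_dvd_of_exists_pow_eq [IsGalois ℚ K] (hp : p.Prime) (hpd : ¬ p ∣ d)
    (hpq : ¬ p ∣ q) (hed : e ∣ d) (hζ : IsPrimitiveRoot ζ d) (hα : α ^ e = q)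
    (hgen : ∀ σ : Gal(K/ℚ), σ • ζ = ζ → σ • α = α → σ = 1)
    (hdp : d ∣ p - 1) (hc : ∃ c : ZMod p, c ^ e = q) :
    Nat.card {I : Ideal (𝓞 K) // Ideal.absNorm I = p} = finrank ℚ K := by
  have : Fact p.Prime := ⟨hp⟩
  obtain ⟨P, hP, hPp⟩ := exists_liesOver_span_natCast K hp
  have hnotMem {n : ℕ} (hn : ¬ p ∣ n) : (n : 𝓞 K) ∉ P := by
    rwa [natCast_mem_iff_dvd_of_liesOver (p := p) P]
  have hone {σ : Gal(K/ℚ)} : σ • ζ - ζ ∈ P → σ • α - α ∈ P → σ = 1 :=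
    eq_one_of_smul_sub_mem hP.isPrime (hnotMem hpd) (hnotMem fun h => hpd (h.trans hed))
      (hnotMem hpq) hζ hα hgen
  have : Finite (𝓞 K ⧸ P) := Ideal.finiteQuotientOfFreeOfNeBot P <|
    Ideal.ne_bot_of_liesOver_of_ne_bot (p := Ideal.span {(p : ℤ)}) (by simpa using hp.ne_zero) P
  obtain ⟨σ, hσ⟩ := IsArithFrobAt.exists_of_isInvariant ℤ Gal(K/ℚ) P
  have hfrob (x : 𝓞 K) : σ • x - x ^ p ∈ P := by
    have hcard : Nat.card (ℤ ⧸ P.under ℤ) = p := by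
      rw [← Ideal.over_def P (Ideal.span {(p : ℤ)}),
        Nat.card_congr (Int.quotientSpanNatEquivZMod p).toEquiv, Nat.card_zmod]
    exact hcard ▸ hσ x
  have hζp : ζ ^ p = ζ := by
    obtain ⟨k, hk⟩ := hdp
    rw [← Nat.sub_add_cancel hp.one_le, hk, pow_succ, pow_mul, hζ.pow_eq_one, one_pow, one_mul]
  have hσ1 : σ = 1 := hone (hζp ▸ hfrob ζ :) <| by
    simpa using P.add_mem (hfrob α) (pow_sub_self_mem hα hpq (hed.trans hdp) hc)
  have hnorm : Ideal.absNorm P = p := absNorm_eq_of_forall_pow_sub_mem hp fun x => by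
    simpa [hσ1] using P.neg_mem (hfrob x)
  refine (card_absNorm_eq_prime_le_finrank hp).antisymm (finrank_le_card_absNorm_eq hp hnorm ?_)
  exact (Subgroup.eq_bot_iff_forall _).mpr fun τ hτ => hone (hτ ζ) (hτ α)

end SplitPrimes

section KummerDensity

open NumberField Module Polynomial Filter Topology

lemma eq_one_of_isSplittingField {F K : Type*} [Field F] [Field K] [Algebra F K] {d e : ℕ}
    (hd : d ≠ 0) (hed : e ∣ d) {a : F} (ha : a ≠ 0)
    [IsSplittingField F K ((X ^ d - 1) * (X ^ e - C a))] {ζ α : K} (hζ : IsPrimitiveRoot ζ d)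
    (hα : α ^ e = algebraMap F K a) {σ : Gal(K/F)} (hσζ : σ ζ = ζ) (hσα : σ α = α) : σ = 1 := by
  have he : e ≠ 0 := ne_zero_of_dvd_ne_zero hd hed
  have : NeZero d := ⟨hd⟩
  have ha' : algebraMap F K a ≠ 0 := by simpa using ha
  have hα0 : α ≠ 0 := ne_zero_pow he (hα ▸ ha')
  have hfix (y : K) (hy : y ^ d = 1) : σ y = y := by
    obtain ⟨i, -, rfl⟩ := hζ.eq_pow_of_pow_eq_one hy
    rw [map_pow, hσζ]
  have hid : (σ : K →ₐ[F] K) = AlgHom.id F K := by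
    refine AlgHom.ext_of_adjoin_eq_top
      (IsSplittingField.adjoin_rootSet K ((X ^ d - 1) * (X ^ e - C a))) fun x hx => ?_
    have hroot := aeval_eq_zero_of_mem_rootSet hx
    simp only [map_mul, map_sub, map_pow, aeval_X, map_one, aeval_C, mul_eq_zero,
      sub_eq_zero] at hroot
    rcases hroot with hx | hx
    · exact hfix x hx
    · have hdiv : σ (x / α) = x / α := by
        obtain ⟨k, hk⟩ := hed
        exact hfix _ (by rw [hk, pow_mul, div_pow, hx, hα, div_self ha', one_pow])
      rw [map_div₀, hσα] at hdiv
      exact (div_left_inj' hα0).mp hdiv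
  exact AlgEquiv.ext fun x => DFunLike.congr_fun hid x

lemma exists_isSplittingField_rat (f : ℚ[X]) :
    ∃ (K : Type) (_ : Field K) (_ : CharZero K), IsSplittingField ℚ K f := by
  refine ⟨f.SplittingField, inferInstance, algebraRat.charZero _, ?_⟩
  convert IsSplittingField.splittingField f
  exact Subsingleton.elim _ _

lemma exists_aeval_eq_zero_of_dvd {F : Type*} (K : Type*) [Field F] [Field K] [Algebra F K]
    {f g : F[X]} (hf : f ≠ 0) [IsSplittingField F K f] (hgf : g ∣ f) (hg : g.degree ≠ 0) :
    ∃ x : K, aeval x g = 0 := by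
  obtain ⟨x, hx⟩ := ((IsSplittingField.splits K f).of_dvd (Polynomial.map_ne_zero hf)
    (Polynomial.map_dvd _ hgf)).exists_eval_eq_zero (by rwa [degree_map])
  exact ⟨x, by rwa [eval_map_algebraMap] at hx⟩

lemma exists_isGalois_primitiveRoot_root {d e q : ℕ} (hd : d ≠ 0) (hed : e ∣ d) (hq : q ≠ 0) :
    ∃ (K : Type) (_ : Field K) (_ : NumberField K) (_ : IsGalois ℚ K) (ζ α : K),
      IsPrimitiveRoot ζ d ∧ α ^ e = q ∧ ∀ σ : Gal(K/ℚ), σ ζ = ζ → σ α = α → σ = 1 := by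
  have he : e ≠ 0 := ne_zero_of_dvd_ne_zero hd hed
  set f : ℚ[X] := (X ^ d - 1) * (X ^ e - C (q : ℚ))
  have hf0 : f ≠ 0 := ((monic_X_pow_sub_C 1 hd).mul (monic_X_pow_sub_C _ he)).ne_zero
  obtain ⟨K, _, _, _⟩ := exists_isSplittingField_rat f
  have : FiniteDimensional ℚ K := IsSplittingField.finiteDimensional K f
  have : Normal ℚ K := Normal.of_isSplittingField f
  obtain ⟨ζ, hζ⟩ := exists_aeval_eq_zero_of_dvd K hf0
    ((cyclotomic.dvd_X_pow_sub_one d ℚ).trans (dvd_mul_right _ _))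
    (degree_cyclotomic_pos d ℚ hd.bot_lt).ne'
  obtain ⟨α, hα⟩ := exists_aeval_eq_zero_of_dvd K hf0 (dvd_mul_left (X ^ e - C (q : ℚ)) _)
    (by rw [degree_X_pow_sub_C he.bot_lt]; exact_mod_cast he)
  have : NeZero (d : K) := ⟨by exact_mod_cast hd⟩
  have hζ' : IsPrimitiveRoot ζ d := by
    rw [← isRoot_cyclotomic_iff, IsRoot, ← map_cyclotomic d (algebraMap ℚ K),
      eval_map_algebraMap, hζ]
  have hα' : α ^ e = algebraMap ℚ K q := by simpa [sub_eq_zero] using hα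
  exact ⟨K, inferInstance, ⟨⟩, IsGalois.mk, ζ, α, hζ', by simpa using hα',
    fun σ => eq_one_of_isSplittingField hd hed (Nat.cast_ne_zero.mpr hq) hζ' hα'⟩

end KummerDensity

section LogPrimeMean

open Filter Topology

/-- `f` has mean value `c` over the primes, each prime `p` being weighted by `log p`. With these
weights the prime ideal theorem needs no partial summation. -/
def HasLogPrimeMean (f : ℕ → ℝ) (c : ℝ) : Prop :=
  Tendsto (fun N : ℕ => (∑ p ∈ Nat.primesLE N, f p * Real.log p) / N) atTop (𝓝 c)

namespace HasLogPrimeMean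

variable {f g : ℕ → ℝ} {a b : ℝ}

lemma add (hf : HasLogPrimeMean f a) (hg : HasLogPrimeMean g b) :
    HasLogPrimeMean (fun p => f p + g p) (a + b) := by
  refine (Tendsto.add hf hg).congr fun N => ?_
  simp only [add_mul, Finset.sum_add_distrib, add_div]

lemma const_mul (r : ℝ) (hf : HasLogPrimeMean f a) :
    HasLogPrimeMean (fun p => r * f p) (r * a) := by
  refine (Tendsto.const_mul r hf).congr fun N => ?_
  simp only [mul_assoc, ← Finset.mul_sum, mul_div_assoc]

lemma sub (hf : HasLogPrimeMean f a) (hg : HasLogPrimeMean g b) :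
    HasLogPrimeMean (fun p => f p - g p) (a - b) := by
  simpa only [sub_eq_add_neg, neg_one_mul] using hf.add (hg.const_mul (-1))

lemma of_eventually_eq_zero (h : ∀ᶠ p in atTop, p.Prime → f p = 0) : HasLogPrimeMean f 0 := by
  obtain ⟨M, hM⟩ := eventually_atTop.mp h
  refine (tendsto_const_div_atTop_nhds_zero_nat
    (∑ p ∈ Nat.primesLE M, f p * Real.log p)).congr' ?_
  filter_upwards [eventually_ge_atTop M] with N hN
  congr 1
  refine Finset.sum_subset (Nat.primesLE_mono hN) fun p hp hpM => ?_
  rw [Nat.mem_primesLE] at hp hpM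
  rw [hM p (not_le.mp fun hle => hpM ⟨hle, hp.2⟩).le hp.2, zero_mul]

lemma congr' (hf : HasLogPrimeMean f a) (h : ∀ᶠ p in atTop, p.Prime → f p = g p) :
    HasLogPrimeMean g a := by
  have h_diff : HasLogPrimeMean (fun p => g p - f p) 0 :=
    of_eventually_eq_zero (h.mono fun p hp hprime => by rw [hp hprime, sub_self])
  simpa only [add_sub_cancel, add_zero] using hf.add h_diff

lemma congr (hf : HasLogPrimeMean f a) (h : ∀ p, p.Prime → f p = g p) : HasLogPrimeMean g a :=
  hf.congr' (.of_forall h)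

end HasLogPrimeMean

lemma tendsto_rpow_add_one_mul_log_div_nhds_zero {δ : ℝ} (hδ : 0 < δ) :
    Tendsto (fun x : ℝ => (x ^ (1 - δ) + 1) * Real.log x / x) atTop (𝓝 0) := by
  have h_sum := (isLittleO_log_rpow_atTop hδ).tendsto_div_nhds_zero.add
    (isLittleO_log_rpow_atTop one_pos).tendsto_div_nhds_zero
  rw [add_zero] at h_sum
  refine h_sum.congr' ?_
  filter_upwards [eventually_gt_atTop 0] with x hx
  rw [Real.rpow_sub hx, Real.rpow_one]
  field

lemma card_filter_natCast_le (T : Finset ℕ) {y : ℝ} (hy : 0 ≤ y) :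
    ((T.filter fun p : ℕ => (p : ℝ) ≤ y).card : ℝ) ≤ y + 1 := by
  have h_subset : (T.filter fun p : ℕ => (p : ℝ) ≤ y) ⊆ Finset.range (⌊y⌋₊ + 1) := fun p hp =>
    Finset.mem_range_succ_iff.mpr (Nat.le_floor (Finset.mem_filter.mp hp).2)
  calc ((T.filter fun p : ℕ => (p : ℝ) ≤ y).card : ℝ)
    _ ≤ (⌊y⌋₊ + 1 : ℕ) := by
        exact_mod_cast (Finset.card_le_card h_subset).trans_eq (Finset.card_range _)
    _ ≤ y + 1 := by
        push_cast
        gcongr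
        exact Nat.floor_le hy

section UpperDensity

variable {f : ℕ → ℝ} {P : Set ℕ} [DecidablePred (· ∈ P)]

lemma card_filter_mem_mul_log_le (hf : ∀ p, 0 ≤ f p) (hfP : ∀ p ∈ P, 1 ≤ f p) {δ : ℝ}
    (hδ : δ < 1) {x : ℕ} (hx : 0 < x) :
    (Finset.card {p ∈ Nat.primesLE x | p ∈ P} : ℝ) * Real.log x ≤
      ((x : ℝ) ^ (1 - δ) + 1) * Real.log x +
        (∑ p ∈ Nat.primesLE x, f p * Real.log p) / (1 - δ) := by
  set T : Finset ℕ := {p ∈ Nat.primesLE x | p ∈ P}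
  have hx' : (0 : ℝ) < x := by exact_mod_cast hx
  have hy : 0 < (x : ℝ) ^ (1 - δ) := Real.rpow_pos_of_pos hx' _
  have h_large : ((T.filter fun p : ℕ => ¬ (p : ℝ) ≤ (x : ℝ) ^ (1 - δ)).card : ℝ) *
      ((1 - δ) * Real.log x) ≤ ∑ p ∈ Nat.primesLE x, f p * Real.log p := by
    rw [← nsmul_eq_mul]
    refine (Finset.card_nsmul_le_sum _ (fun p : ℕ => f p * Real.log p) _ fun p hp => ?_).trans
      (Finset.sum_le_sum_of_subset_of_nonneg
        ((Finset.filter_subset _ _).trans (Finset.filter_subset _ _))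
        fun p _ _ => mul_nonneg (hf p) (Real.log_natCast_nonneg p))
    rw [Finset.mem_filter, Finset.mem_filter, not_le] at hp
    rw [← Real.log_rpow hx']
    exact (Real.log_le_log hy hp.2.le).trans
      (le_mul_of_one_le_left (Real.log_natCast_nonneg p) (hfP p hp.1.2))
  rw [← Finset.card_filter_add_card_filter_not (fun p : ℕ => (p : ℝ) ≤ (x : ℝ) ^ (1 - δ)),
    Nat.cast_add, add_mul]
  gcongr
  · exact card_filter_natCast_le T hy.le
  · rw [le_div_iff₀ (sub_pos.mpr hδ)]
    linarith

lemma card_filter_mem_div_primeCounting_le (hf : ∀ p, 0 ≤ f p) (hfP : ∀ p ∈ P, 1 ≤ f p) {δ : ℝ}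
    (hδ : δ < 1) {x : ℕ} (hx : 2 ≤ x) :
    (Finset.card {p ∈ Nat.primesLE x | p ∈ P} : ℝ) / Nat.primeCounting x ≤
      (((x : ℝ) ^ (1 - δ) + 1) * Real.log x +
        (∑ p ∈ Nat.primesLE x, f p * Real.log p) / (1 - δ)) / Chebyshev.theta x := by
  have hθ : 0 < Chebyshev.theta x := Chebyshev.theta_pos (by exact_mod_cast hx)
  have hπ : (0 : ℝ) < Nat.primeCounting x := by
    exact pos_of_mul_pos_left (hθ.trans_le (Chebyshev.theta_le_pi_mul_log x))
      (Real.log_natCast_nonneg x)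
  rw [div_le_div_iff₀ hπ hθ]
  calc (Finset.card {p ∈ Nat.primesLE x | p ∈ P} : ℝ) * Chebyshev.theta x
    _ ≤ Finset.card {p ∈ Nat.primesLE x | p ∈ P} * (Nat.primeCounting x * Real.log x) := by
        gcongr
        exact Chebyshev.theta_le_pi_mul_log x
    _ = Finset.card {p ∈ Nat.primesLE x | p ∈ P} * Real.log x * Nat.primeCounting x := by ring
    _ ≤ _ := by
        gcongr
        exact card_filter_mem_mul_log_le hf hfP hδ (by lia)

lemma HasLogPrimeMean.tendsto_add_div_theta {c : ℝ} (hfc : HasLogPrimeMean f c)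
    (hone : HasLogPrimeMean 1 1) {δ : ℝ} (hδ : 0 < δ) :
    Tendsto (fun x : ℕ => (((x : ℝ) ^ (1 - δ) + 1) * Real.log x +
      (∑ p ∈ Nat.primesLE x, f p * Real.log p) / (1 - δ)) / Chebyshev.theta x)
      atTop (𝓝 (c / (1 - δ))) := by
  have h_theta : Tendsto (fun x : ℕ => Chebyshev.theta x / x) atTop (𝓝 1) := by
    simpa only [HasLogPrimeMean, Pi.one_apply, one_mul, ← Chebyshev.theta_eq_sum_primesLE_log]
      using hone
  have h_quot := (((tendsto_rpow_add_one_mul_log_div_nhds_zero hδ).comp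
    tendsto_natCast_atTop_atTop).add (Tendsto.div_const hfc (1 - δ))).div h_theta one_ne_zero
  rw [zero_add, div_one] at h_quot
  refine h_quot.congr' ?_
  filter_upwards [eventually_ne_atTop 0] with x hx
  rw [Pi.div_apply, Function.comp_apply, div_right_comm, ← add_div,
    div_div_div_cancel_right₀ (Nat.cast_ne_zero.mpr hx)]

theorem HasLogPrimeMean.limsup_card_div_primeCounting_le {c : ℝ} (hfc : HasLogPrimeMean f c)
    (hone : HasLogPrimeMean 1 1) (hf : ∀ p, 0 ≤ f p) (hfP : ∀ p ∈ P, 1 ≤ f p) :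
    limsup (fun x : ℕ => (Finset.card {p ∈ Nat.primesLE x | p ∈ P} : ℝ) / Nat.primeCounting x)
      atTop ≤ c := by
  have h_lim : Tendsto (fun δ : ℝ => c / (1 - δ) + δ) (𝓝[>] 0) (𝓝 c) := by
    have h_cont : ContinuousAt (fun δ : ℝ => c / (1 - δ) + δ) 0 := by
      fun_prop (disch := norm_num)
    simpa using h_cont.tendsto.mono_left nhdsWithin_le_nhds
  refine ge_of_tendsto h_lim ?_
  filter_upwards [Ioo_mem_nhdsGT zero_lt_one] with δ ⟨hδ_pos, hδ_lt⟩
  refine limsup_le_of_le (isCoboundedUnder_le_of_le atTop (x := 0) fun x => by positivity) ?_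
  filter_upwards [eventually_ge_atTop 2, (hfc.tendsto_add_div_theta hone hδ_pos).eventually_lt_const
    (lt_add_of_pos_right _ hδ_pos)] with x hx h_lt
  exact (card_filter_mem_div_primeCounting_le hf hfP hδ_lt hx).trans h_lt.le

end UpperDensity

end LogPrimeMean

section KummerMean

open Filter Module NumberField UniqueFactorizationMonoid

lemma exists_pow_mul_eq_iff {G₀ : Type*} [CommGroupWithZero G₀] {i j : ℕ} (hij : i.Coprime j)
    {x : G₀} : (∃ c, c ^ (i * j) = x) ↔ (∃ c, c ^ i = x) ∧ ∃ c, c ^ j = x := by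
  constructor
  · rintro ⟨c, rfl⟩
    exact ⟨⟨c ^ j, by rw [← pow_mul, mul_comm]⟩, ⟨c ^ i, by rw [← pow_mul]⟩⟩
  · rintro ⟨⟨a, rfl⟩, ⟨b, hb⟩⟩
    obtain ⟨c, rfl, -⟩ := (pow_eq_pow_iff_of_coprime hij).mp hb.symm
    exact ⟨c, by rw [← pow_mul, mul_comm]⟩

/-- The `p` with `p ≡ 1 mod d` such that `q` is an `e`-th power modulo `p`. If `e ∣ d`, a prime
`p ∤ d * q` lies in this set if and only if it splits completely in `ℚ(ζ_d, q ^ (1 / e))`. -/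
def kummerSplitSet (q d e : ℕ) : Set ℕ :=
  {p | d ∣ p - 1 ∧ ∃ c : ZMod p, c ^ e = q}

lemma mem_kummerSplitSet_mul_iff {q d d' e e' p : ℕ} (hp : p.Prime) (hd : d.Coprime d')
    (he : e.Coprime e') :
    p ∈ kummerSplitSet q (d * d') (e * e') ↔
      p ∈ kummerSplitSet q d e ∧ p ∈ kummerSplitSet q d' e' := by
  have : Fact p.Prime := ⟨hp⟩
  have h_dvd : d * d' ∣ p - 1 ↔ d ∣ p - 1 ∧ d' ∣ p - 1 :=
    ⟨fun h => ⟨dvd_of_mul_right_dvd h, dvd_of_mul_left_dvd h⟩,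
      fun h => hd.mul_dvd_of_dvd_of_dvd h.1 h.2⟩
  simp only [kummerSplitSet, Set.mem_ofPred_eq, h_dvd, exists_pow_mul_eq_iff he]
  tauto

lemma card_absNorm_eq_finrank_mul_indicator {K : Type*} [Field K] [NumberField K] [IsGalois ℚ K]
    {d e q p : ℕ} (hp : p.Prime) (hpd : ¬ p ∣ d) (hpq : ¬ p ∣ q) (hd : d ≠ 0) (hed : e ∣ d)
    {ζ α : K} (hζ : IsPrimitiveRoot ζ d) (hα : α ^ e = q)
    (hgen : ∀ σ : Gal(K/ℚ), σ ζ = ζ → σ α = α → σ = 1) :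
    (Nat.card {I : Ideal (𝓞 K) // Ideal.absNorm I = p} : ℝ) =
      finrank ℚ K * (kummerSplitSet q d e).indicator 1 p := by
  have he : e ≠ 0 := ne_zero_of_dvd_ne_zero hd hed
  let ζ' : 𝓞 K := ⟨ζ, hζ.isIntegral hd.bot_lt⟩
  let α' : 𝓞 K := ⟨α, isIntegral_of_pow_eq_natCast he hα⟩
  have hζ' : IsPrimitiveRoot ζ' d :=
    IsPrimitiveRoot.of_map_of_injective (f := algebraMap (𝓞 K) K) hζ RingOfIntegers.coe_injective
  have hα' : α' ^ e = q := RingOfIntegers.ext <| by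
    rw [RingOfIntegers.coe_eq_algebraMap, map_pow, RingOfIntegers.coe_eq_algebraMap, map_natCast]
    exact hα
  by_cases h_mem : p ∈ kummerSplitSet q d e
  · rw [Set.indicator_of_mem h_mem, Pi.one_apply, mul_one,
      card_absNorm_eq_of_dvd_of_exists_pow_eq hp hpd hpq hed hζ' hα' (fun σ hσζ hσα => hgen σ
        (congrArg (algebraMap (𝓞 K) K) hσζ) (congrArg (algebraMap (𝓞 K) K) hσα))
        h_mem.1 h_mem.2]
  · have : IsEmpty {I : Ideal (𝓞 K) // Ideal.absNorm I = p} :=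
      ⟨fun I => h_mem (dvd_and_exists_pow_eq_of_absNorm_eq hp hpd hζ' hα' I.2)⟩
    rw [Set.indicator_of_notMem h_mem, mul_zero, Nat.card_of_isEmpty, Nat.cast_zero]

lemma hasLogPrimeMean_card_absNorm_eq (K : Type*) [Field K] [NumberField K] :
    HasLogPrimeMean (fun p => Nat.card {I : Ideal (𝓞 K) // Ideal.absNorm I = p}) 1 := by
  simpa only [HasLogPrimeMean, Nat.primesLE_eq_filter_Ioc_zero] using prime_ideal_theorem K

theorem hasLogPrimeMean_indicator_kummerSplitSet {d e q : ℕ} (hd : d ≠ 0) (hed : e ∣ d)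
    (he : Squarefree e) (hq : q ≠ 0) (hdq : d.Coprime q)
    (hpow : ∀ l, l.Prime → l ∣ e → ¬ ∃ x : ℕ, x ^ l = q) :
    HasLogPrimeMean ((kummerSplitSet q d e).indicator 1) (1 / (d.totient * e)) := by
  obtain ⟨K, _, _, _, ζ, α, hζ, hα, hgen⟩ := exists_isGalois_primitiveRoot_root hd hed hq
  have h_finrank : (finrank ℚ K : ℝ) = d.totient * e := by
    exact_mod_cast (finrank_le_totient_mul hd he.ne_zero hζ hα hgen).antisymm
      (totient_mul_le_finrank hd he hq hdq hpow hζ hα)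
  have h_ne : (finrank ℚ K : ℝ) ≠ 0 := Nat.cast_ne_zero.mpr finrank_pos.ne'
  rw [← h_finrank, one_div, ← mul_one (finrank ℚ K : ℝ)⁻¹]
  refine ((hasLogPrimeMean_card_absNorm_eq K).const_mul (finrank ℚ K : ℝ)⁻¹).congr' ?_
  filter_upwards [eventually_gt_atTop d, eventually_gt_atTop q] with p hpd hpq hp
  rw [card_absNorm_eq_finrank_mul_indicator hp (Nat.not_dvd_of_pos_of_lt hd.bot_lt hpd)
    (Nat.not_dvd_of_pos_of_lt hq.bot_lt hpq) hd hed hζ hα hgen, inv_mul_cancel_left₀ h_ne]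

lemma hasLogPrimeMean_one : HasLogPrimeMean 1 1 := by
  have h := hasLogPrimeMean_indicator_kummerSplitSet (d := 1) (q := 1) one_ne_zero dvd_rfl
    squarefree_one one_ne_zero (Nat.coprime_one_left 1) fun l hl h => absurd h hl.not_dvd_one
  simpa [kummerSplitSet, Set.indicator_univ] using h

/-- The `p` such that `q` is an `l`-th power modulo `p` for each `l ∈ S` dividing `p - 1`. For a
prime `p` and a set `S` of primes the condition at the other `l ∈ S` would be automatic, `l` being
invertible modulo `p - 1`. -/
def primePowerResidueSet (q : ℕ) (S : Finset ℕ) : Set ℕ :=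
  {p | ∀ l ∈ S, l ∣ p - 1 → ∃ c : ZMod p, c ^ l = q}

lemma mem_primePowerResidueSet_primeFactors {q m p : ℕ} (h : ∃ c : ZMod p, c ^ m = q) :
    p ∈ primePowerResidueSet q m.primeFactors := by
  obtain ⟨c, hc⟩ := h
  intro l hl _
  obtain ⟨k, rfl⟩ := Nat.dvd_of_mem_primeFactors hl
  exact ⟨c ^ k, by rw [← hc, ← pow_mul, mul_comm]⟩

lemma indicator_primePowerResidueSet_insert_mul {q D E l p : ℕ} {S : Finset ℕ} (hp : p.Prime)
    (hD : D.Coprime l) (hE : E.Coprime l) :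
    (primePowerResidueSet q (insert l S)).indicator 1 p *
        (kummerSplitSet q D E).indicator (1 : ℕ → ℝ) p =
      (primePowerResidueSet q S).indicator 1 p * (kummerSplitSet q D E).indicator 1 p -
        (primePowerResidueSet q S).indicator 1 p * (kummerSplitSet q (D * l) E).indicator 1 p +
      (primePowerResidueSet q S).indicator 1 p *
        (kummerSplitSet q (D * l) (E * l)).indicator 1 p := by
  have h_insert : p ∈ primePowerResidueSet q (insert l S) ↔
      (l ∣ p - 1 → ∃ c : ZMod p, c ^ l = q) ∧ p ∈ primePowerResidueSet q S :=
    Finset.forall_mem_insert _ _ _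
  have h_split := mem_kummerSplitSet_mul_iff (q := q) hp hD (Nat.coprime_one_right E)
  have h_root := mem_kummerSplitSet_mul_iff (q := q) hp hD hE
  have h_one : p ∈ kummerSplitSet q l 1 ↔ l ∣ p - 1 := by simp [kummerSplitSet]
  have h_mem : p ∈ kummerSplitSet q l l ↔ l ∣ p - 1 ∧ ∃ c : ZMod p, c ^ l = q := Iff.rfl
  rw [mul_one] at h_split
  classical
  simp only [Set.indicator_apply, h_insert, h_split, h_root, h_one, h_mem, Pi.one_apply]
  by_cases l ∣ p - 1 <;> by_cases ∃ c : ZMod p, c ^ l = q <;> simp_all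

lemma hasLogPrimeMean_primePowerResidueSet_mul_kummerSplitSet {q m : ℕ} (hq : q ≠ 0)
    (hsq : Squarefree m) (hmq : m.Coprime q)
    (hpow : ∀ l, l.Prime → l ∣ m → ¬ ∃ x : ℕ, x ^ l = q) (S : Finset ℕ)
    (hS : ∀ l ∈ S, l.Prime) :
    ∀ {D E : ℕ}, D * ∏ l ∈ S, l ∣ m → E ∣ D →
      HasLogPrimeMean (fun p => (primePowerResidueSet q S).indicator 1 p *
        (kummerSplitSet q D E).indicator 1 p)
        (1 / (D.totient * E) * ∏ l ∈ S, (1 - (l : ℝ)⁻¹)) := by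
  induction S using Finset.induction_on with
  | empty =>
    intro D E hD hED
    rw [Finset.prod_empty, mul_one] at hD
    have h_mean := hasLogPrimeMean_indicator_kummerSplitSet (ne_zero_of_dvd_ne_zero hsq.ne_zero hD)
      hED (hsq.squarefree_of_dvd (hED.trans hD)) hq (hmq.coprime_dvd_left hD)
      fun l hl hlE => hpow l hl (hlE.trans (hED.trans hD))
    rw [Finset.prod_empty, mul_one]
    exact h_mean.congr fun p _ => by simp [primePowerResidueSet]
  | insert l S hl ih =>
    intro D E hD hED
    obtain ⟨hlp, hS⟩ := (Finset.forall_mem_insert _ _ _).mp hS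
    rw [Finset.prod_insert hl] at hD
    have hDS : D * ∏ x ∈ S, x ∣ m := (mul_dvd_mul_left D (dvd_mul_left _ l)).trans hD
    rw [← mul_assoc] at hD
    have hDl : Squarefree (D * l) := hsq.squarefree_of_dvd (dvd_of_mul_right_dvd hD)
    have hcop : D.Coprime l := Nat.coprime_of_squarefree_mul hDl
    have h_mean := (((ih hS hDS hED).sub (ih hS hD (hED.mul_right l))).add
      (ih hS hD (mul_dvd_mul_right hED l))).congr fun p hp =>
        (indicator_primePowerResidueSet_insert_mul hp hcop (hcop.coprime_dvd_left hED)).symm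
    convert h_mean using 1
    have hD0 : D ≠ 0 := left_ne_zero_of_mul hDl.ne_zero
    have hφ : (D.totient : ℝ) ≠ 0 := Nat.cast_ne_zero.mpr (Nat.totient_pos.mpr hD0.bot_lt).ne'
    have hE : (E : ℝ) ≠ 0 := Nat.cast_ne_zero.mpr (ne_zero_of_dvd_ne_zero hD0 hED)
    have hl0 : (l : ℝ) ≠ 0 := Nat.cast_ne_zero.mpr hlp.ne_zero
    have hl1 : (l : ℝ) - 1 ≠ 0 := sub_ne_zero.mpr (Nat.cast_ne_one.mpr hlp.ne_one)
    rw [Finset.prod_insert hl, Nat.totient_mul hcop, Nat.totient_prime hlp, Nat.cast_mul,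
      Nat.cast_mul, Nat.cast_pred hlp.pos]
    field_simp
    ring

theorem hasLogPrimeMean_indicator_primePowerResidueSet {q m : ℕ} (hq : q ≠ 0) (hm : m ≠ 0)
    (hmq : m.Coprime q) (hpow : ∀ l, l.Prime → l ∣ m → ¬ ∃ x : ℕ, x ^ l = q) :
    HasLogPrimeMean ((primePowerResidueSet q m.primeFactors).indicator 1) (m.totient / m) := by
  have h_mean := hasLogPrimeMean_primePowerResidueSet_mul_kummerSplitSet hq
    squarefree_radical (hmq.coprime_dvd_left radical_dvd_self)
    (fun l hl hlm => hpow l hl (hlm.trans radical_dvd_self)) m.primeFactors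
    (fun l hl => Nat.prime_of_mem_primeFactors hl)
    (by rw [one_mul, Nat.radical_eq_prod_primeFactors]) (dvd_refl 1)
  have h_totient : (m.totient : ℝ) / m = ∏ l ∈ m.primeFactors, (1 - (l : ℝ)⁻¹) := by
    rw [div_eq_iff (Nat.cast_ne_zero.mpr hm), mul_comm]
    simpa using congrArg (Rat.cast : ℚ → ℝ) (Nat.totient_eq_mul_prod_factors m)
  rw [h_totient]
  simpa [kummerSplitSet, Set.indicator_univ] using h_mean

end KummerMean

open Filter in
open scoped Classical in
theorem stmt_19_general (q : ℕ) (hq : 1 < q) (m : ℕ) (hm : 1 < m) (hco : Nat.Coprime m q)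
    (hpow : ∀ p : ℕ, p.Prime → p ∣ m → ¬∃ x : ℕ, x ^ p = q)
    (P : Set ℕ) (hP : ∀ p ∈ P, Nat.Prime p)
    (hsol : ∀ p ∈ P, ∃ x : ℤ, (p : ℤ) ∣ x ^ m - (q : ℤ)) :
    Filter.limsup (fun x : ℕ =>
        (((Finset.range (x + 1)).filter (fun p => p ∈ P)).card : ℝ) /
          (((Finset.range (x + 1)).filter Nat.Prime).card : ℝ)) atTop
      ≤ (Nat.totient m : ℝ) / m ∧ (Nat.totient m : ℝ) / m < 1 := by
  have h_residue (p : ℕ) (hp : p ∈ P) : p ∈ primePowerResidueSet q m.primeFactors := by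
    obtain ⟨x, hx⟩ := hsol p hp
    refine mem_primePowerResidueSet_primeFactors ⟨x, sub_eq_zero.mp ?_⟩
    exact_mod_cast (ZMod.intCast_zmod_eq_zero_iff_dvd _ p).mpr hx
  have h_filter (x : ℕ) : {p ∈ Finset.range (x + 1) | p ∈ P} = {p ∈ Nat.primesLE x | p ∈ P} := by
    ext p
    simp only [Finset.mem_filter, Finset.mem_range_succ_iff, Nat.mem_primesLE]
    exact ⟨fun h => ⟨⟨h.1, hP p h.2⟩, h.2⟩, fun h => ⟨h.1.1, h.2⟩⟩
  constructor
  · simp only [h_filter, ← Nat.primesLE_eq_filter_range, Nat.primesLE_card_eq_primeCounting]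
    refine (hasLogPrimeMean_indicator_primePowerResidueSet (by lia) (by lia) hco
      hpow).limsup_card_div_primeCounting_le hasLogPrimeMean_one
      (Set.indicator_nonneg fun _ _ => zero_le_one) fun p hp => ?_
    rw [Set.indicator_of_mem (h_residue p hp), Pi.one_apply]
  · rw [div_lt_one (by positivity)]
    exact_mod_cast Nat.totient_lt m hm

open Filter in
open scoped Classical in
theorem stmt_19 (q : ℕ) (hq : 1 < q) (m : ℕ) (hm : 1 < m) (hsq : Squarefree m)
    (hco : Nat.Coprime m q)
    (hpow : ∀ p : ℕ, p.Prime → p ∣ m → ¬∃ x : ℕ, x ^ p = q)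
    (P : Set ℕ) (hP : ∀ p ∈ P, Nat.Prime p) (hinf : P.Infinite)
    (hsol : ∀ p ∈ P, ∃ x : ℤ, (p : ℤ) ∣ x ^ m - (q : ℤ)) :
    Filter.limsup (fun x : ℕ =>
        (((Finset.range (x + 1)).filter (fun p => p ∈ P)).card : ℝ) /
          (((Finset.range (x + 1)).filter Nat.Prime).card : ℝ)) atTop
      ≤ (Nat.totient m : ℝ) / m ∧ (Nat.totient m : ℝ) / m < 1 :=
  stmt_19_general q hq m hm hco hpow P hP hsol
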